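/- Finite-time blow-up (Section 2): For every choice of admissible initial data u₀, v₀, the classical solution of problem (1.1) is not global: its maximal existence time T is finite, sup_{cl(B_R)}(u(·,t)+v(·,t)) → ∞ as t → T⁻, and every point of ∂B_R is a blow-up point. -/

import Mathlib

/-!
A solution cannot live beyond the time `1 / min λ₁ λ₂`: the comparison principle for weakly coupled
systems (`SubCond.nonpos`, proved with the barrier `μ e^{Kt} e^{k|x|²}`) puts it above the spatially
constant subsolution `-log (1 - λ t)` with `λ = min λ₁ λ₂` (`time_le`). The same principle yields
uniqueness, and uniqueness applied to rotated solutions shows that solutions are radial. A doubling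
argument shows that they are radially nondecreasing (`radial_mono`), so that at each time the
supremum over the closed ball is attained at every boundary point.

It remains to see that a solution whose supremum does not tend to infinity can be continued. This
rests on local existence with a time depending only on the size of the data (`local_1d`,
`local_nd`). For radial functions the Laplacian is inverted by an explicit integral operator `Kop`
on `C([0,1])`, and the parabolic problem becomes an evolution equation in that space.

* The linear problem with given source and boundary flux satisfies an a-priori estimate
  (`Cl.norm_le`), so the set of data with a generalised solution is closed. By Yosida approximation
  it contains the initial values in the domain of `Δ²`; it is stable under integration in time, hence
  contains all data polynomial in time, hence everything (`datSub_eq_top`).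
* In the estimate the flux has the coefficient `R/(i+2) + τ(m+1+i)/R`, small for `i` large and then
  `τ` small. The pair of time derivatives of the nonlinear solution is therefore a fixed point of
  the solution operator of the differentiated problem, contracting up to a controlled error
  (`exists_fixed`).

If `u + v` stayed below some bound at times arbitrarily close to `T`, then `continuation` would
extend the solution beyond `T`, contradicting maximality. Hence `u + v → ∞` at every boundary point,
and there `max u v ≥ (u + v)/2` gives the blow-up point.
-/

open Set Real Metric MeasureTheory Filter Topology

/-- The Euclidean Laplacian of `f : ℝⁿ → ℝ` at `x`, computed as the sum of second
directional derivatives along the coordinate directions. -/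
noncomputable def lap {n : ℕ} (f : EuclideanSpace ℝ (Fin n) → ℝ)
    (x : EuclideanSpace ℝ (Fin n)) : ℝ :=
  ∑ i : Fin n, iteratedDeriv 2 (fun s : ℝ => f (x + s • EuclideanSpace.single i (1 : ℝ))) 0

/-- The outward normal derivative `∇f · (x/R)` on the sphere of radius `R`. -/
noncomputable def normalDeriv {n : ℕ} (R : ℝ) (f : EuclideanSpace ℝ (Fin n) → ℝ)
    (x : EuclideanSpace ℝ (Fin n)) : ℝ :=
  deriv (fun s : ℝ => f (x + s • (R⁻¹ • x))) 0

/-- Admissible initial data for problem (1.1): nonnegative, smooth, radial with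
nondecreasing radial profiles, and satisfying the compatibility conditions. -/
structure AdmissibleData (n : ℕ) (R : ℝ)
    (u₀ v₀ : EuclideanSpace ℝ (Fin n) → ℝ) : Prop where
  u0_nonneg : ∀ x ∈ closedBall (0 : EuclideanSpace ℝ (Fin n)) R, 0 ≤ u₀ x
  v0_nonneg : ∀ x ∈ closedBall (0 : EuclideanSpace ℝ (Fin n)) R, 0 ≤ v₀ x
  u0_smooth : ContDiffOn ℝ (⊤ : ℕ∞) u₀ (closedBall (0 : EuclideanSpace ℝ (Fin n)) R)
  v0_smooth : ContDiffOn ℝ (⊤ : ℕ∞) v₀ (closedBall (0 : EuclideanSpace ℝ (Fin n)) R)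
  u0_radial_mono : ∀ x ∈ closedBall (0 : EuclideanSpace ℝ (Fin n)) R,
    ∀ y ∈ closedBall (0 : EuclideanSpace ℝ (Fin n)) R, ‖x‖ ≤ ‖y‖ → u₀ x ≤ u₀ y
  v0_radial_mono : ∀ x ∈ closedBall (0 : EuclideanSpace ℝ (Fin n)) R,
    ∀ y ∈ closedBall (0 : EuclideanSpace ℝ (Fin n)) R, ‖x‖ ≤ ‖y‖ → v₀ x ≤ v₀ y
  compat_u : ∀ x : EuclideanSpace ℝ (Fin n), ‖x‖ = R → normalDeriv R u₀ x = Real.exp (v₀ x)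
  compat_v : ∀ x : EuclideanSpace ℝ (Fin n), ‖x‖ = R → normalDeriv R v₀ x = Real.exp (u₀ x)
  compat_u' : ∀ x ∈ closedBall (0 : EuclideanSpace ℝ (Fin n)) R, 0 ≤ lap u₀ x + Real.exp (v₀ x)
  compat_v' : ∀ x ∈ closedBall (0 : EuclideanSpace ℝ (Fin n)) R, 0 ≤ lap v₀ x + Real.exp (u₀ x)

/-- A classical solution of problem (1.1) on `[0,T)` on the ball of radius `R`:
continuous on `cl(B_R) × [0,T)`, of class C²,¹ on `cl(B_R) × (0,T)`, satisfying the
equations `u_t = Δu + λ₁ e^v`, `v_t = Δv + λ₂ e^u` in `B_R × (0,T)`, the boundary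
conditions `∂u/∂η = e^v`, `∂v/∂η = e^u` on `∂B_R × (0,T)`, and the initial conditions. -/
structure IsClassicalSolution (n : ℕ) (R T lam1 lam2 : ℝ)
    (u v : EuclideanSpace ℝ (Fin n) → ℝ → ℝ)
    (u₀ v₀ : EuclideanSpace ℝ (Fin n) → ℝ) : Prop where
  cont_u : ContinuousOn (fun p : EuclideanSpace ℝ (Fin n) × ℝ => u p.1 p.2)
    ((closedBall (0 : EuclideanSpace ℝ (Fin n)) R) ×ˢ Ico (0 : ℝ) T)
  cont_v : ContinuousOn (fun p : EuclideanSpace ℝ (Fin n) × ℝ => v p.1 p.2)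
    ((closedBall (0 : EuclideanSpace ℝ (Fin n)) R) ×ˢ Ico (0 : ℝ) T)
  reg_space_u : ∀ t ∈ Ioo (0 : ℝ) T,
    ContDiffOn ℝ 2 (fun x => u x t) (closedBall (0 : EuclideanSpace ℝ (Fin n)) R)
  reg_space_v : ∀ t ∈ Ioo (0 : ℝ) T,
    ContDiffOn ℝ 2 (fun x => v x t) (closedBall (0 : EuclideanSpace ℝ (Fin n)) R)
  reg_time_u : ∀ x ∈ closedBall (0 : EuclideanSpace ℝ (Fin n)) R, ∀ t ∈ Ioo (0 : ℝ) T,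
    DifferentiableAt ℝ (u x) t
  reg_time_v : ∀ x ∈ closedBall (0 : EuclideanSpace ℝ (Fin n)) R, ∀ t ∈ Ioo (0 : ℝ) T,
    DifferentiableAt ℝ (v x) t
  pde_u : ∀ x ∈ ball (0 : EuclideanSpace ℝ (Fin n)) R, ∀ t ∈ Ioo (0 : ℝ) T,
    deriv (u x) t = lap (fun y => u y t) x + lam1 * Real.exp (v x t)
  pde_v : ∀ x ∈ ball (0 : EuclideanSpace ℝ (Fin n)) R, ∀ t ∈ Ioo (0 : ℝ) T,
    deriv (v x) t = lap (fun y => v y t) x + lam2 * Real.exp (u x t)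
  bc_u : ∀ x : EuclideanSpace ℝ (Fin n), ‖x‖ = R → ∀ t ∈ Ioo (0 : ℝ) T,
    normalDeriv R (fun y => u y t) x = Real.exp (v x t)
  bc_v : ∀ x : EuclideanSpace ℝ (Fin n), ‖x‖ = R → ∀ t ∈ Ioo (0 : ℝ) T,
    normalDeriv R (fun y => v y t) x = Real.exp (u x t)
  init_u : ∀ x ∈ closedBall (0 : EuclideanSpace ℝ (Fin n)) R, u x 0 = u₀ x
  init_v : ∀ x ∈ closedBall (0 : EuclideanSpace ℝ (Fin n)) R, v x 0 = v₀ x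

/-- `(u,v)` blows up at time `T`: `limsup_{t→T⁻} sup_{cl(B_R)} (u(·,t) + v(·,t)) = ∞`. -/
def BlowsUpAt (n : ℕ) (R T : ℝ) (u v : EuclideanSpace ℝ (Fin n) → ℝ → ℝ) : Prop :=
  ∀ M : ℝ, ∃ᶠ t in 𝓝[<] T, ∃ x ∈ closedBall (0 : EuclideanSpace ℝ (Fin n)) R, M < u x t + v x t

/-- `x` is a blow-up point of `(u,v)` at time `T`: there exist sequences `x_k → x` in
`cl(B_R)` and `t_k → T⁻` with `u(x_k,t_k) → ∞` or `v(x_k,t_k) → ∞`. -/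
def IsBlowUpPoint (n : ℕ) (R T : ℝ) (u v : EuclideanSpace ℝ (Fin n) → ℝ → ℝ)
    (x : EuclideanSpace ℝ (Fin n)) : Prop :=
  ∃ (xs : ℕ → EuclideanSpace ℝ (Fin n)) (ts : ℕ → ℝ),
    (∀ k, xs k ∈ closedBall (0 : EuclideanSpace ℝ (Fin n)) R) ∧
    (∀ k, ts k ∈ Ioo (0 : ℝ) T) ∧
    Tendsto xs atTop (𝓝 x) ∧ Tendsto ts atTop (𝓝 T) ∧
    (Tendsto (fun k => u (xs k) (ts k)) atTop atTop ∨
     Tendsto (fun k => v (xs k) (ts k)) atTop atTop)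

/-! ### Averages, time integrals and the radial potential -/

section avg
variable {F : Type*} [NormedAddCommGroup F]

/-- Extension of a function on `[0,1]` to `ℝ` by its values at the end points. -/
noncomputable def cext (q : C(unitInterval, F)) : ℝ → F := IccExtend zero_le_one q

lemma continuous_cext (q : C(unitInterval, F)) : Continuous (cext q) :=
  q.continuous.Icc_extend'

lemma cext_coe (q : C(unitInterval, F)) (r : unitInterval) : cext q r = q r :=
  IccExtend_val _ _ _

lemma cext_of_mem (q : C(unitInterval, F)) {x : ℝ} (hx : x ∈ Icc (0 : ℝ) 1) :
    cext q x = q ⟨x, hx⟩ := IccExtend_of_mem _ _ hx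

lemma norm_cext_le (q : C(unitInterval, F)) (x : ℝ) : ‖cext q x‖ ≤ ‖q‖ :=
  q.norm_coe_le_norm _

variable [NormedSpace ℝ F]

/-- The weighted mean `q ↦ (r ↦ ∫₀¹ s^j q(sr) ds)`. -/
noncomputable def avg (j : ℕ) : C(unitInterval, F) →L[ℝ] C(unitInterval, F) :=
  LinearMap.mkContinuous
    { toFun := fun q => ⟨fun r => ∫ s in (0 : ℝ)..1, s ^ j • cext q (s * r), by
        have := continuous_cext q
        apply intervalIntegral.continuous_parametric_intervalIntegral_of_continuous'
        unfold Function.uncurry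
        fun_prop⟩
      map_add' := fun p q => by
        ext r
        have hp := continuous_cext p
        have hq := continuous_cext q
        simp only [ContinuousMap.coe_mk, ContinuousMap.add_apply]
        rw [← intervalIntegral.integral_add]
        · congr 1; ext s; rw [← smul_add]; rfl
        · apply Continuous.intervalIntegrable; fun_prop
        · apply Continuous.intervalIntegrable; fun_prop
      map_smul' := fun c q => by
        ext r
        simp only [ContinuousMap.coe_mk, ContinuousMap.smul_apply, RingHom.id_apply]
        rw [← intervalIntegral.integral_smul]
        congr 1; ext s; rw [smul_comm]; rfl }
    1 (fun q => by
      rw [one_mul, ContinuousMap.norm_le _ (norm_nonneg _)]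
      intro r
      have := intervalIntegral.norm_integral_le_of_norm_le_const (a := 0) (b := 1) (C := ‖q‖)
        (f := fun s : ℝ => s ^ j • cext q (s * r)) (by
          intro s hs
          rw [uIoc_of_le zero_le_one] at hs
          rw [norm_smul, norm_pow, Real.norm_eq_abs, abs_of_pos hs.1]
          calc s ^ j * ‖cext q (s * r)‖ ≤ 1 * ‖q‖ :=
                mul_le_mul (pow_le_one₀ hs.1.le hs.2) (norm_cext_le _ _) (norm_nonneg _) zero_le_one
            _ = ‖q‖ := one_mul _)
      simpa using this)

lemma avg_apply (j : ℕ) (q : C(unitInterval, F)) (r : unitInterval) :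
    avg j q r = ∫ s in (0 : ℝ)..1, s ^ j • cext q (s * r) := rfl

lemma norm_avg_apply_le (j : ℕ) (q : C(unitInterval, F)) : ‖avg j q‖ ≤ ‖q‖ := by
  have := (avg (F := F) j).le_of_opNorm_le (LinearMap.mkContinuous_norm_le _ zero_le_one _) q
  simpa using this

lemma avg_eq_integral (j : ℕ) (q : C(unitInterval, F)) (r : unitInterval) :
    (r : ℝ) ^ (j + 1) • avg j q r = ∫ s in (0 : ℝ)..r, s ^ j • cext q s := by
  rw [avg_apply, pow_succ', mul_smul, ← intervalIntegral.integral_smul]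
  have := intervalIntegral.smul_integral_comp_mul_right (a := 0) (b := 1)
    (fun s : ℝ => s ^ j • cext q s) (r : ℝ)
  simp only [zero_mul, one_mul] at this
  rw [← this]
  congr 2; ext s; rw [mul_pow, smul_smul, mul_comm]

/-- Time integration over `[0,τ]`, with time rescaled to the unit interval. -/
noncomputable def tint (τ : ℝ) : C(unitInterval, F) →L[ℝ] C(unitInterval, F) :=
  LinearMap.mkContinuous
    { toFun := fun q => ⟨fun t => (τ * t) • avg 0 q t, by fun_prop⟩
      map_add' := fun p q => by ext t; simp
      map_smul' := fun c q => by
        ext t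
        simp only [map_smul, ContinuousMap.coe_mk, ContinuousMap.smul_apply, RingHom.id_apply]
        rw [smul_comm] }
    |τ| (fun q => by
      rw [ContinuousMap.norm_le _ (by positivity)]
      intro t
      simp only [LinearMap.coe_mk, AddHom.coe_mk, ContinuousMap.coe_mk, norm_smul, norm_mul, Real.norm_eq_abs]
      have h1 : |(t : ℝ)| ≤ 1 := by rw [abs_of_nonneg t.2.1]; exact t.2.2
      have h2 := ((avg 0 q).norm_coe_le_norm t).trans (norm_avg_apply_le 0 q)
      calc |τ| * |(t : ℝ)| * ‖avg 0 q t‖ ≤ |τ| * 1 * ‖q‖ := by gcongr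
        _ = _ := by ring)

lemma tint_apply (τ : ℝ) (q : C(unitInterval, F)) (t : unitInterval) :
    tint τ q t = τ • ∫ s in (0 : ℝ)..t, cext q s := by
  have := avg_eq_integral 0 q t
  simp only [zero_add, pow_one, pow_zero, one_smul] at this
  rw [← this, smul_smul]; rfl

lemma norm_tint_le {τ : ℝ} (hτ : 0 ≤ τ) (q : C(unitInterval, F)) : ‖tint τ q‖ ≤ τ * ‖q‖ := by
  have := (tint (F := F) τ).le_of_opNorm_le (LinearMap.mkContinuous_norm_le _ (abs_nonneg τ) _) q
  rwa [abs_of_nonneg hτ] at this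

/-- A closed subspace of `C([0,1], F)` containing all `t ↦ t ^ j • b` is everything. -/
lemma poly_dense (V : Submodule ℝ C(unitInterval, F)) (hV : IsClosed (V : Set C(unitInterval, F)))
    (h : ∀ (j : ℕ) (b : F), (⟨fun t => (t : ℝ) ^ j • b, by fun_prop⟩ : C(unitInterval, F)) ∈ V)
    (f : C(unitInterval, F)) : f ∈ V := by
  have hp : ∀ (p : Polynomial ℝ) (b : F),
      (⟨fun t => p.eval (t : ℝ) • b, by fun_prop⟩ : C(unitInterval, F)) ∈ V := by
    intro p b
    induction p using Polynomial.induction_on' with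
    | add p q hp hq =>
      convert V.add_mem hp hq using 1
      ext t; simp [add_smul]
    | monomial j a =>
      convert V.smul_mem a (h j b) using 1
      ext t; simp [mul_smul]
  refine hV.mem_of_tendsto (bernsteinApproximation_uniform f) (Eventually.of_forall fun N => ?_)
  have : bernsteinApproximation N f = ∑ k : Fin (N + 1),
      (⟨fun t => (bernsteinPolynomial ℝ N k).eval (t : ℝ) • f (bernstein.z k), by fun_prop⟩ :
        C(unitInterval, F)) := by
    ext t
    rw [bernsteinApproximation.apply, ContinuousMap.sum_apply]
    rfl
  rw [this]
  exact V.sum_mem fun k _ => hp _ _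

end avg

/-- Real continuous functions on `[0,1]`. They serve as radial profiles, with the radius divided by
`R`, and also as real functions of rescaled time. -/
abbrev CE := C(unitInterval, ℝ)

/-- The function `r ↦ r²`. -/
noncomputable def sqCM : CE := ⟨fun r => (r : ℝ) ^ 2, by fun_prop⟩

/-- `K q` is the radial solution of `Δ U = q` on the ball of radius `R` of `ℝ^(m+1)` vanishing at
the origin. -/
noncomputable def Kop (m : ℕ) (R : ℝ) : CE →L[ℝ] CE :=
  (R ^ 2) • ((ContinuousLinearMap.mul ℝ CE sqCM).comp ((avg 1).comp (avg m)))

lemma Kop_apply (m : ℕ) (R : ℝ) (q : CE) (r : unitInterval) :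
    Kop m R q r = R ^ 2 * ∫ s in (0 : ℝ)..r, s * cext (avg m q) s := by
  have := avg_eq_integral 1 (avg m q) r
  simp only [pow_one, smul_eq_mul, one_add_one_eq_two] at this
  rw [← this]; rfl

lemma Kop_zero (m : ℕ) (R : ℝ) (q : CE) : Kop m R q 0 = 0 := by
  rw [Kop_apply]; simp

/-- Maximum principle: if the potential of `q` is maximal at `x` and its boundary flux is
nonpositive, then `q x ≤ 0`. -/
lemma elliptic_max {m : ℕ} {R : ℝ} (hR : 0 < R) (q : CE) (x : unitInterval)
    (hmax : ∀ r, Kop m R q r ≤ Kop m R q x) (hb : avg m q 1 ≤ 0) : q x ≤ 0 := by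
  have hR2 : 0 < R ^ 2 := by positivity
  set a := cext (avg m q) with ha
  have hac : Continuous a := continuous_cext _
  have hqc : Continuous (cext q) := continuous_cext _
  have hii : ∀ u v : ℝ, IntervalIntegrable (fun s => s * a s) volume u v := fun u v =>
    Continuous.intervalIntegrable (by fun_prop) _ _
  have hii2 : ∀ u v : ℝ, IntervalIntegrable (fun s => s ^ m • cext q s) volume u v := fun u v =>
    Continuous.intervalIntegrable (by fun_prop) _ _
  have hk : ∀ r : ℝ, r ∈ Icc (0 : ℝ) 1 →
      ∫ s in (0 : ℝ)..r, s * a s ≤ ∫ s in (0 : ℝ)..x, s * a s := by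
    intro r hr
    have := hmax ⟨r, hr⟩
    rw [Kop_apply, Kop_apply] at this
    exact le_of_mul_le_mul_left this hR2
  have hG : ∀ r : ℝ, r ∈ Icc (0 : ℝ) 1 →
      r ^ (m + 1) * a r = ∫ s in (0 : ℝ)..r, s ^ m • cext q s := by
    intro r hr
    have := avg_eq_integral m q ⟨r, hr⟩
    rw [← this, ha, cext_of_mem _ hr]; rfl
  by_contra! hq
  rw [← cext_coe] at hq
  obtain ⟨ε, hε, hpos⟩ : ∃ ε > 0, ∀ y : ℝ, |y - x| < ε → 0 < cext q y := by
    have := hqc.continuousAt.eventually (lt_mem_nhds hq)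
    obtain ⟨ε, hε, h⟩ := Metric.eventually_nhds_iff.1 this
    exact ⟨ε, hε, fun y hy => h (by rwa [Real.dist_eq])⟩
  rcases eq_or_lt_of_le x.2.1 with h0 | h0
  · -- maximum at the origin
    rw [← h0] at hpos hk
    set y := min 1 (ε / 2) with hy
    have hy0 : 0 < y := by positivity
    have hy1 : y ≤ 1 := min_le_left _ _
    have hye : y < ε := (min_le_right _ _).trans_lt (by linarith)
    have hapos : ∀ r ∈ Ioo 0 y, 0 < r * a r := by
      intro r hr
      have h1 := hG r ⟨hr.1.le, by linarith [hr.2]⟩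
      have h2 : 0 < ∫ s in (0 : ℝ)..r, s ^ m • cext q s := by
        apply intervalIntegral.intervalIntegral_pos_of_pos_on (hii2 _ _) _ hr.1
        intro s hs
        have := hpos s (by rw [abs_lt]; constructor <;> linarith [hs.1, hs.2, hr.2])
        have := hs.1
        simp only [smul_eq_mul]; positivity
      rw [← h1] at h2
      have := pow_pos hr.1 (m + 1)
      exact mul_pos hr.1 (pos_of_mul_pos_right h2 this.le)
    have h3 := intervalIntegral.intervalIntegral_pos_of_pos_on (hii 0 y) hapos hy0
    have h4 := hk y ⟨hy0.le, hy1⟩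
    simp only [intervalIntegral.integral_same] at h4
    linarith
  · have hax : a x ≤ 0 := by
      rcases eq_or_lt_of_le x.2.2 with h1 | h1
      · have : x = 1 := Subtype.ext h1
        rw [this, ha, cext_coe]; exact hb
      · by_contra! hpa
        obtain ⟨δ, hδ, hδp⟩ : ∃ δ > 0, ∀ y : ℝ, |y - x| < δ → 0 < a y := by
          have := hac.continuousAt.eventually (lt_mem_nhds hpa)
          obtain ⟨ε, hε, h⟩ := Metric.eventually_nhds_iff.1 this
          exact ⟨ε, hε, fun y hy => h (by rwa [Real.dist_eq])⟩
        set y := min 1 (x + δ / 2) with hy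
        have hy0 : (x : ℝ) < y := lt_min h1 (by linarith)
        have hy1 : y ≤ 1 := min_le_left _ _
        have hye : y < x + δ := (min_le_right _ _).trans_lt (by linarith)
        have h3 := intervalIntegral.intervalIntegral_pos_of_pos_on (hii x y) (fun r hr =>
          mul_pos (h0.trans hr.1) (hδp r (by rw [abs_lt]; constructor <;> linarith [hr.1, hr.2]))) hy0
        have h4 := hk y ⟨by linarith, hy1⟩
        rw [← intervalIntegral.integral_add_adjacent_intervals (hii 0 x) (hii x y)] at h4
        linarith
    set y := max 0 ((x : ℝ) - ε / 2) with hy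
    have hy0 : 0 ≤ y := le_max_left _ _
    have hyx : y < x := max_lt h0 (by linarith)
    have hye : (x : ℝ) - ε < y := lt_of_lt_of_le (by linarith) (le_max_right _ _)
    have haneg : ∀ r ∈ Ioo y x, 0 < - (r * a r) := by
      intro r hr
      have hr0 : 0 < r := lt_of_le_of_lt hy0 hr.1
      have h1 := hG r ⟨hr0.le, by linarith [hr.2, x.2.2]⟩
      have h1' := hG x x.2
      have h2 : 0 < ∫ s in r..x, s ^ m • cext q s := by
        apply intervalIntegral.intervalIntegral_pos_of_pos_on (hii2 _ _) _ hr.2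
        intro s hs
        have := hpos s (by rw [abs_lt]; constructor <;> linarith [hs.1, hs.2, hr.1])
        have := hr0.trans hs.1
        simp only [smul_eq_mul]; positivity
      rw [← intervalIntegral.integral_add_adjacent_intervals (hii2 0 r) (hii2 r x)] at h1'
      have h5 : (x : ℝ) ^ (m + 1) * a x ≤ 0 := mul_nonpos_of_nonneg_of_nonpos (by positivity) hax
      have h6 : r ^ (m + 1) * a r < 0 := by linarith
      have := pow_pos hr0 (m + 1)
      have : a r < 0 := by
        by_contra! h; have := mul_nonneg this.le h; linarith
      nlinarith
    have h3 : 0 < ∫ s in y..x, -(s * a s) :=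
      intervalIntegral.intervalIntegral_pos_of_pos_on (hii y x).neg haneg hyx
    rw [intervalIntegral.integral_neg] at h3
    have h4 := hk y ⟨hy0, by linarith [x.2.2]⟩
    rw [← intervalIntegral.integral_add_adjacent_intervals (hii 0 y) (hii y x)] at h4
    linarith

/-! ### The radial Neumann resolvent -/

/-- `U` is in the domain of the radial Neumann Laplacian and `Δ U = q`, in integrated form: `U` is
`U(0)` plus the potential of `q`, and the boundary flux of this potential vanishes. -/
def Dom (m : ℕ) (R : ℝ) (U q : CE) : Prop :=
  U = (U 0) • (1 : CE) + Kop m R q ∧ avg m q 1 = 0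

lemma exists_max_of_eq {m : ℕ} {R : ℝ} (hR : 0 < R) {U q : CE} {c : ℝ}
    (hU : U = c • (1 : CE) + Kop m R q) (hb : avg m q 1 ≤ 0) :
    ∃ x, (∀ r, U r ≤ U x) ∧ q x ≤ 0 := by
  obtain ⟨x, -, hx⟩ := isCompact_univ.exists_isMaxOn (univ_nonempty) U.continuous.continuousOn
  have hx' : ∀ r, U r ≤ U x := fun r => hx (mem_univ r)
  refine ⟨x, hx', elliptic_max hR q x (fun r => ?_) hb⟩
  have := hx' r
  rw [hU] at this
  simpa using this

lemma Dom.neg {m : ℕ} {R : ℝ} {U q : CE} (h : Dom m R U q) : Dom m R (-U) (-q) := by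
  refine ⟨?_, by simp [h.2]⟩
  rw [map_neg]
  nth_rw 1 [h.1]
  simp
  abel

/-- Dissipativity of the Neumann Laplacian. -/
lemma Dom.norm_le {m : ℕ} {R : ℝ} (hR : 0 < R) {U q : CE} (h : Dom m R U q) {κ : ℝ}
    (hκ : 0 ≤ κ) : ‖U‖ ≤ ‖U - κ • q‖ := by
  have key : ∀ U q : CE, Dom m R U q → ∀ r, U r ≤ ‖U - κ • q‖ := by
    intro U q h r
    obtain ⟨x, hx, hq⟩ := exists_max_of_eq hR h.1 h.2.le
    calc U r ≤ U x := hx r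
      _ ≤ (U - κ • q) x := by simp; exact mul_nonpos_of_nonneg_of_nonpos hκ hq
      _ ≤ ‖U - κ • q‖ := (le_abs_self _).trans ((U - κ • q).norm_coe_le_norm x)
  rw [ContinuousMap.norm_le _ (norm_nonneg _)]
  intro r
  rw [Real.norm_eq_abs, abs_le]
  refine ⟨?_, key U q h r⟩
  have := key _ _ h.neg r
  have h2 : -U - κ • -q = -(U - κ • q) := by simp; abel
  rw [h2, norm_neg] at this
  simp at this
  linarith

lemma Kop_bound {m : ℕ} {R : ℝ} {q : CE} {C : ℝ} (j : ℕ)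
    (hq : ∀ r : unitInterval, |q r| ≤ C * (r : ℝ) ^ (2 * j)) (r : unitInterval) :
    |Kop m R q r| ≤ R ^ 2 * C / (j + 1) * (r : ℝ) ^ (2 * (j + 1)) := by
  have h1 : ∀ r : unitInterval, |avg m q r| ≤ C * (r : ℝ) ^ (2 * j) := by
    intro r
    rw [avg_apply]
    have := intervalIntegral.norm_integral_le_of_norm_le_const (a := 0) (b := 1)
        (C := C * (r : ℝ) ^ (2 * j))
        (f := fun s : ℝ => s ^ m • cext q (s * r)) (by
          intro s hs
          rw [uIoc_of_le zero_le_one] at hs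
          have hm : s * r ∈ Icc (0 : ℝ) 1 :=
            ⟨mul_nonneg hs.1.le r.2.1, mul_le_one₀ hs.2 r.2.1 r.2.2⟩
          rw [norm_smul, norm_pow, Real.norm_eq_abs, abs_of_pos hs.1, cext_of_mem _ hm]
          have hC : 0 ≤ C := by
            have := (abs_nonneg _).trans (hq 1)
            simpa using this
          calc s ^ m * ‖q ⟨s * r, hm⟩‖ ≤ 1 * (C * (s * r) ^ (2 * j)) :=
                mul_le_mul (pow_le_one₀ hs.1.le hs.2) (hq _) (norm_nonneg _) zero_le_one
            _ ≤ C * (1 * r) ^ (2 * j) := by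
                rw [one_mul]
                have := r.2.1
                have := hs.1
                have := hs.2
                gcongr
            _ = _ := by rw [one_mul])
    simpa using this
  have hr0 : (0 : ℝ) ≤ r := r.2.1
  rw [Kop_apply, abs_mul, abs_of_nonneg (by positivity : 0 ≤ R ^ 2)]
  have h2 : |∫ s in (0 : ℝ)..r, s * cext (avg m q) s| ≤ ∫ s in (0 : ℝ)..r, C * s ^ (2 * j + 1) := by
    rw [← Real.norm_eq_abs]
    apply intervalIntegral.norm_integral_le_of_norm_le hr0
    · refine Eventually.of_forall fun s hs => ?_
      rw [norm_mul, Real.norm_eq_abs, abs_of_pos hs.1, cext_of_mem _ ⟨hs.1.le, hs.2.trans r.2.2⟩]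
      have := h1 ⟨s, hs.1.le, hs.2.trans r.2.2⟩
      calc s * ‖_‖ ≤ s * (C * s ^ (2 * j)) := mul_le_mul_of_nonneg_left this hs.1.le
        _ = _ := by ring
    · exact Continuous.intervalIntegrable (by fun_prop) _ _
  have hC : 0 ≤ C := by
    have := (abs_nonneg _).trans (hq 1)
    simpa using this
  rw [intervalIntegral.integral_const_mul, integral_pow] at h2
  push_cast at h2
  calc R ^ 2 * _ ≤ R ^ 2 * _ := mul_le_mul_of_nonneg_left h2 (by positivity)
    _ = (R ^ 2 * C * (r : ℝ) ^ (2 * (j + 1))) / (2 * (j + 1)) := by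
        rw [zero_pow (by omega)]; field_simp; ring
    _ ≤ (R ^ 2 * C * (r : ℝ) ^ (2 * (j + 1))) / (1 * (j + 1)) := by
        gcongr; norm_num
    _ = _ := by field_simp

/-- The iterates of the potential operator decay factorially, so that the Neumann series of `1 - κ
K` converges for every `κ`. -/
lemma Kop_iterate_bound (m : ℕ) (R κ : ℝ) (q : CE) (j : ℕ) (r : unitInterval) :
    |((κ • Kop m R)^[j]) q r| ≤ (|κ| * R ^ 2) ^ j * ‖q‖ / j.factorial * (r : ℝ) ^ (2 * j) := by
  induction j generalizing r with
  | zero => simpa using q.norm_coe_le_norm r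
  | succ j ih =>
    rw [Function.iterate_succ_apply']
    have := Kop_bound (m := m) (R := R) j ih r
    have h2 : |(κ • Kop m R) ((κ • Kop m R)^[j] q) r| =
        |κ| * |Kop m R ((κ • Kop m R)^[j] q) r| := by
      rw [← abs_mul]; rfl
    rw [h2]
    refine (mul_le_mul_of_nonneg_left this (abs_nonneg κ)).trans (le_of_eq ?_)
    rw [Nat.factorial_succ]; push_cast; field_simp; ring

/-- Neumann series for an operator one of whose iterates is a strict contraction. -/
lemma exists_inverse_one_sub {E : Type*} [NormedAddCommGroup E] [NormedSpace ℝ E] [CompleteSpace E]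
    (T : E →L[ℝ] E) {j : ℕ} {c : ℝ} (hc0 : 0 ≤ c) (hc : c < 1) (hT : ∀ q, ‖T^[j] q‖ ≤ c * ‖q‖) :
    ∃ B : E →L[ℝ] E, ∀ f, B f = f + T (B f) := by
  have hnorm : ‖T ^ j‖ < 1 := by
    refine lt_of_le_of_lt (ContinuousLinearMap.opNorm_le_bound _ hc0 fun q => ?_) hc
    simpa using hT q
  have h1 : IsUnit (1 - T ^ j) := isUnit_one_sub_of_norm_lt_one hnorm
  rw [← mul_neg_geom_sum] at h1
  obtain ⟨u, hu⟩ := ((Commute.isUnit_mul_iff (by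
    rw [Commute, SemiconjBy, mul_neg_geom_sum, geom_sum_mul_neg])).1 h1).1
  refine ⟨((u⁻¹ : (E →L[ℝ] E)ˣ) : E →L[ℝ] E), fun f => ?_⟩
  have := DFunLike.congr_fun u.mul_inv f
  rw [hu] at this
  simp only [mul_apply_eq_comp, sub_apply, one_apply_eq_self] at this
  rw [sub_eq_iff_eq_add] at this
  exact this

/-- The resolvent `J = (1 - κ⁻¹Δ)⁻¹` of the Neumann Laplacian, characterised by `Δ (J f) = κ (J f -
f)`. -/
lemma exists_resolvent (m : ℕ) {R : ℝ} (hR : 0 < R) {κ : ℝ} (hκ : 0 < κ) :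
    ∃ J : CE →L[ℝ] CE, (∀ f, Dom m R (J f) (κ • (J f - f))) := by
  obtain ⟨B, hBl⟩ : ∃ B : CE →L[ℝ] CE, ∀ f, B f = f + κ • Kop m R (B f) := by
    have hlim : Tendsto (fun j : ℕ => (|κ| * R ^ 2) ^ j / j.factorial) atTop (𝓝 0) :=
      FloorSemiring.tendsto_pow_div_factorial_atTop _
    obtain ⟨j, hj⟩ := (hlim.eventually (gt_mem_nhds (by norm_num : (0 : ℝ) < 1))).exists
    refine exists_inverse_one_sub (κ • Kop m R) (j := j) (by positivity) hj fun q => ?_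
    rw [ContinuousMap.norm_le _ (by positivity)]
    intro r
    have h1 := Kop_iterate_bound m R κ q j r
    have h2 : (r : ℝ) ^ (2 * j) ≤ 1 := pow_le_one₀ r.2.1 r.2.2
    refine h1.trans ?_
    calc (|κ| * R ^ 2) ^ j * ‖q‖ / j.factorial * (r : ℝ) ^ (2 * j)
        ≤ (|κ| * R ^ 2) ^ j * ‖q‖ / j.factorial * 1 := by gcongr
      _ = _ := by ring
  set φ : CE →L[ℝ] ℝ := (ContinuousMap.evalCLM ℝ (1 : unitInterval)).comp (avg m) with hφ
  have hφa : ∀ q, φ q = avg m q 1 := fun q => rfl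
  have hB0 : ∀ f, B f 0 = f 0 := by
    intro f
    have := congrArg (fun g : CE => g 0) (hBl f)
    simpa [Kop_zero] using this
  have hne : φ (B 1) ≠ 0 := by
    intro h0
    have hd : Dom m R (B 1) (κ • B 1) := by
      refine ⟨?_, by rw [← hφa, map_smul, h0, smul_zero]⟩
      rw [hB0]
      nth_rw 1 [hBl]
      rw [map_smul]; simp
    have := hd.norm_le hR (inv_nonneg.2 hκ.le)
    rw [smul_smul, inv_mul_cancel₀ hκ.ne', one_smul, sub_self, norm_zero] at this
    have h1 : B 1 = 0 := norm_le_zero_iff.1 this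
    have := hB0 1
    rw [h1] at this
    simp at this
  -- `J f = c(f) B 1 - B (κ K f)` with `c(f)` chosen to satisfy the Neumann condition
  set c : CE →L[ℝ] ℝ := (φ (B 1))⁻¹ • (φ + φ.comp (B.comp (κ • Kop m R))) with hc
  set J : CE →L[ℝ] CE := c.smulRight (B 1) - B.comp (κ • Kop m R) with hJ
  have hJa : ∀ f, J f = c f • B 1 - B (κ • Kop m R f) := fun f => rfl
  have hca : ∀ f, c f * φ (B 1) = φ f + φ (B (κ • Kop m R f)) := by
    intro f
    have : c f = (φ (B 1))⁻¹ * (φ f + φ (B (κ • Kop m R f))) := rfl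
    rw [this]; field_simp
  refine ⟨J, fun f => ⟨?_, ?_⟩⟩
  · have h0 : J f 0 = c f := by
      rw [hJa]; simp [hB0, Kop_zero]
    rw [h0]
    have h1 : J f = c f • (1 + κ • Kop m R (B 1)) -
        (κ • Kop m R f + κ • Kop m R (B (κ • Kop m R f))) := by
      rw [← hBl, ← hBl]; rfl
    have h2 : Kop m R (J f) = c f • Kop m R (B 1) - Kop m R (B (κ • Kop m R f)) := by
      rw [hJa, map_sub, map_smul]
    rw [map_smul, map_sub, h2]
    nth_rw 1 [h1]
    module
  · rw [← hφa, map_smul, map_sub, hJa, map_sub, map_smul, smul_eq_mul, smul_eq_mul, hca]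
    simp

/-! ### Density of the Neumann domain and semigroups with bounded generator -/

lemma Dom.add {m : ℕ} {R : ℝ} {U q U' q' : CE} (h : Dom m R U q) (h' : Dom m R U' q') :
    Dom m R (U + U') (q + q') := by
  refine ⟨?_, by simp [h.2, h'.2]⟩
  rw [map_add]
  nth_rw 1 [h.1, h'.1]
  simp only [ContinuousMap.add_apply]
  module

lemma Dom.smul {m : ℕ} {R : ℝ} {U q : CE} (h : Dom m R U q) (c : ℝ) :
    Dom m R (c • U) (c • q) := by
  refine ⟨?_, by simp [h.2]⟩
  rw [map_smul]
  nth_rw 1 [h.1]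
  simp only [ContinuousMap.smul_apply, smul_eq_mul]
  module

lemma Dom.sub {m : ℕ} {R : ℝ} {U q U' q' : CE} (h : Dom m R U q) (h' : Dom m R U' q') :
    Dom m R (U - U') (q - q') := by
  simpa [sub_eq_add_neg] using h.add h'.neg

lemma resolvent_norm_le {m : ℕ} {R : ℝ} (hR : 0 < R) {κ : ℝ} (hκ : 0 < κ) {J : CE →L[ℝ] CE}
    (hJ : ∀ f, Dom m R (J f) (κ • (J f - f))) (f : CE) : ‖J f‖ ≤ ‖f‖ := by
  have := (hJ f).norm_le hR (inv_nonneg.2 hκ.le)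
  rwa [smul_smul, inv_mul_cancel₀ hκ.ne', one_smul, sub_sub_cancel] at this

lemma resolvent_unique {m : ℕ} {R : ℝ} (hR : 0 < R) {κ : ℝ} (hκ : 0 < κ) {J : CE →L[ℝ] CE}
    (hJ : ∀ f, Dom m R (J f) (κ • (J f - f)))
    {U q : CE} (h : Dom m R U q) : J (U - κ⁻¹ • q) = U := by
  have h1 := (hJ (U - κ⁻¹ • q)).sub h
  have h2 := h1.norm_le hR (inv_nonneg.2 hκ.le)
  have h3 : J (U - κ⁻¹ • q) - U - κ⁻¹ • (κ • (J (U - κ⁻¹ • q) - (U - κ⁻¹ • q)) - q) = 0 := by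
    rw [smul_sub κ⁻¹, smul_smul, inv_mul_cancel₀ hκ.ne', one_smul]; abel
  rw [h3, norm_zero] at h2
  exact sub_eq_zero.1 (norm_le_zero_iff.1 h2)

/-- On the domain, the Yosida approximation `κ (J - 1)` agrees with `J Δ`. -/
lemma resolvent_yosida {m : ℕ} {R : ℝ} (hR : 0 < R) {κ : ℝ} (hκ : 0 < κ) {J : CE →L[ℝ] CE}
    (hJ : ∀ f, Dom m R (J f) (κ • (J f - f)))
    {U q : CE} (h : Dom m R U q) : κ • (J U - U) = J q := by
  have := resolvent_unique hR hκ hJ h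
  rw [map_sub, map_smul, sub_eq_iff_eq_add] at this
  rw [this, add_sub_cancel_left, smul_smul, mul_inv_cancel₀ hκ.ne', one_smul]

/-- The monomial `r ^ i`. -/
noncomputable def powCM (i : ℕ) : CE := ⟨fun r => (r : ℝ) ^ i, by fun_prop⟩

lemma powCM_apply (i : ℕ) (r : unitInterval) : powCM i r = (r : ℝ) ^ i := rfl

lemma avg_powCM (m i : ℕ) : avg m (powCM i) = ((m : ℝ) + 1 + i)⁻¹ • powCM i := by
  ext r
  rw [avg_apply]
  have : ∫ s in (0 : ℝ)..1, s ^ m • cext (powCM i) (s * r) =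
      ∫ s in (0 : ℝ)..1, (r : ℝ) ^ i * s ^ (m + i) := by
    apply intervalIntegral.integral_congr
    intro s hs
    rw [uIcc_of_le zero_le_one] at hs
    simp only
    rw [cext_of_mem _ ⟨mul_nonneg hs.1 r.2.1, mul_le_one₀ hs.2 r.2.1 r.2.2⟩, powCM_apply]
    simp only [smul_eq_mul]; ring
  rw [this, intervalIntegral.integral_const_mul, integral_pow]
  simp only [one_pow, ContinuousMap.smul_apply, powCM_apply, smul_eq_mul]
  rw [zero_pow (by omega)]; push_cast; field_simp; ring

lemma Kop_powCM (m i : ℕ) (R : ℝ) :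
    Kop m R (powCM i) = (R ^ 2 / ((m + 1 + i) * (i + 2))) • powCM (i + 2) := by
  have h : Kop m R (powCM i) = R ^ 2 • (sqCM * avg 1 (avg m (powCM i))) := rfl
  rw [h, avg_powCM, map_smul, avg_powCM]
  ext r
  simp only [ContinuousMap.smul_apply, ContinuousMap.mul_apply, smul_eq_mul, powCM_apply]
  have : sqCM r = (r : ℝ) ^ 2 := rfl
  rw [this]; push_cast; field_simp; ring

/-- A density whose potential `betaU` has unit normal derivative. -/
noncomputable def betaQ (m : ℕ) (R : ℝ) (i : ℕ) : CE := ((m + 1 + i) / R) • powCM i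

/-- The potential `R r^(i+2)/(i+2)` of `betaQ`: its normal derivative is `1` although its sup norm
`R/(i+2)` is as small as desired. -/
noncomputable def betaU (R : ℝ) (i : ℕ) : CE := (R / (i + 2)) • powCM (i + 2)

lemma Kop_betaQ (m i : ℕ) {R : ℝ} (hR : 0 < R) : Kop m R (betaQ m R i) = betaU R i := by
  rw [betaQ, map_smul, Kop_powCM, betaU, smul_smul]; congr 1; field_simp

lemma avg_betaQ (m i : ℕ) {R : ℝ} (hR : 0 < R) : R * avg m (betaQ m R i) 1 = 1 := by
  rw [betaQ, map_smul, avg_powCM]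
  simp [powCM_apply]; field_simp

lemma betaU_zero (R : ℝ) (i : ℕ) : betaU R i 0 = 0 := by simp [betaU, powCM_apply]

lemma betaU_nonneg {R : ℝ} (hR : 0 < R) (i : ℕ) (r : unitInterval) : 0 ≤ betaU R i r := by
  have := r.2.1
  simp only [betaU, ContinuousMap.smul_apply, smul_eq_mul, powCM_apply]; positivity

lemma betaU_le {R : ℝ} (hR : 0 < R) (i : ℕ) (r : unitInterval) : betaU R i r ≤ R / (i + 2) := by
  have := pow_le_one₀ (n := i + 2) r.2.1 r.2.2
  simp only [betaU, ContinuousMap.smul_apply, smul_eq_mul, powCM_apply]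
  have h : 0 ≤ R / ((i : ℝ) + 2) := by positivity
  exact mul_le_of_le_one_right h this

lemma betaQ_nonneg {R : ℝ} (hR : 0 < R) (m i : ℕ) (r : unitInterval) : 0 ≤ betaQ m R i r := by
  have := r.2.1
  simp only [betaQ, ContinuousMap.smul_apply, smul_eq_mul, powCM_apply]; positivity

lemma betaQ_le {R : ℝ} (hR : 0 < R) (m i : ℕ) (r : unitInterval) :
    betaQ m R i r ≤ (m + 1 + i) / R := by
  have := pow_le_one₀ (n := i) r.2.1 r.2.2
  simp only [betaQ, ContinuousMap.smul_apply, smul_eq_mul, powCM_apply]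
  have h : 0 ≤ ((m : ℝ) + 1 + i) / R := by positivity
  exact mul_le_of_le_one_right h this

lemma betaU_tendsto {R : ℝ} (hR : 0 < R) : Tendsto (betaU R) atTop (𝓝 0) := by
  have h1 : Tendsto (fun i : ℕ => R / ((i : ℝ) + 2)) atTop (𝓝 0) :=
    Tendsto.div_atTop tendsto_const_nhds
      (tendsto_atTop_add_const_right _ _ tendsto_natCast_atTop_atTop)
  refine squeeze_zero_norm (fun i => ?_) h1
  rw [ContinuousMap.norm_le _ (by positivity)]
  intro r
  rw [Real.norm_eq_abs, abs_of_nonneg (betaU_nonneg hR i r)]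
  exact betaU_le hR i r

/-- The submodule of functions in the domain of the Neumann Laplacian. -/
def domSub (m : ℕ) (R : ℝ) : Submodule ℝ CE where
  carrier := {U | ∃ q, Dom m R U q}
  add_mem' := fun ⟨_, h⟩ ⟨_, h'⟩ => ⟨_, h.add h'⟩
  zero_mem' := ⟨0, by constructor <;> simp⟩
  smul_mem' := fun c _ ⟨_, h⟩ => ⟨_, h.smul c⟩

/-- Even monomials corrected by a small multiple of `betaU` lie in the domain, and even polynomials
are dense by the Weierstrass theorem in the variable `r²`. -/
lemma dom_dense {m : ℕ} {R : ℝ} (hR : 0 < R) (f : CE) : f ∈ (domSub m R).topologicalClosure := by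
  set V := (domSub m R).topologicalClosure with hV
  have hVc : IsClosed (V : Set CE) := Submodule.isClosed_topologicalClosure _
  have hpow : ∀ j : ℕ, powCM (2 * j) ∈ V := by
    intro j
    rcases j with _ | j
    · apply Submodule.le_topologicalClosure
      refine ⟨0, ?_, by simp⟩
      ext r; simp [powCM_apply]
    · set c : ℝ := (R ^ 2 / ((m + 1 + (2 * j : ℕ)) * ((2 * j : ℕ) + 2)))⁻¹ with hc
      set d : ℝ := R * avg m (c • powCM (2 * j)) 1 with hd
      have hlim : Tendsto (fun i => powCM (2 * (j + 1)) - d • betaU R i) atTop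
          (𝓝 (powCM (2 * (j + 1)))) := by
        have := ((betaU_tendsto hR).const_smul d).const_sub (powCM (2 * (j + 1)))
        simpa using this
      refine hVc.mem_of_tendsto hlim (Eventually.of_forall fun i => ?_)
      apply Submodule.le_topologicalClosure
      refine ⟨c • powCM (2 * j) - d • betaQ m R i, ?_, ?_⟩
      · rw [map_sub, map_smul, map_smul, Kop_betaQ m i hR, Kop_powCM, smul_smul, hc,
          inv_mul_cancel₀ (by positivity), one_smul]
        simp [betaU_zero, powCM_apply, mul_add]
      · have h1 := avg_betaQ m i hR
        rw [map_sub, map_smul (avg m) d, ContinuousMap.sub_apply, ContinuousMap.smul_apply, hd,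
          smul_eq_mul, mul_comm R, mul_assoc, h1]; simp
  set L : CE →L[ℝ] CE := ContinuousMap.compCLM ℝ ℝ
    (⟨fun r => ⟨(r : ℝ) ^ 2, by
      have := r.2.1
      exact ⟨by positivity, pow_le_one₀ r.2.1 r.2.2⟩⟩, by fun_prop⟩ :
      C(unitInterval, unitInterval)) with hL
  have hall := poly_dense (V.comap (L : CE →ₗ[ℝ] CE)) (hVc.preimage L.continuous) (by
    intro j b
    have : L (⟨fun t => (t : ℝ) ^ j • b, by fun_prop⟩ : C(unitInterval, ℝ)) = b • powCM (2 * j) := by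
      ext r
      change ((r : ℝ) ^ 2) ^ j * b = b * (r : ℝ) ^ (2 * j)
      rw [pow_mul, mul_comm]
    change L _ ∈ V
    rw [this]
    exact V.smul_mem _ (hpow j))
  have := hall ⟨fun s => f ⟨√s, by
    exact ⟨Real.sqrt_nonneg _, Real.sqrt_le_one.2 s.2.2⟩⟩, by fun_prop⟩
  change L _ ∈ V at this
  convert this using 1
  ext r
  change f r = f _
  congr 1
  apply Subtype.ext
  exact (Real.sqrt_sq r.2.1).symm

/-- A closed subspace containing the domain of `Δ²` is everything. -/
lemma dom2_dense {m : ℕ} {R : ℝ} (hR : 0 < R) (V : Submodule ℝ CE) (hV : IsClosed (V : Set CE))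
    (h : ∀ U q q', Dom m R U q → Dom m R q q' → U ∈ V) (f : CE) : f ∈ V := by
  have h1 : domSub m R ≤ V := by
    rintro U ⟨q, hU⟩
    choose J hJ using fun k : ℕ => exists_resolvent m hR (κ := (k : ℝ) + 1) (by positivity)
    have hlim : Tendsto (fun k => J k U) atTop (𝓝 U) := by
      rw [tendsto_iff_norm_sub_tendsto_zero]
      have h0 : Tendsto (fun k : ℕ => ‖q‖ / ((k : ℝ) + 1)) atTop (𝓝 0) :=
        Tendsto.div_atTop tendsto_const_nhds
          (tendsto_atTop_add_const_right _ _ tendsto_natCast_atTop_atTop)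
      refine squeeze_zero (fun _ => norm_nonneg _) (fun k => ?_) h0
      have hk : (0 : ℝ) < (k : ℝ) + 1 := by positivity
      have := resolvent_yosida hR hk (hJ k) hU
      have h2 := resolvent_norm_le hR hk (hJ k) q
      rw [← this, norm_smul, Real.norm_eq_abs, abs_of_pos hk] at h2
      rw [le_div_iff₀ hk]; linarith
    refine hV.mem_of_tendsto hlim (Eventually.of_forall fun k => ?_)
    have hk : (0 : ℝ) < (k : ℝ) + 1 := by positivity
    have h2 := hJ k U
    rw [resolvent_yosida hR hk (hJ k) hU] at h2
    exact h _ _ _ h2 (hJ k q)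
  exact Submodule.topologicalClosure_minimal _ h1 hV (dom_dense hR f)

/-- The contraction semigroup generated by the bounded operator `κ (T - 1)`, `‖T‖ ≤ 1`. -/
lemma exists_semigroup {E : Type*} [NormedAddCommGroup E] [NormedSpace ℝ E] [CompleteSpace E]
    (T : E →L[ℝ] E) (hT : ∀ f, ‖T f‖ ≤ ‖f‖) {κ : ℝ} (hκ : 0 ≤ κ) :
    ∃ S : ℝ → E →L[ℝ] E, (∀ f, S 0 f = f) ∧ (∀ t, 0 ≤ t → ∀ f, ‖S t f‖ ≤ ‖f‖) ∧
      (∀ t f, HasDerivAt (fun t => S t f) (S t (κ • (T f - f))) t) ∧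
      (∀ t f, T (S t f) = S t (T f)) := by
  let _ : NormedAlgebra ℚ (E →L[ℝ] E) := NormedAlgebra.restrictScalars ℚ ℝ _
  set A : E →L[ℝ] E := κ • (T - 1) with hA
  have hTn : ‖T‖ ≤ 1 := ContinuousLinearMap.opNorm_le_bound _ zero_le_one (by simpa using hT)
  refine ⟨fun t => NormedSpace.exp (t • A), by simp, ?_, ?_, ?_⟩
  · intro t ht f
    have h1 : t • A = (t * κ) • T + (-(t * κ)) • (1 : E →L[ℝ] E) := by rw [hA]; module
    have h2 : NormedSpace.exp (t • A) = Real.exp (-(t * κ)) • NormedSpace.exp ((t * κ) • T) := by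
      rw [h1, NormedSpace.exp_add_of_commute (((Commute.one_right T).smul_left _).smul_right _)]
      rw [← Algebra.algebraMap_eq_smul_one, ← NormedSpace.algebraMap_exp_comm,
        ← Real.exp_eq_exp_ℝ, Algebra.algebraMap_eq_smul_one]
      simp
    have h3 : ‖NormedSpace.exp ((t * κ) • T)‖ ≤ Real.exp (t * κ) := by
      have hs := NormedSpace.exp_series_hasSum_exp' (𝕂 := ℝ) ((t * κ) • T)
      have hs2 := NormedSpace.exp_series_hasSum_exp' (𝕂 := ℝ) (t * κ)
      rw [← Real.exp_eq_exp_ℝ] at hs2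
      refine hs.norm_le_of_bounded hs2 fun k => ?_
      have hk : 0 ≤ t * κ := by positivity
      rw [norm_smul, smul_pow, norm_smul, Real.norm_eq_abs, abs_of_nonneg (by positivity),
        Real.norm_eq_abs, abs_of_nonneg (by positivity), smul_eq_mul]
      have : ‖T ^ k‖ ≤ 1 := by
        refine ContinuousLinearMap.opNorm_le_bound _ zero_le_one fun f => ?_
        rw [one_mul]
        induction k with
        | zero => simp
        | succ k ih => rw [pow_succ']; exact (hT _).trans ih
      calc _ ≤ (k.factorial : ℝ)⁻¹ * ((t * κ) ^ k * 1) := by gcongr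
        _ = _ := by rw [mul_one]
    simp only
    rw [h2, smul_apply, norm_smul, Real.norm_eq_abs, abs_of_pos (Real.exp_pos _)]
    calc Real.exp (-(t * κ)) * ‖NormedSpace.exp ((t * κ) • T) f‖
        ≤ Real.exp (-(t * κ)) * (Real.exp (t * κ) * ‖f‖) := by
          gcongr; exact ContinuousLinearMap.le_of_opNorm_le _ h3 _
      _ = ‖f‖ := by rw [← mul_assoc, ← Real.exp_add]; simp
  · intro t f
    have h := hasDerivAt_exp_smul_const (𝕂 := ℝ) A t
    have := h.clm_apply (hasDerivAt_const t f)
    simpa [hA] using this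
  · intro t f
    have : Commute T (NormedSpace.exp (t • A)) := by
      apply Commute.exp_right
      apply Commute.smul_right
      rw [hA]
      exact ((Commute.refl T).sub_right (Commute.one_right T)).smul_right _
    exact DFunLike.congr_fun this.eq f

/-! ### The linear parabolic problem with flux data -/

lemma deriv_nonneg_of_left_max {h : ℝ → ℝ} {h' a t : ℝ} (hat : a < t) (hd : HasDerivAt h h' t)
    (hmax : ∀ s ∈ Icc a t, h s ≤ h t) : 0 ≤ h' := by
  by_contra! hneg
  have h1 : ∀ᶠ s in 𝓝[<] t, slope h t s < 0 :=
    ((hasDerivAt_iff_tendsto_slope.1 hd).mono_left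
      (nhdsWithin_mono _ fun s hs => ne_of_lt hs)).eventually (gt_mem_nhds hneg)
  have h2 : ∀ᶠ s in 𝓝[<] t, s ∈ Ioo a t := Ioo_mem_nhdsLT hat
  obtain ⟨s, hs, hs2⟩ := (h1.and h2).exists
  have h3 := hmax s ⟨hs2.1.le, hs2.2.le⟩
  rw [slope_def_field] at hs
  have h4 : 0 ≤ (h s - h t) / (s - t) := div_nonneg_of_nonpos (by linarith) (by linarith [hs2.2])
  linarith

/-- `E`-valued functions of time, with the time interval `[0,τ]` rescaled to `[0,1]`. -/
abbrev CN (E : Type*) [NormedAddCommGroup E] := C(unitInterval, E)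
/-- Functions of rescaled time with values in the radial profiles. -/
abbrev YE := CN CE
/-- Data of the linear problem: initial profile, source, and boundary flux as a function of time. -/
abbrev SData := CE × YE × CE

/-- The operator `q ↦ R ∫₀¹ s^m q(s) ds`, the normal derivative of the potential of `q`. -/
noncomputable def flux (m : ℕ) (R : ℝ) : CE →L[ℝ] ℝ :=
  R • ((ContinuousMap.evalCLM ℝ (1 : unitInterval)).comp (avg m))

lemma flux_apply (m : ℕ) (R : ℝ) (q : CE) : flux m R q = R * avg m q 1 := rfl

/-- Subtract the value at the centre. -/
noncomputable def recenter : CE →L[ℝ] CE :=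
  ContinuousLinearMap.id ℝ CE - (ContinuousMap.evalCLM ℝ (0 : unitInterval)).smulRight (1 : CE)

lemma recenter_apply (U : CE) : recenter U = U - (U 0) • (1 : CE) := rfl

/-- `w` is a classical solution on `[0,τ]`, with time derivative `w'`, of `w_t = Δw + f`, `∂w/∂η =
g`, `w(0) = w₀` for `d = (w₀, f, g)`. The equation is written in the integrated form `w(t) -
w(t)(0) = K (w_t - f)`, so that no spatial derivative of `w` appears. -/
structure Cl (m : ℕ) (R τ : ℝ) (d : SData) (w w' : YE) : Prop where
  evol : ∀ t, w t = d.1 + tint τ w' t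
  ell : ∀ t, recenter (w t) = Kop m R (w' t - d.2.1 t)
  bdry : ∀ t, flux m R (w' t - d.2.1 t) = d.2.2 t

lemma hasDerivAt_tint (τ : ℝ) (w' : YE) (r t : unitInterval) :
    HasDerivAt (fun s => (τ • ∫ x in (0 : ℝ)..s, cext w' x) r) (τ * w' t r) t := by
  have h1 : HasDerivAt (fun s : ℝ => ∫ x in (0 : ℝ)..s, cext w' x) (cext w' t) (t : ℝ) :=
    (continuous_cext w').integral_hasStrictDerivAt 0 (t : ℝ) |>.hasDerivAt
  have h2 := ((ContinuousMap.evalCLM ℝ r : CE →L[ℝ] ℝ).hasFDerivAt.comp_hasDerivAt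
    (t : ℝ) (h1.const_smul τ))
  rw [cext_coe] at h2
  exact h2

/-- Comparison of `w` with a supersolution that is the sum of a constant, a multiple of `betaU` and
a linear function of time. The free parameter `i` makes the coefficient of the flux small for
small `τ`. -/
lemma Cl.upper {m : ℕ} {R τ : ℝ} (hR : 0 < R) (hτ : 0 < τ) {d : SData} {w w' : YE}
    (h : Cl m R τ d w w') (i : ℕ) (t r : unitInterval) :
    w t r ≤ ‖d.1‖ + τ * ‖d.2.1‖ + (R / (i + 2) + τ * ((m + 1 + i) / R)) * ‖d.2.2‖ := by
  set A := ‖d.2.1‖ with hA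
  set Γ := ‖d.2.2‖ with hΓ
  set Q : ℝ := (m + 1 + i) / R with hQ
  have hΓ0 : 0 ≤ Γ := norm_nonneg _
  have key : ∀ δ > 0, ∀ t r : unitInterval,
      w t r - Γ * betaU R i r - τ * t * (A + Γ * Q) ≤ ‖d.1‖ + δ := by
    intro δ hδ t r
    obtain ⟨⟨ts, rs⟩, -, hmax⟩ := (isCompact_univ (X := unitInterval × unitInterval)).exists_isMaxOn
      univ_nonempty
      (f := fun p => w p.1 p.2 - Γ * betaU R i p.2 - τ * p.1 * (A + Γ * Q) - δ * p.1)
      (by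
        apply Continuous.continuousOn
        fun_prop)
    have hmax' : ∀ t r : unitInterval,
        w t r - Γ * betaU R i r - τ * t * (A + Γ * Q) - δ * t ≤
        w ts rs - Γ * betaU R i rs - τ * ts * (A + Γ * Q) - δ * ts :=
      fun t r => hmax (mem_univ (t, r))
    have hb0 := betaU_nonneg hR i rs
    have hts : (ts : ℝ) = 0 := by
      by_contra hne
      have hpos : (0 : ℝ) < ts := lt_of_le_of_ne ts.2.1 (Ne.symm hne)
      have h1 : (w' ts - d.2.1 ts - Γ • betaQ m R i) rs ≤ 0 := by
        apply elliptic_max (m := m) hR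
        · intro r
          have hK : Kop m R (w' ts - d.2.1 ts - Γ • betaQ m R i) =
              recenter (w ts) - Γ • betaU R i := by
            rw [map_sub, map_smul, Kop_betaQ m i hR, h.ell]
          rw [hK, recenter_apply]
          have := hmax' ts r
          simp only [ContinuousMap.sub_apply, ContinuousMap.smul_apply, smul_eq_mul]
          simp only [ContinuousMap.one_apply]
          linarith
        · have h2 := h.bdry ts
          rw [flux_apply] at h2
          have h3 := avg_betaQ m i hR
          rw [map_sub, map_smul, ContinuousMap.sub_apply, ContinuousMap.smul_apply, smul_eq_mul]
          have h4 : d.2.2 ts ≤ Γ := (le_abs_self _).trans (d.2.2.norm_coe_le_norm ts)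
          have h5 : R * (avg m (w' ts - d.2.1 ts) 1 - Γ * avg m (betaQ m R i) 1) ≤ 0 := by
            have : Γ * (R * avg m (betaQ m R i) 1) = Γ := by rw [h3, mul_one]
            linarith
          exact nonpos_of_mul_nonpos_right h5 hR
      simp only [ContinuousMap.sub_apply, ContinuousMap.smul_apply, smul_eq_mul] at h1
      have h2 : d.2.1 ts rs ≤ A :=
        (le_abs_self _).trans (((d.2.1 ts).norm_coe_le_norm rs).trans (d.2.1.norm_coe_le_norm ts))
      have h3 := mul_le_mul_of_nonneg_left (betaQ_le hR m i rs) hΓ0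
      have h4 : w' ts rs ≤ A + Γ * Q := by linarith
      have hd := ((hasDerivAt_tint τ w' rs ts).sub
        ((hasDerivAt_id (ts : ℝ)).const_mul (τ * (A + Γ * Q) + δ)))
      have := deriv_nonneg_of_left_max hpos hd (by
        intro s hs
        have hs1 : s ∈ Icc (0 : ℝ) 1 := ⟨hs.1, hs.2.trans ts.2.2⟩
        have h5 := hmax' ⟨s, hs1⟩ rs
        rw [h.evol, h.evol, tint_apply, tint_apply] at h5
        simp only [ContinuousMap.add_apply] at h5
        simp only [Pi.sub_apply, id]
        linarith)
      nlinarith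
    have h6 := hmax' t r
    rw [hts] at h6
    have h7 : ts = 0 := Subtype.ext hts
    have h8 : w ts rs ≤ ‖d.1‖ := by
      rw [h7, h.evol, tint_apply]
      simpa using (le_abs_self _).trans (d.1.norm_coe_le_norm rs)
    have h9 : δ * (t : ℝ) ≤ δ := mul_le_of_le_one_right hδ.le t.2.2
    have h10 := mul_nonneg hΓ0 hb0
    linarith
  have h1 : w t r - Γ * betaU R i r - τ * t * (A + Γ * Q) ≤ ‖d.1‖ :=
    le_of_forall_pos_le_add fun δ hδ => key δ hδ t r
  have h2 := mul_le_mul_of_nonneg_left (betaU_le hR i r) hΓ0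
  have h3 : τ * t * (A + Γ * Q) ≤ τ * (A + Γ * Q) := by
    have : 0 ≤ A + Γ * Q := by positivity
    have := mul_le_of_le_one_right hτ.le t.2.2
    gcongr
  linarith

lemma Cl.add {m : ℕ} {R τ : ℝ} {d d' : SData} {w w' v v' : YE}
    (h : Cl m R τ d w w') (h' : Cl m R τ d' v v') : Cl m R τ (d + d') (w + v) (w' + v') where
  evol t := by
    rw [map_add, ContinuousMap.add_apply, h.evol, h'.evol, ContinuousMap.add_apply, Prod.fst_add]
    abel
  ell t := by
    rw [ContinuousMap.add_apply, map_add, h.ell, h'.ell, ← map_add]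
    congr 1
    simp only [ContinuousMap.add_apply, Prod.snd_add, Prod.fst_add]
    abel
  bdry t := by
    have : (w' + v') t - (d + d').2.1 t = (w' t - d.2.1 t) + (v' t - d'.2.1 t) := by
      simp only [ContinuousMap.add_apply, Prod.snd_add, Prod.fst_add]; abel
    rw [this, map_add, h.bdry, h'.bdry]; rfl

lemma Cl.smul {m : ℕ} {R τ : ℝ} {d : SData} {w w' : YE}
    (h : Cl m R τ d w w') (c : ℝ) : Cl m R τ (c • d) (c • w) (c • w') where
  evol t := by
    rw [map_smul, ContinuousMap.smul_apply, h.evol, ContinuousMap.smul_apply, Prod.smul_fst,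
      smul_add]
  ell t := by
    rw [ContinuousMap.smul_apply, map_smul, h.ell, ← map_smul, smul_sub]
    rfl
  bdry t := by
    have : (c • w') t - (c • d).2.1 t = c • (w' t - d.2.1 t) := by rw [smul_sub]; rfl
    rw [this, map_smul, h.bdry]; rfl

lemma Cl.norm_le {m : ℕ} {R τ : ℝ} (hR : 0 < R) (hτ : 0 < τ) {d : SData} {w w' : YE}
    (h : Cl m R τ d w w') (i : ℕ) :
    ‖w‖ ≤ ‖d.1‖ + τ * ‖d.2.1‖ + (R / (i + 2) + τ * ((m + 1 + i) / R)) * ‖d.2.2‖ := by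
  have h0 : 0 ≤ ‖d.1‖ + τ * ‖d.2.1‖ + (R / (i + 2) + τ * ((m + 1 + i) / R)) * ‖d.2.2‖ := by
    positivity
  rw [ContinuousMap.norm_le _ h0]
  intro t
  rw [ContinuousMap.norm_le _ h0]
  intro r
  rw [Real.norm_eq_abs, abs_le]
  refine ⟨?_, h.upper hR hτ i t r⟩
  have := (h.smul (-1)).upper hR hτ i t r
  simp only [neg_smul, one_smul, Prod.fst_neg, Prod.snd_neg, norm_neg, ContinuousMap.neg_apply]
    at this
  linarith

/-- The pairs of a datum and a classical solution for it. -/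
noncomputable def clSub (m : ℕ) (R τ : ℝ) : Submodule ℝ (SData × YE) where
  carrier := {x | ∃ w', Cl m R τ x.1 x.2 w'}
  add_mem' := fun ⟨_, h⟩ ⟨_, h'⟩ => ⟨_, h.add h'⟩
  zero_mem' := ⟨0, by constructor <;> simp⟩
  smul_mem' := fun c _ ⟨_, h⟩ => ⟨_, h.smul c⟩

/-- The pairs of a datum and a generalised solution, that is, the closure of the pairs with a
classical solution. -/
noncomputable def genSub (m : ℕ) (R τ : ℝ) : Submodule ℝ (SData × YE) :=
  (clSub m R τ).topologicalClosure

lemma closure_bound {A B C W : Type*} [NormedAddCommGroup A] [NormedAddCommGroup B]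
    [NormedAddCommGroup C] [NormedAddCommGroup W] {s : Set ((A × B × C) × W)} {a b : ℝ}
    (h : ∀ x ∈ s, ‖x.2‖ ≤ ‖x.1.1‖ + a * ‖x.1.2.1‖ + b * ‖x.1.2.2‖) :
    ∀ x ∈ closure s, ‖x.2‖ ≤ ‖x.1.1‖ + a * ‖x.1.2.1‖ + b * ‖x.1.2.2‖ := by
  have hc : IsClosed {x : (A × B × C) × W | ‖x.2‖ ≤ ‖x.1.1‖ + a * ‖x.1.2.1‖ + b * ‖x.1.2.2‖} :=
    isClosed_le (by fun_prop) (by fun_prop)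
  exact fun x hx => closure_minimal (s := s) h hc hx

lemma genSub_norm_le {m : ℕ} {R τ : ℝ} (hR : 0 < R) (hτ : 0 < τ) {d : SData} {w : YE}
    (h : (d, w) ∈ genSub m R τ) (i : ℕ) :
    ‖w‖ ≤ ‖d.1‖ + τ * ‖d.2.1‖ + (R / (i + 2) + τ * ((m + 1 + i) / R)) * ‖d.2.2‖ :=
  closure_bound (s := (clSub m R τ : Set (SData × YE)))
    (by rintro x ⟨w', hx⟩; exact hx.norm_le hR hτ i) (d, w) h

/-- The data solved by the time integral of a solution with data `d`. -/
noncomputable def intData (τ : ℝ) (d : SData) : SData :=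
  (0, ContinuousMap.const _ d.1 + tint τ d.2.1, tint τ d.2.2)

lemma clm_tint {E F : Type*} [NormedAddCommGroup E] [NormedSpace ℝ E] [CompleteSpace E]
    [NormedAddCommGroup F] [NormedSpace ℝ F] [CompleteSpace F]
    (L : E →L[ℝ] F) (τ : ℝ) (q : C(unitInterval, E)) (p : C(unitInterval, F))
    (h : ∀ t, L (q t) = p t) (t : unitInterval) : L (tint τ q t) = tint τ p t := by
  rw [tint_apply, tint_apply, map_smul, ← L.intervalIntegral_comp_comm
    ((continuous_cext q).intervalIntegrable _ _)]
  congr 2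
  ext s
  exact h _

lemma Cl.int {m : ℕ} {R τ : ℝ} {d : SData} {w w' : YE}
    (h : Cl m R τ d w w') : Cl m R τ (intData τ d) (tint τ w) w := by
  have h1 : ∀ t, w t - (intData τ d).2.1 t = tint τ (w' - d.2.1) t := by
    intro t
    rw [h.evol, map_sub]
    simp only [intData, ContinuousMap.add_apply, ContinuousMap.const_apply,
      ContinuousMap.sub_apply]
    abel
  constructor
  · intro t; simp [intData]
  · intro t
    rw [h1, clm_tint recenter τ w
      ((Kop m R : C(CE, CE)).comp (w' - d.2.1)) h.ell t]
    exact (clm_tint (Kop m R) τ (w' - d.2.1) _ (fun _ => rfl) t).symm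
  · intro t
    rw [h1]
    exact clm_tint (flux m R) τ (w' - d.2.1) d.2.2 h.bdry t

/-- The time integral of a generalised solution is a classical solution. -/
lemma genSub_int {m : ℕ} {R τ : ℝ} {d : SData} {w : YE}
    (h : (d, w) ∈ genSub m R τ) : Cl m R τ (intData τ d) (tint τ w) w := by
  have hc : IsClosed {x : SData × YE | (∀ t, recenter (tint τ x.2 t) =
      Kop m R (x.2 t - (x.1.1 + tint τ x.1.2.1 t))) ∧
      ∀ t, flux m R (x.2 t - (x.1.1 + tint τ x.1.2.1 t)) = tint τ x.1.2.2 t} := by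
    simp only [ofPred_and, ofPred_forall]
    refine IsClosed.inter (isClosed_iInter fun t => isClosed_eq ?_ ?_)
      (isClosed_iInter fun t => isClosed_eq ?_ ?_) <;> fun_prop
  have := closure_minimal (s := (clSub m R τ : Set (SData × YE)))
    (by rintro x ⟨w', hx⟩; exact ⟨hx.int.ell, hx.int.bdry⟩) hc h
  exact ⟨fun t => by simp [intData], this.1, this.2⟩

/-- The data for which there is a generalised solution. -/
noncomputable def datSub (m : ℕ) (R τ : ℝ) : Submodule ℝ SData :=
  (genSub m R τ).map (LinearMap.fst ℝ SData YE)

lemma mem_datSub {m : ℕ} {R τ : ℝ} {d : SData} :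
    d ∈ datSub m R τ ↔ ∃ w, (d, w) ∈ genSub m R τ := by
  constructor
  · rintro ⟨⟨d', w⟩, h, rfl⟩; exact ⟨w, h⟩
  · rintro ⟨w, h⟩; exact ⟨_, h, rfl⟩

/-- By the a-priori estimate, convergence of the data forces convergence of the solutions. -/
lemma isClosed_datSub {m : ℕ} {R τ : ℝ} (hR : 0 < R) (hτ : 0 < τ) :
    IsClosed (datSub m R τ : Set SData) := by
  set C : ℝ := 1 + τ + (R / ((0 : ℕ) + 2) + τ * ((m + 1 + (0 : ℕ)) / R)) with hC
  have hC1 : 0 ≤ C := by positivity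
  have hC2 : 1 ≤ C := by rw [hC, add_assoc]; exact le_add_of_nonneg_right (by positivity)
  have hcl : IsClosed (genSub m R τ : Set (SData × YE)) := Submodule.isClosed_topologicalClosure _
  have : CompleteSpace (genSub m R τ) := hcl.completeSpace_coe
  set pr : genSub m R τ →ₗ[ℝ] SData := (LinearMap.fst ℝ SData YE).comp (genSub m R τ).subtype with hpr
  have hanti : AntilipschitzWith C.toNNReal pr := by
    refine AddMonoidHomClass.antilipschitz_of_bound pr fun x => ?_
    rw [Real.coe_toNNReal _ hC1]
    obtain ⟨⟨d, w⟩, hx⟩ := x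
    have h1 := genSub_norm_le hR hτ hx 0
    have e1 : ‖d.1‖ ≤ ‖d‖ := norm_fst_le d
    have e2 : ‖d.2.1‖ ≤ ‖d‖ := (norm_fst_le _).trans (norm_snd_le d)
    have e3 : ‖d.2.2‖ ≤ ‖d‖ := (norm_snd_le _).trans (norm_snd_le d)
    have h2 : ‖w‖ ≤ C * ‖d‖ := by
      refine h1.trans ?_
      rw [hC, add_mul (1 + τ), add_mul 1, one_mul]
      gcongr
    change max ‖d‖ ‖w‖ ≤ C * ‖d‖
    exact max_le (le_mul_of_one_le_left (norm_nonneg _) hC2) h2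
  have h3 : UniformContinuous pr := by
    have : pr = (((ContinuousLinearMap.fst ℝ SData YE).comp (genSub m R τ).subtypeL :
      genSub m R τ →L[ℝ] SData) : genSub m R τ →ₗ[ℝ] SData) := rfl
    rw [this]
    exact ContinuousLinearMap.uniformContinuous _
  have := hanti.isClosed_range h3
  have hset : (datSub m R τ : Set SData) = range pr := by
    ext d
    rw [SetLike.mem_coe, mem_datSub]
    constructor
    · rintro ⟨w, h⟩; exact ⟨⟨_, h⟩, rfl⟩
    · rintro ⟨⟨⟨d', w⟩, h⟩, rfl⟩; exact ⟨w, h⟩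
  rw [hset]
  exact this

lemma datSub_int {m : ℕ} {R τ : ℝ} {d : SData} (h : d ∈ datSub m R τ) :
    intData τ d ∈ datSub m R τ := by
  obtain ⟨w, h⟩ := mem_datSub.1 h
  exact mem_datSub.2 ⟨_, Submodule.le_topologicalClosure _ ⟨_, genSub_int h⟩⟩

/-- Solvability of the homogeneous problem with initial value in the domain of `Δ²`: the semigroups
generated by the Yosida approximations, applied to `J U`, are classical solutions with a source
that vanishes in the limit. -/
lemma datSub_dom2 {m : ℕ} {R τ : ℝ} (hR : 0 < R) (hτ : 0 < τ) {U q q' : CE} (hU : Dom m R U q)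
    (hq : Dom m R q q') : ((U, 0, 0) : SData) ∈ datSub m R τ := by
  choose J hJ using fun k : ℕ => exists_resolvent m hR (κ := (k : ℝ) + 1) (by positivity)
  have hk : ∀ k : ℕ, (0 : ℝ) < (k : ℝ) + 1 := fun k => by positivity
  have hJn := fun k => resolvent_norm_le hR (hk k) (hJ k)
  choose S hS0 hSn hSd hSc using fun k : ℕ => exists_semigroup (J k) (hJn k) (hk k).le
  have hScont : ∀ k f, Continuous fun t => S k t f := fun k f =>
    continuous_iff_continuousAt.2 fun t => (hSd k t f).continuousAt
  set F : ℕ → YE := fun k => ⟨fun t => ((k : ℝ) + 1)⁻¹ • S k (τ * t) (J k (J k q')), by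
    have := hScont k (J k (J k q'))
    fun_prop⟩ with hF
  have hmem : ∀ k, ((J k U, F k, 0) : SData) ∈ datSub m R τ := by
    intro k
    have c1 := hScont k (J k U)
    have c2 := hScont k (J k (J k q))
    rw [mem_datSub]
    refine ⟨⟨fun t => S k (τ * t) (J k U), by fun_prop⟩,
      Submodule.le_topologicalClosure _ ⟨⟨fun t => S k (τ * t) (J k (J k q)), by fun_prop⟩, ?_⟩⟩
    have hdom : ∀ t : unitInterval, Dom m R (S k (τ * t) (J k U))
        (S k (τ * t) (J k (J k q)) - F k t) := by
      intro t
      have := hJ k (S k (τ * t) U)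
      rw [hSc] at this
      have h1 : S k (τ * t) (J k (J k q)) - F k t = S k (τ * t) (J k q) := by
        have h2 := resolvent_yosida hR (hk k) (hJ k) hq
        simp only [hF, ContinuousMap.coe_mk]
        rw [← h2, map_smul, map_smul, smul_smul, inv_mul_cancel₀ (hk k).ne', one_smul, map_sub,
          map_sub]
        abel
      rw [h1, ← resolvent_yosida hR (hk k) (hJ k) hU, map_smul, map_sub]
      exact this
    constructor
    · intro t
      rw [tint_apply]
      have hder : ∀ s : ℝ, HasDerivAt (fun s => S k (τ * s) (J k U))
          (τ • S k (τ * s) (J k (J k q))) s := by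
        intro s
        have h1 := hSd k (τ * s) (J k U)
        rw [← map_sub, ← map_smul, resolvent_yosida hR (hk k) (hJ k) hU] at h1
        have h2 := h1.scomp s ((hasDerivAt_id s).const_mul τ)
        simp only [mul_one] at h2
        exact h2
      have h3 := intervalIntegral.integral_eq_sub_of_hasDerivAt (a := 0) (b := (t : ℝ))
        (fun s _ => hder s) (Continuous.intervalIntegrable (by fun_prop) _ _)
      rw [mul_zero, hS0, intervalIntegral.integral_smul] at h3
      have h4 : ∫ s in (0 : ℝ)..t, cext (⟨fun t => S k (τ * t) (J k (J k q)), by fun_prop⟩ : YE) s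
          = ∫ s in (0 : ℝ)..t, S k (τ * s) (J k (J k q)) := by
        apply intervalIntegral.integral_congr
        intro s hs
        rw [uIcc_of_le t.2.1] at hs
        simp only
        rw [cext_of_mem _ ⟨hs.1, hs.2.trans t.2.2⟩]
        rfl
      rw [h4, h3]
      simp
    · intro t
      have := (hdom t).1
      rw [recenter_apply, sub_eq_iff_eq_add, add_comm]
      exact this
    · intro t
      have := (hdom t).2
      rw [flux_apply]
      change R * avg m (S k (τ * t) (J k (J k q)) - F k t) 1 = 0
      rw [this, mul_zero]
  have h0 : ∀ c : ℝ, Tendsto (fun k : ℕ => c / ((k : ℝ) + 1)) atTop (𝓝 0) := fun c =>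
    Tendsto.div_atTop tendsto_const_nhds
      (tendsto_atTop_add_const_right _ _ tendsto_natCast_atTop_atTop)
  have hlim1 : Tendsto (fun k => J k U) atTop (𝓝 U) := by
    rw [tendsto_iff_norm_sub_tendsto_zero]
    refine squeeze_zero (fun _ => norm_nonneg _) (fun k => ?_) (h0 ‖q‖)
    have := resolvent_yosida hR (hk k) (hJ k) hU
    have h2 := hJn k q
    rw [← this, norm_smul, Real.norm_eq_abs, abs_of_pos (hk k)] at h2
    rw [le_div_iff₀ (hk k)]; linarith
  have hlim2 : Tendsto F atTop (𝓝 0) := by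
    apply tendsto_zero_iff_norm_tendsto_zero.2
    refine squeeze_zero (fun _ => norm_nonneg _) (fun k => ?_) (h0 ‖q'‖)
    rw [ContinuousMap.norm_le _ (by positivity)]
    intro t
    have ht : 0 ≤ τ * t := mul_nonneg hτ.le t.2.1
    change ‖((k : ℝ) + 1)⁻¹ • S k (τ * t) (J k (J k q'))‖ ≤ _
    rw [norm_smul, Real.norm_eq_abs, abs_of_pos (inv_pos.2 (hk k)), div_eq_inv_mul]
    gcongr
    exact (hSn k _ ht _).trans ((hJn k _).trans (hJn k _))
  exact (isClosed_datSub hR hτ).mem_of_tendsto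
    (hlim1.prodMk_nhds (hlim2.prodMk_nhds tendsto_const_nhds)) (Eventually.of_forall hmem)

lemma tint_pow {F : Type*} [NormedAddCommGroup F] [NormedSpace ℝ F] [CompleteSpace F]
    (τ : ℝ) (j : ℕ) (b : F) :
    tint τ (⟨fun t => (t : ℝ) ^ j • b, by fun_prop⟩ : C(unitInterval, F)) =
      (τ / (j + 1)) • (⟨fun t => (t : ℝ) ^ (j + 1) • b, by fun_prop⟩ : C(unitInterval, F)) := by
  ext t
  rw [tint_apply]
  have : ∫ s in (0 : ℝ)..t, cext (⟨fun t => (t : ℝ) ^ j • b, by fun_prop⟩ : C(unitInterval, F)) s =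
      ∫ s in (0 : ℝ)..t, s ^ j • b := by
    apply intervalIntegral.integral_congr
    intro s hs
    rw [uIcc_of_le t.2.1] at hs
    simp only
    rw [cext_of_mem _ ⟨hs.1, hs.2.trans t.2.2⟩]
    rfl
  rw [this, intervalIntegral.integral_smul_const, integral_pow, zero_pow (by omega)]
  simp only [ContinuousMap.smul_apply, ContinuousMap.coe_mk, smul_smul]
  congr 1
  ring

/-- Every datum admits a generalised solution. Homogeneous problems are solvable by density of the
domain of `Δ²`; repeated integration in time then provides all data polynomial in time. -/
lemma datSub_eq_top {m : ℕ} {R τ : ℝ} (hR : 0 < R) (hτ : 0 < τ) (d : SData) :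
    d ∈ datSub m R τ := by
  set D := datSub m R τ with hD
  have hDc : IsClosed (D : Set SData) := isClosed_datSub hR hτ
  have h1 : ∀ U : CE, ((U, 0, 0) : SData) ∈ D := by
    set L : CE →L[ℝ] SData := ContinuousLinearMap.inl ℝ CE (YE × CE) with hL
    exact dom2_dense (m := m) hR (D.comap (L : CE →ₗ[ℝ] SData)) (hDc.preimage L.continuous)
      fun U q q' hU hq => datSub_dom2 hR hτ hU hq
  have h2 : ∀ (j : ℕ) (b : CE),
      ((0, (⟨fun t => (t : ℝ) ^ j • b, by fun_prop⟩ : YE), 0) : SData) ∈ D := by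
    intro j b
    induction j with
    | zero =>
      have := datSub_int (h1 b)
      convert this using 1
      simp only [intData, map_zero, add_zero]
      congr 2
      ext t; simp
    | succ j ih =>
      have := D.smul_mem ((j + 1) / τ) (datSub_int ih)
      convert this using 1
      simp only [intData, map_zero, tint_pow, Prod.smul_mk, smul_zero]
      congr 2
      ext t
      simp only [ContinuousMap.smul_apply, ContinuousMap.add_apply, ContinuousMap.const_apply,
        ContinuousMap.coe_mk, smul_eq_mul, zero_add]
      field_simp
  have h3 : ∀ f : YE, ((0, f, 0) : SData) ∈ D := by
    set L : YE →L[ℝ] SData := (ContinuousLinearMap.inr ℝ CE (YE × CE)).comp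
      (ContinuousLinearMap.inl ℝ YE CE) with hL
    exact poly_dense (D.comap (L : YE →ₗ[ℝ] SData)) (hDc.preimage L.continuous) h2
  have h4 : ((betaU R 0, -ContinuousMap.const _ (betaQ m R 0), 1) : SData) ∈ D := by
    rw [mem_datSub]
    refine ⟨ContinuousMap.const _ (betaU R 0), Submodule.le_topologicalClosure _ ⟨0, ?_⟩⟩
    constructor
    · intro t; simp
    · intro t
      simp only [ContinuousMap.const_apply, recenter_apply, betaU_zero]
      rw [← Kop_betaQ m 0 hR]
      simp
    · intro t
      rw [flux_apply]
      simp [avg_betaQ m 0 hR]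
  have h5 : ((0, 0, 1) : SData) ∈ D := by
    have := D.sub_mem h4 (D.add_mem (h1 (betaU R 0)) (h3 (-ContinuousMap.const _ (betaQ m R 0))))
    simpa using this
  have h6 : ∀ (j : ℕ) (b : ℝ),
      ((0, 0, (⟨fun t => (t : ℝ) ^ j • b, by fun_prop⟩ : CE)) : SData) ∈ D := by
    intro j b
    induction j with
    | zero =>
      have := D.smul_mem b h5
      convert this using 1
      simp only [Prod.smul_mk, smul_zero]
      congr 2
      ext t; simp
    | succ j ih =>
      have := D.smul_mem ((j + 1) / τ) (datSub_int ih)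
      convert this using 1
      simp only [intData, map_zero, tint_pow, Prod.smul_mk, smul_zero]
      congr 2
      · ext t; simp
      ext t
      simp only [ContinuousMap.smul_apply, 
        ContinuousMap.coe_mk, smul_eq_mul]
      field_simp
  have h7 : ∀ g : CE, ((0, 0, g) : SData) ∈ D := by
    set L : CE →L[ℝ] SData := (ContinuousLinearMap.inr ℝ CE (YE × CE)).comp
      (ContinuousLinearMap.inr ℝ YE CE) with hL
    exact poly_dense (D.comap (L : CE →ₗ[ℝ] SData)) (hDc.preimage L.continuous) h6
  obtain ⟨w0, f, g⟩ := d
  have := D.add_mem (h1 w0) (D.add_mem (h3 f) (h7 g))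
  simpa using this

/-! ### Local existence for the radial system -/

/-- A fixed point theorem for a map that contracts up to an error controlled by a weaker
seminorm `‖T ·‖`, which is itself contracted. -/
lemma exists_fixed {E : Type*} [NormedAddCommGroup E] [NormedSpace ℝ E] [CompleteSpace E]
    (T : E →L[ℝ] E) {P : Set E} (hP : IsClosed P) {x0 : E} (hx0 : x0 ∈ P) (Ψ : E → E)
    (hΨ : MapsTo Ψ P P) {c : ℝ} (hc : 0 ≤ c)
    (h1 : ∀ x ∈ P, ∀ y ∈ P, ‖Ψ x - Ψ y‖ ≤ 1 / 2 * ‖x - y‖ + c * ‖T (x - y)‖)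
    (h2 : ∀ x ∈ P, ∀ y ∈ P, ‖T (Ψ x - Ψ y)‖ ≤ 1 / 2 * ‖T (x - y)‖) :
    ∃ x ∈ P, Ψ x = x := by
  set s : ℕ → E := fun k => Ψ^[k] x0 with hs
  have hs1 : ∀ k, s (k + 1) = Ψ (s k) := fun k => Function.iterate_succ_apply' _ _ _
  have hsP : ∀ k, s k ∈ P := by
    intro k
    induction k with
    | zero => exact hx0
    | succ k ih => rw [hs1]; exact hΨ ih
  set a := ‖T (s 1 - s 0)‖ with ha
  set C := ‖s 1 - s 0‖ + 4 * (c * a) with hC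
  have ha0 : 0 ≤ a := norm_nonneg _
  have hca : 0 ≤ c * a := by positivity
  have hT : ∀ k, ‖T (s (k + 1) - s k)‖ ≤ a * (1 / 2) ^ k := by
    intro k
    induction k with
    | zero => simp [ha]
    | succ k ih =>
      have := h2 _ (hsP (k + 1)) _ (hsP k)
      rw [← hs1, ← hs1] at this
      calc _ ≤ _ := this
        _ ≤ 1 / 2 * (a * (1 / 2) ^ k) := by gcongr
        _ = _ := by ring
  have hd : ∀ k, ‖s (k + 1) - s k‖ ≤ C * (3 / 4) ^ k := by
    intro k
    induction k with
    | zero => simp [hC]; linarith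
    | succ k ih =>
      have := h1 _ (hsP (k + 1)) _ (hsP k)
      rw [← hs1, ← hs1] at this
      have hpow : (1 / 2 : ℝ) ^ k ≤ (3 / 4) ^ k :=
        pow_le_pow_left₀ (by norm_num) (by norm_num) k
      calc _ ≤ _ := this
        _ ≤ 1 / 2 * (C * (3 / 4) ^ k) + c * (a * (1 / 2) ^ k) := by gcongr; exact hT k
        _ ≤ 1 / 2 * (C * (3 / 4) ^ k) + c * (a * (3 / 4) ^ k) := by gcongr
        _ = (1 / 2 * C + c * a) * (3 / 4) ^ k := by ring
        _ ≤ (3 / 4 * C) * (3 / 4) ^ k := by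
            gcongr
            have := norm_nonneg (s 1 - s 0)
            rw [hC]; linarith
        _ = _ := by ring
  have hcau : CauchySeq s := cauchySeq_of_le_geometric (3 / 4) C (by norm_num) fun k => by
    rw [dist_comm, dist_eq_norm]; exact hd k
  obtain ⟨x, hx⟩ := cauchySeq_tendsto_of_complete hcau
  have hxP : x ∈ P := hP.mem_of_tendsto hx (Eventually.of_forall hsP)
  refine ⟨x, hxP, ?_⟩
  have hlim1 : Tendsto (fun k => s (k + 1)) atTop (𝓝 x) := hx.comp (tendsto_add_atTop_nat 1)
  have hlim2 : Tendsto (fun k => s (k + 1)) atTop (𝓝 (Ψ x)) := by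
    rw [tendsto_iff_norm_sub_tendsto_zero]
    have h3 : Tendsto (fun k => 1 / 2 * ‖s k - x‖ + c * ‖T (s k - x)‖) atTop (𝓝 0) := by
      have e1 : Tendsto (fun k => s k - x) atTop (𝓝 0) := by simpa using hx.sub_const x
      have e2 := ((T.continuous.tendsto 0).comp e1).norm
      have e3 := (e1.norm.const_mul (1 / 2)).add (e2.const_mul c)
      simpa using e3
    refine squeeze_zero (fun _ => norm_nonneg _) (fun k => ?_) h3
    rw [hs1]
    exact h1 _ (hsP k) _ hxP
  exact tendsto_nhds_unique hlim2 hlim1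

/-- Pointwise exponential of a radial profile. -/
noncomputable def expE (U : CE) : CE := ⟨fun r => Real.exp (U r), by fun_prop⟩

lemma continuous_expE : Continuous expE :=
  (⟨Real.exp, Real.continuous_exp⟩ : C(ℝ, ℝ)).continuous_postcomp

/-- Pointwise exponential of a function of time and radius. -/
noncomputable def expY (v : YE) : YE := ⟨fun t => expE (v t), continuous_expE.comp v.continuous⟩

lemma expY_apply (v : YE) (t r : unitInterval) : expY v t r = Real.exp (v t r) := rfl

/-- The trace on the boundary `r = 1`. -/
noncomputable def bdY (v : YE) : CE :=
  ⟨fun t => v t 1, (ContinuousMap.evalCLM ℝ (1 : unitInterval) : CE →L[ℝ] ℝ).continuous.comp v.continuous⟩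

lemma bdY_apply (v : YE) (t : unitInterval) : bdY v t = v t 1 := rfl

lemma YE_norm_le {w : YE} {C : ℝ} (hC : 0 ≤ C) (h : ∀ t r, |w t r| ≤ C) : ‖w‖ ≤ C := by
  rw [ContinuousMap.norm_le _ hC]
  intro t
  rw [ContinuousMap.norm_le _ hC]
  exact h t

lemma YE_apply_le (w : YE) (t r : unitInterval) : |w t r| ≤ ‖w‖ :=
  ((w t).norm_coe_le_norm r).trans (w.norm_coe_le_norm t)

lemma norm_bdY_le (w : YE) : ‖bdY w‖ ≤ ‖w‖ := by
  rw [ContinuousMap.norm_le _ (norm_nonneg _)]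
  exact fun t => YE_apply_le w t 1

lemma bdY_sub (a b : YE) : bdY a - bdY b = bdY (a - b) := rfl

lemma norm_expY_le {v : YE} {C : ℝ} (h : ‖v‖ ≤ C) : ‖expY v‖ ≤ Real.exp C :=
  YE_norm_le (Real.exp_pos _).le fun t r => by
    rw [expY_apply, abs_of_pos (Real.exp_pos _)]
    exact Real.exp_le_exp.2 ((le_abs_self _).trans ((YE_apply_le v t r).trans h))

lemma abs_exp_sub_le {a b C : ℝ} (ha : a ≤ C) (hb : b ≤ C) :
    |Real.exp a - Real.exp b| ≤ Real.exp C * |a - b| := by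
  wlog hab : b ≤ a generalizing a b
  · rw [abs_sub_comm, abs_sub_comm a]; exact this hb ha (le_of_not_ge hab)
  rw [abs_of_nonneg (sub_nonneg.2 (Real.exp_le_exp.2 hab)), abs_of_nonneg (sub_nonneg.2 hab)]
  have h1 : 1 + (b - a) ≤ Real.exp (b - a) := by linarith [Real.add_one_le_exp (b - a)]
  have h2 : Real.exp b = Real.exp a * Real.exp (b - a) := by rw [← Real.exp_add]; ring_nf
  have h3 : Real.exp a ≤ Real.exp C := Real.exp_le_exp.2 ha
  have h4 := Real.exp_pos a
  rw [h2]
  nlinarith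

lemma norm_expY_sub_le {v v' : YE} {C : ℝ} (h : ‖v‖ ≤ C) (h' : ‖v'‖ ≤ C) :
    ‖expY v - expY v'‖ ≤ Real.exp C * ‖v - v'‖ := by
  refine YE_norm_le (by positivity) fun t r => ?_
  have := abs_exp_sub_le ((le_abs_self _).trans ((YE_apply_le v t r).trans h))
    ((le_abs_self _).trans ((YE_apply_le v' t r).trans h'))
  refine this.trans ?_
  gcongr
  exact YE_apply_le (v - v') t r

lemma norm_expY_mul_le {v z : YE} {C : ℝ} (h : ‖v‖ ≤ C) :
    ‖expY v * z‖ ≤ Real.exp C * ‖z‖ := by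
  refine YE_norm_le (by positivity) fun t r => ?_
  change |expY v t r * z t r| ≤ _
  rw [abs_mul]
  exact mul_le_mul ((YE_apply_le _ t r).trans (norm_expY_le h)) (YE_apply_le _ t r) (abs_nonneg _)
    (Real.exp_pos _).le

lemma norm_expY_mul_sub_le {v v' z z' : YE} {C B : ℝ} (h : ‖v‖ ≤ C) (h' : ‖v'‖ ≤ C)
    (hz : ‖z‖ ≤ B) :
    ‖expY v * z - expY v' * z'‖ ≤ Real.exp C * ‖z - z'‖ + Real.exp C * B * ‖v - v'‖ := by
  have hB : 0 ≤ B := (norm_nonneg _).trans hz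
  refine YE_norm_le (by positivity) fun t r => ?_
  have e1 : |Real.exp (v t r) - Real.exp (v' t r)| ≤ Real.exp C * ‖v - v'‖ :=
    (YE_apply_le (expY v - expY v') t r).trans (norm_expY_sub_le h h')
  have e2 : |z t r - z' t r| ≤ ‖z - z'‖ := YE_apply_le (z - z') t r
  have e3 : |z t r| ≤ B := (YE_apply_le z t r).trans hz
  have e4 : |Real.exp (v' t r)| ≤ Real.exp C := (YE_apply_le (expY v') t r).trans (norm_expY_le h')
  change |Real.exp (v t r) * z t r - Real.exp (v' t r) * z' t r| ≤ _
  calc _ = |Real.exp (v' t r) * (z t r - z' t r) +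
        (Real.exp (v t r) - Real.exp (v' t r)) * z t r| := by ring_nf
    _ ≤ |Real.exp (v' t r)| * |z t r - z' t r| +
        |Real.exp (v t r) - Real.exp (v' t r)| * |z t r| := by
      rw [← abs_mul, ← abs_mul]; exact abs_add_le _ _
    _ ≤ Real.exp C * ‖z - z'‖ + (Real.exp C * ‖v - v'‖) * B := by gcongr
    _ = _ := by ring

/-- The fundamental theorem of calculus for `e^v`, where `v_t = z` and `v(0) = V0`. -/
lemma tint_exp (τ : ℝ) (V0 : CE) (z : YE) (t r : unitInterval) :
    tint τ (expY (ContinuousMap.const _ V0 + tint τ z) * z) t r =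
      Real.exp ((ContinuousMap.const unitInterval V0 + tint τ z) t r) - Real.exp (V0 r) := by
  set v := ContinuousMap.const unitInterval V0 + tint τ z with hv
  have hc : ((ContinuousMap.evalCLM ℝ r : CE →L[ℝ] ℝ) (tint τ (expY v * z) t)) =
      tint τ ((⟨fun U : CE => U r, (ContinuousMap.evalCLM ℝ r : CE →L[ℝ] ℝ).continuous⟩ : C(CE, ℝ)).comp
        (expY v * z)) t := clm_tint _ _ _ _ (fun _ => rfl) t
  refine Eq.trans hc ?_
  rw [tint_apply]
  have hv' : ∀ s : unitInterval, v s r = V0 r + (τ • ∫ x in (0 : ℝ)..s, cext z x) r := by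
    intro s
    rw [hv, ContinuousMap.add_apply, ContinuousMap.add_apply, tint_apply]; rfl
  have hder : ∀ s ∈ uIcc (0 : ℝ) t, HasDerivAt
      (fun s => Real.exp (V0 r + (τ • ∫ x in (0 : ℝ)..s, cext z x) r))
      (τ * cext ((⟨fun U : CE => U r, (ContinuousMap.evalCLM ℝ r : CE →L[ℝ] ℝ).continuous⟩ : C(CE, ℝ)).comp
        (expY v * z)) s) s := by
    intro s hs
    rw [uIcc_of_le t.2.1] at hs
    have hs1 : s ∈ Icc (0 : ℝ) 1 := ⟨hs.1, hs.2.trans t.2.2⟩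
    have h1 := ((hasDerivAt_tint τ z r ⟨s, hs1⟩).const_add (V0 r)).exp
    convert h1 using 1
    rw [cext_of_mem _ hs1]
    change τ * (Real.exp (v ⟨s, hs1⟩ r) * z ⟨s, hs1⟩ r) = _
    rw [hv']
    ring
  have h3 := intervalIntegral.integral_eq_sub_of_hasDerivAt hder
    (Continuous.intervalIntegrable (continuous_const.mul (continuous_cext _)) _ _)
  rw [intervalIntegral.integral_const_mul] at h3
  rw [smul_eq_mul, h3, hv']
  simp

lemma tint_bdY (τ : ℝ) (f : YE) (t : unitInterval) : tint τ (bdY f) t = tint τ f t 1 :=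
  (clm_tint (ContinuousMap.evalCLM ℝ (1 : unitInterval) : CE →L[ℝ] ℝ) τ f (bdY f)
    (fun _ => rfl) t).symm

/-- If `w` is the generalised solution of the differentiated problem, then its time integral is
a classical solution. -/
lemma genSub_exp {m : ℕ} {R τ lam : ℝ} {U0 q0 V0 : CE} {z w : YE}
    (hU : recenter U0 = Kop m R q0) (hq : flux m R q0 = Real.exp (V0 1))
    (hw : (((q0 + lam • expE V0, lam • (expY (ContinuousMap.const _ V0 + tint τ z) * z),
      bdY (expY (ContinuousMap.const _ V0 + tint τ z) * z)) : SData), w) ∈ genSub m R τ) :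
    Cl m R τ (U0, lam • expY (ContinuousMap.const _ V0 + tint τ z),
      bdY (expY (ContinuousMap.const _ V0 + tint τ z)))
      (ContinuousMap.const _ U0 + tint τ w) w := by
  set v := ContinuousMap.const unitInterval V0 + tint τ z with hv
  have h := genSub_int hw
  have e1 : ∀ t, w t - (intData τ ((q0 + lam • expE V0, lam • (expY v * z),
      bdY (expY v * z)) : SData)).2.1 t = w t - (lam • expY v) t - q0 := by
    intro t
    simp only [intData, map_smul]
    ext r
    have := tint_exp τ V0 z t r
    rw [← hv] at this
    simp only [ContinuousMap.add_apply, ContinuousMap.sub_apply, ContinuousMap.smul_apply,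
      ContinuousMap.const_apply, this, smul_eq_mul, expY_apply]
    change w t r - (q0 r + lam * Real.exp (V0 r) + _) = _
    ring
  constructor
  · intro t; rfl
  · intro t
    have h2 := h.ell t
    rw [e1, map_sub] at h2
    rw [ContinuousMap.add_apply, map_add, h2, ContinuousMap.const_apply, hU]
    simp
  · intro t
    have h2 := h.bdry t
    rw [e1, map_sub, hq] at h2
    have h3 := tint_bdY τ (expY v * z) t
    have h4 := tint_exp τ V0 z t 1
    rw [← hv] at h4
    rw [h4] at h3
    simp only [intData] at h2
    rw [h3, sub_left_inj] at h2
    exact h2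

/-- With `i` large and then `τ` small, the solution operator of the linear problem composed with an
exponential nonlinearity of Lipschitz constant `e^C` halves norms. -/
lemma exists_step (m : ℕ) {R : ℝ} (hR : 0 < R) {lam1 lam2 : ℝ} (h1 : 0 < lam1) (h2 : 0 < lam2)
    (C : ℝ) : ∃ τ : ℝ, 0 < τ ∧ ∃ i : ℕ,
      (τ * lam1 + (R / (i + 2) + τ * ((m + 1 + i) / R))) * Real.exp C ≤ 1 / 2 ∧
      (τ * lam2 + (R / (i + 2) + τ * ((m + 1 + i) / R))) * Real.exp C ≤ 1 / 2 := by
  obtain ⟨i, hi⟩ := exists_nat_gt (4 * R * Real.exp C)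
  have hE := Real.exp_pos C
  set Q : ℝ := (m + 1 + i) / R with hQ
  have hQ0 : 0 ≤ Q := by positivity
  set S : ℝ := lam1 + lam2 + Q with hS
  have hS0 : 0 < S := by positivity
  refine ⟨1 / (4 * S * Real.exp C), by positivity, i, ?_⟩
  have e1 : R / (i + 2) * Real.exp C ≤ 1 / 4 := by
    rw [div_mul_eq_mul_div, div_le_iff₀ (by positivity)]; linarith
  have e2 : 1 / (4 * S * Real.exp C) * S * Real.exp C = 1 / 4 := by field_simp
  set τ := 1 / (4 * S * Real.exp C) with hτ
  have hτ0 : 0 < τ := by positivity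
  have key : ∀ lam, lam + Q ≤ S →
      (τ * lam + (R / (i + 2) + τ * Q)) * Real.exp C ≤ 1 / 2 := by
    intro lam hl
    calc _ = τ * (lam + Q) * Real.exp C + R / (i + 2) * Real.exp C := by ring
      _ ≤ τ * S * Real.exp C + 1 / 4 := by gcongr
      _ ≤ 1 / 2 := by rw [e2]; norm_num
  exact ⟨key _ (by linarith), key _ (by linarith)⟩

lemma step_bound {m i : ℕ} {R τ lam C N X : ℝ} (hR : 0 < R) (hτ : 0 < τ)
    (hstep : (τ * lam + (R / (i + 2) + τ * ((m + 1 + i) / R))) * Real.exp C ≤ 1 / 2)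
    (hlam : 0 < lam) {f : YE} {g : CE} (hf : ‖f‖ ≤ lam * N) (hg : ‖g‖ ≤ N)
    (hN : N ≤ Real.exp C * X) (hX : 0 ≤ X) :
    τ * ‖f‖ + (R / (i + 2) + τ * ((m + 1 + i) / R)) * ‖g‖ ≤ 1 / 2 * X := by
  calc _ ≤ τ * (lam * N) + (R / (i + 2) + τ * ((m + 1 + i) / R)) * N := by gcongr
    _ = (τ * lam + (R / (i + 2) + τ * ((m + 1 + i) / R))) * N := by ring
    _ ≤ (τ * lam + (R / (i + 2) + τ * ((m + 1 + i) / R))) * (Real.exp C * X) := by gcongr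
    _ = (τ * lam + (R / (i + 2) + τ * ((m + 1 + i) / R))) * Real.exp C * X := by ring
    _ ≤ _ := by gcongr

/-- Local existence for the radial system, on a time interval depending only on the bound `M` of the
initial profiles. Here `q0`, `p0` are the Laplacians of the data and the flux conditions express
compatibility. The time derivatives of the solution are found as a fixed point of the map
sending `(u_t, v_t)` to the generalised solution of the differentiated problem. -/
theorem local_1d (m : ℕ) {R lam1 lam2 : ℝ} (hR : 0 < R) (hl1 : 0 < lam1) (hl2 : 0 < lam2)
    (M : ℝ) : ∃ τ : ℝ, 0 < τ ∧ ∀ U0 V0 q0 p0 : CE, ‖U0‖ ≤ M → ‖V0‖ ≤ M →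
      recenter U0 = Kop m R q0 → flux m R q0 = Real.exp (V0 1) →
      recenter V0 = Kop m R p0 → flux m R p0 = Real.exp (U0 1) →
      ∃ u v w z : YE, Cl m R τ (U0, lam1 • expY v, bdY (expY v)) u w ∧
        Cl m R τ (V0, lam2 • expY u, bdY (expY u)) v z := by
  obtain ⟨τ, hτ, i, hs1, hs2⟩ := exists_step m hR hl1 hl2 (M + 1)
  refine ⟨τ, hτ, fun U0 V0 q0 p0 hU hV hq1 hq2 hp1 hp2 => ?_⟩
  have hM : 0 ≤ M := (norm_nonneg _).trans hU
  choose L hL using fun d => mem_datSub.1 (datSub_eq_top (m := m) hR hτ d)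
  set st : CE → YE → YE := fun W z => ContinuousMap.const unitInterval W + tint τ z with hst
  set D : ℝ → CE → CE → YE → SData := fun lam q W z =>
    (q + lam • expE W, lam • (expY (st W z) * z), bdY (expY (st W z) * z)) with hD
  have hsub : ∀ W z z', st W z - st W z' = tint τ (z - z') := by
    intro W z z'
    simp only [hst, map_sub, add_sub_add_left_eq_sub]
  -- One component of the iteration for the time derivatives: `L d` is a generalised solution with
  -- data `d`, and `st W z` is the function with initial value `W` and time derivative `z`.
  have comp : ∀ (lam : ℝ), 0 < lam →
      (τ * lam + (R / (i + 2) + τ * ((m + 1 + i) / R))) * Real.exp (M + 1) ≤ 1 / 2 →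
      ∀ (W q Z : CE), ‖W‖ ≤ M → recenter W = Kop m R q → flux m R q = Real.exp (Z 1) →
      ∀ B, 2 * ‖q + lam • expE Z‖ ≤ B → ∀ z z' : YE, ‖z‖ ≤ B → ‖st Z z‖ ≤ M + 1 → ‖z'‖ ≤ B →
      ‖st Z z'‖ ≤ M + 1 →
      ‖L (D lam q Z z)‖ ≤ B ∧ ‖st W (L (D lam q Z z))‖ ≤ M + 1 ∧
      ‖L (D lam q Z z) - L (D lam q Z z')‖ ≤ 1 / 2 * ‖z - z'‖ + B / 2 * ‖tint τ (z - z')‖ ∧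
      ‖tint τ (L (D lam q Z z) - L (D lam q Z z'))‖ ≤ 1 / 2 * ‖tint τ (z - z')‖ := by
    intro lam hlam hs W q Z hW hq1 hq2 B hB z z' hz hZz hz' hZz'
    have hB0 : 0 ≤ B := (norm_nonneg _).trans hz
    have cl := genSub_exp (U0 := W) hq1 hq2 (hL (D lam q Z z))
    have cl' := genSub_exp (U0 := W) hq1 hq2 (hL (D lam q Z z'))
    have nsm : ∀ f : YE, ‖lam • f‖ ≤ lam * ‖f‖ := fun f => by
      rw [norm_smul, Real.norm_of_nonneg hlam.le]
    refine ⟨?_, ?_, ?_, ?_⟩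
    · have h1 := genSub_norm_le hR hτ (hL (D lam q Z z)) i
      have h2 := step_bound hR hτ hs hlam (nsm (expY (st Z z) * z)) (norm_bdY_le _)
        (norm_expY_mul_le hZz) (norm_nonneg z)
      have h3 : ‖(D lam q Z z).1‖ = ‖q + lam • expE Z‖ := rfl
      have h4 : ‖L (D lam q Z z)‖ ≤ ‖q + lam • expE Z‖ + 1 / 2 * ‖z‖ := by
        refine h1.trans ?_
        rw [add_assoc, h3]
        exact add_le_add le_rfl h2
      linarith
    · have h1 := cl.norm_le hR hτ i
      have h2 := step_bound hR hτ hs hlam (nsm (expY (st Z z))) (norm_bdY_le _)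
        (by rw [mul_one]; exact norm_expY_le hZz) zero_le_one
      have h4 : ‖st W (L (D lam q Z z))‖ ≤ ‖W‖ + 1 / 2 * 1 := by
        refine h1.trans ?_
        rw [add_assoc]
        exact add_le_add le_rfl h2
      linarith
    · have hmem := (genSub m R τ).sub_mem (hL (D lam q Z z)) (hL (D lam q Z z'))
      have h1 := genSub_norm_le hR hτ hmem i
      have h0 : (D lam q Z z - D lam q Z z').1 = 0 := sub_self _
      have h2 := step_bound hR hτ hs hlam
        (f := lam • (expY (st Z z) * z - expY (st Z z') * z'))
        (g := bdY (expY (st Z z) * z - expY (st Z z') * z')) (nsm _)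
        (norm_bdY_le _) (X := ‖z - z'‖ + B * ‖st Z z - st Z z'‖)
        ((norm_expY_mul_sub_le hZz hZz' hz).trans_eq (by ring)) (by positivity)
      have e2 : (D lam q Z z - D lam q Z z').2.1 =
        lam • (expY (st Z z) * z - expY (st Z z') * z') := (smul_sub _ _ _).symm
      have e3 : (D lam q Z z - D lam q Z z').2.2 =
        bdY (expY (st Z z) * z - expY (st Z z') * z') := rfl
      rw [e2, e3, h0, norm_zero, zero_add] at h1
      rw [hsub] at h2
      refine h1.trans (h2.trans_eq (by ring))
    · have cl2 := cl.add (cl'.smul (-1))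
      have h1 := cl2.norm_le hR hτ i
      have h2 := step_bound hR hτ hs hlam (f := lam • (expY (st Z z) - expY (st Z z')))
        (g := bdY (expY (st Z z) - expY (st Z z'))) (nsm _)
        (norm_bdY_le _) (norm_expY_sub_le hZz hZz') (by positivity)
      rw [hsub] at h2
      have e0 : ∀ X Y : YE, X + (-1 : ℝ) • Y = X - Y := fun X Y => by
        rw [neg_one_smul, sub_eq_add_neg]
      have e0' : ∀ X Y : SData, X + (-1 : ℝ) • Y = X - Y := fun X Y => by
        rw [neg_one_smul, sub_eq_add_neg]
      rw [e0, e0'] at h1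
      change ‖st W (L (D lam q Z z)) - st W (L (D lam q Z z'))‖ ≤ ‖W - W‖ +
        τ * ‖lam • expY (st Z z) - lam • expY (st Z z')‖ + _ * ‖bdY (expY (st Z z) - expY (st Z z'))‖
        at h1
      rw [hsub, sub_self, norm_zero, zero_add, ← smul_sub] at h1
      exact h1.trans h2
  set B : ℝ := 2 * max ‖q0 + lam1 • expE V0‖ ‖p0 + lam2 • expE U0‖ with hB
  have hB0 : 0 ≤ B := by positivity
  set P : Set (YE × YE) := {x | ‖x.1‖ ≤ B ∧ ‖x.2‖ ≤ B ∧ ‖st U0 x.1‖ ≤ M + 1 ∧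
    ‖st V0 x.2‖ ≤ M + 1} with hP
  have hPc : IsClosed P := by
    simp only [hP, ofPred_and]
    refine IsClosed.inter ?_ (IsClosed.inter ?_ (IsClosed.inter ?_ ?_)) <;>
    refine isClosed_le ?_ continuous_const <;> (try simp only [hst]) <;> fun_prop
  have hst0 : ∀ W : CE, ‖W‖ ≤ M → ‖st W 0‖ ≤ M + 1 := by
    intro W hW
    simp only [hst, map_zero, add_zero]
    rw [ContinuousMap.norm_le _ (by positivity)]
    intro t
    exact hW.trans (by linarith)
  have h0P : (0 : YE × YE) ∈ P := ⟨by simpa using hB0, by simpa using hB0, hst0 U0 hU, hst0 V0 hV⟩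
  have c1 := comp lam1 hl1 hs1 U0 q0 V0 hU hq1 hq2 B
    (by rw [hB]; exact mul_le_mul_of_nonneg_left (le_max_left _ _) zero_le_two)
  have c2 := comp lam2 hl2 hs2 V0 p0 U0 hV hp1 hp2 B
    (by rw [hB]; exact mul_le_mul_of_nonneg_left (le_max_right _ _) zero_le_two)
  obtain ⟨⟨w, z⟩, hwz, hfix⟩ := exists_fixed ((tint τ).prodMap (tint τ)) hPc h0P
    (fun x => (L (D lam1 q0 V0 x.2), L (D lam2 p0 U0 x.1)))
    (fun x hx => by
      obtain ⟨a, b, c, d⟩ := hx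
      have k1 := c1 x.2 x.2 b d b d
      have k2 := c2 x.1 x.1 a c a c
      exact ⟨k1.1, k2.1, k1.2.1, k2.2.1⟩)
    (c := B / 2) (by positivity)
    (fun x hx y hy => by
      obtain ⟨a, b, c, d⟩ := hx
      obtain ⟨a', b', c', d'⟩ := hy
      have k1 := (c1 x.2 y.2 b d b' d').2.2.1
      have k2 := (c2 x.1 y.1 a c a' c').2.2.1
      refine max_le (k1.trans ?_) (k2.trans ?_)
      · gcongr
        · exact norm_snd_le (x - y)
        · exact norm_snd_le ((tint τ).prodMap (tint τ) (x - y))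
      · gcongr
        · exact norm_fst_le (x - y)
        · exact norm_fst_le ((tint τ).prodMap (tint τ) (x - y)))
    (fun x hx y hy => by
      obtain ⟨a, b, c, d⟩ := hx
      obtain ⟨a', b', c', d'⟩ := hy
      have k1 := (c1 x.2 y.2 b d b' d').2.2.2
      have k2 := (c2 x.1 y.1 a c a' c').2.2.2
      refine max_le (k1.trans ?_) (k2.trans ?_)
      · gcongr
        exact norm_snd_le ((tint τ).prodMap (tint τ) (x - y))
      · gcongr
        exact norm_fst_le ((tint τ).prodMap (tint τ) (x - y)))
  have f1 : L (D lam1 q0 V0 z) = w := congrArg Prod.fst hfix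
  have f2 : L (D lam2 p0 U0 w) = z := congrArg Prod.snd hfix
  have g1 := genSub_exp hq1 hq2 (hL (D lam1 q0 V0 z))
  have g2 := genSub_exp hp1 hp2 (hL (D lam2 p0 U0 w))
  rw [f1] at g1
  rw [f2] at g2
  exact ⟨_, _, _, _, g1, g2⟩

/-! ### Maximum principle -/

lemma iteratedDeriv_two_nonpos_of_isLocalMax {g : ℝ → ℝ} {s : ℝ} (hg : ContinuousAt g s)
    (h : IsLocalMax g s) : iteratedDeriv 2 g s ≤ 0 := by
  by_contra! hpos
  rw [iteratedDeriv_succ, iteratedDeriv_one] at hpos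
  have hmin := isLocalMin_of_deriv_deriv_pos hpos h.deriv_eq_zero hg
  have hconst : g =ᶠ[𝓝 s] fun _ => g s := by
    filter_upwards [h, hmin] with y h1 h2 using le_antisymm h1 h2
  have h2 : deriv g =ᶠ[𝓝 s] fun _ => 0 := by
    filter_upwards [hconst.eventually_nhds] with y hy
    rw [Filter.EventuallyEq.deriv_eq hy, deriv_const]
  rw [h2.deriv_eq, deriv_const] at hpos
  exact lt_irrefl _ hpos

section
variable {n : ℕ}

lemma contDiffAt_line {f : EuclideanSpace ℝ (Fin n) → ℝ} {x : EuclideanSpace ℝ (Fin n)}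
    (hf : ContDiffAt ℝ 2 f x) (v : EuclideanSpace ℝ (Fin n)) :
    ContDiffAt ℝ 2 (fun s : ℝ => f (x + s • v)) 0 := by
  have h1 : ContDiffAt ℝ 2 f (x + (0 : ℝ) • v) := by simpa using hf
  exact ContDiffAt.comp (0 : ℝ) h1 (by fun_prop)

/-- If `f` touches `g` from below at `x`, then `Δ f x ≤ Δ g x`. -/
lemma lap_le_of_touch {f g : EuclideanSpace ℝ (Fin n) → ℝ} {x : EuclideanSpace ℝ (Fin n)}
    (hf : ContDiffAt ℝ 2 f x) (hg : ContDiffAt ℝ 2 g x) (hle : ∀ᶠ y in 𝓝 x, f y ≤ g y)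
    (heq : f x = g x) : lap f x ≤ lap g x := by
  refine Finset.sum_le_sum fun i _ => ?_
  have h1 := contDiffAt_line hf (EuclideanSpace.single i (1 : ℝ))
  have h2 := contDiffAt_line hg (EuclideanSpace.single i (1 : ℝ))
  have h3 := iteratedDeriv_sub h1 h2
  have hc : Tendsto (fun s : ℝ => x + s • EuclideanSpace.single i (1 : ℝ)) (𝓝 0) (𝓝 x) := by
    have : Continuous (fun s : ℝ => x + s • EuclideanSpace.single i (1 : ℝ)) := by fun_prop
    simpa using this.tendsto 0
  have h4 := iteratedDeriv_two_nonpos_of_isLocalMax (h1.sub h2).continuousAt (by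
    filter_upwards [hc.eventually hle] with s hs
    change f _ - g _ ≤ f _ - g _
    simp only [zero_smul, add_zero, heq, sub_self]
    linarith)
  have h5 : iteratedDeriv 2 ((fun s : ℝ => f (x + s • EuclideanSpace.single i (1 : ℝ))) -
    (fun s : ℝ => g (x + s • EuclideanSpace.single i (1 : ℝ)))) 0 ≤ 0 := h4
  rw [h3] at h5
  linarith

lemma line_mem_closedBall {R : ℝ} (hR : 0 < R) {x : EuclideanSpace ℝ (Fin n)} (hx : ‖x‖ = R)
    {s : ℝ} (hs : s ∈ Icc (-R) 0) :
    x + s • (R⁻¹ • x) ∈ closedBall (0 : EuclideanSpace ℝ (Fin n)) R := by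
  rw [mem_closedBall_zero_iff]
  have : x + s • (R⁻¹ • x) = (1 + s * R⁻¹) • x := by module
  rw [this, norm_smul, hx, Real.norm_eq_abs]
  have h1 : -1 ≤ s * R⁻¹ := by
    rw [← div_eq_mul_inv, le_div_iff₀ hR]; linarith [hs.1]
  have h2 : s * R⁻¹ ≤ 0 := mul_nonpos_of_nonpos_of_nonneg hs.2 (by positivity)
  have : |1 + s * R⁻¹| ≤ 1 := abs_le.2 ⟨by linarith, by linarith⟩
  nlinarith

/-- At a boundary point where `f` touches `g` from below, the normal derivatives are ordered the
other way. -/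
lemma normal_le_of_touch {R : ℝ} (hR : 0 < R) {f g : EuclideanSpace ℝ (Fin n) → ℝ}
    {x : EuclideanSpace ℝ (Fin n)} (hx : ‖x‖ = R) {f' g' : ℝ}
    (hf : HasDerivAt (fun s : ℝ => f (x + s • (R⁻¹ • x))) f' 0)
    (hg : HasDerivAt (fun s : ℝ => g (x + s • (R⁻¹ • x))) g' 0)
    (hle : ∀ y ∈ closedBall (0 : EuclideanSpace ℝ (Fin n)) R, f y ≤ g y) (heq : f x = g x) :
    g' ≤ f' := by
  have := deriv_nonneg_of_left_max (a := -R) (by linarith) (hf.sub hg) (by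
    intro s hs
    have := hle _ (line_mem_closedBall hR hx hs)
    simp only [Pi.sub_apply, zero_smul, add_zero, heq, sub_self]
    linarith)
  linarith

/-- The spatial barrier `e^{k|x|²}`, whose normal derivative on the sphere of radius `R` is `2kR`
times itself. -/
noncomputable def gauss (k : ℝ) (x : EuclideanSpace ℝ (Fin n)) : ℝ := Real.exp (k * ‖x‖ ^ 2)

lemma contDiff_gauss (k : ℝ) : ContDiff ℝ 2 (gauss k : EuclideanSpace ℝ (Fin n) → ℝ) := by
  unfold gauss
  exact (contDiff_const.mul (contDiff_norm_sq ℝ)).exp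

lemma gauss_line (k : ℝ) (x v : EuclideanSpace ℝ (Fin n)) (s : ℝ) :
    gauss k (x + s • v) = Real.exp (k * (‖x‖ ^ 2 + 2 * inner ℝ x v * s + ‖v‖ ^ 2 * s ^ 2)) := by
  unfold gauss
  rw [norm_add_sq_real, inner_smul_right, norm_smul, mul_pow, Real.norm_eq_abs, sq_abs]
  congr 1; ring

lemma hasDerivAt_gauss_line (k : ℝ) (x v : EuclideanSpace ℝ (Fin n)) (s : ℝ) :
    HasDerivAt (fun s : ℝ => gauss k (x + s • v))
      (gauss k (x + s • v) * (k * (2 * inner ℝ x v + ‖v‖ ^ 2 * (2 * s)))) s := by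
  simp only [gauss_line]
  apply HasDerivAt.exp
  have h1 := ((hasDerivAt_id s).const_mul (2 * inner ℝ x v)).const_add (‖x‖ ^ 2)
  have h2 := ((hasDerivAt_pow 2 s).const_mul (‖v‖ ^ 2))
  have := (h1.add h2).const_mul k
  refine this.congr_deriv ?_
  simp

lemma lap_gauss (k : ℝ) (x : EuclideanSpace ℝ (Fin n)) :
    lap (gauss k) x = gauss k x * (2 * k * n + 4 * k ^ 2 * ‖x‖ ^ 2) := by
  have key : ∀ i : Fin n, iteratedDeriv 2
      (fun s : ℝ => gauss k (x + s • EuclideanSpace.single i (1 : ℝ))) 0 =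
      gauss k x * (2 * k + 4 * k ^ 2 * (x i) ^ 2) := by
    intro i
    set e := EuclideanSpace.single i (1 : ℝ) with he
    have e1 : ‖e‖ = 1 := by simp [he]
    have e2 : inner ℝ x e = x i := by simp [he, EuclideanSpace.inner_single_right]
    rw [iteratedDeriv_succ, iteratedDeriv_one]
    have h1 : deriv (fun s : ℝ => gauss k (x + s • e)) = fun s =>
        gauss k (x + s • e) * (k * (2 * inner ℝ x e + ‖e‖ ^ 2 * (2 * s))) :=
      funext fun s => (hasDerivAt_gauss_line k x e s).deriv
    rw [h1]
    have h2 : HasDerivAt (fun s : ℝ => k * (2 * inner ℝ x e + ‖e‖ ^ 2 * (2 * s)))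
        (k * (‖e‖ ^ 2 * (2 * 1))) 0 :=
      ((((hasDerivAt_id (0 : ℝ)).const_mul 2).const_mul (‖e‖ ^ 2)).const_add _).const_mul k
    have h3 := (hasDerivAt_gauss_line k x e 0).mul h2
    refine h3.deriv.trans ?_
    simp only [zero_smul, add_zero, mul_zero, e1, e2]
    ring
  unfold lap
  rw [Finset.sum_congr rfl fun i _ => key i, ← Finset.mul_sum, Finset.sum_add_distrib,
    ← Finset.mul_sum _ _ (4 * k ^ 2), EuclideanSpace.real_norm_sq_eq, Finset.sum_const, Finset.card_univ,
    Fintype.card_fin, nsmul_eq_mul]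
  ring

/-- `a` is a subsolution driven by the positive part of `b`: `a_t ≤ Δa + C b⁺` in the ball, `∂a/∂η ≤
C b⁺` on the sphere, and `a ≤ 0` initially. The comparison principle for weakly coupled systems
assumes this for `(a, b)` and for `(b, a)`. -/
structure SubCond (R S C : ℝ) (a b : EuclideanSpace ℝ (Fin n) → ℝ → ℝ) : Prop where
  cont : ContinuousOn (fun p : EuclideanSpace ℝ (Fin n) × ℝ => a p.1 p.2)
    ((closedBall (0 : EuclideanSpace ℝ (Fin n)) R) ×ˢ Icc (0 : ℝ) S)
  reg : ∀ x ∈ ball (0 : EuclideanSpace ℝ (Fin n)) R, ∀ t ∈ Ioc 0 S,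
    ContDiffAt ℝ 2 (fun y => a y t) x
  pde : ∀ x ∈ ball (0 : EuclideanSpace ℝ (Fin n)) R, ∀ t ∈ Ioc 0 S,
    ∃ a', HasDerivAt (a x) a' t ∧ a' ≤ lap (fun y => a y t) x + C * max 0 (b x t)
  bc : ∀ x : EuclideanSpace ℝ (Fin n), ‖x‖ = R → ∀ t ∈ Ioc 0 S,
    ∃ a', HasDerivAt (fun s : ℝ => a (x + s • (R⁻¹ • x)) t) a' 0 ∧ a' ≤ C * max 0 (b x t)
  init : ∀ x ∈ closedBall (0 : EuclideanSpace ℝ (Fin n)) R, a x 0 ≤ 0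

lemma lap_const_mul {f : EuclideanSpace ℝ (Fin n) → ℝ} {x : EuclideanSpace ℝ (Fin n)}
    (c : ℝ) : lap (fun y => c * f y) x = c * lap f x := by
  unfold lap
  rw [Finset.mul_sum]
  refine Finset.sum_congr rfl fun i _ => ?_
  exact iteratedDeriv_const_mul_field c fun s : ℝ => f (x + s • EuclideanSpace.single i (1 : ℝ))

/-- `a` cannot touch the barrier `μ e^{Kt} e^{k|x|²}` from below at a positive time while `b` is
below it. -/
lemma SubCond.not_touch {R S C k K μ t : ℝ} (hR : 0 < R) {a b : EuclideanSpace ℝ (Fin n) → ℝ → ℝ}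
    (hC : 0 ≤ C) (h : SubCond R S C a b) (hk : 2 * k * R = C + 1)
    (hK : 2 * k * n + 4 * k ^ 2 * R ^ 2 + C < K) (hμ : 0 < μ) (ht : t ∈ Ioc 0 S)
    {x : EuclideanSpace ℝ (Fin n)} (hx : x ∈ closedBall (0 : EuclideanSpace ℝ (Fin n)) R)
    (hle : ∀ y ∈ closedBall (0 : EuclideanSpace ℝ (Fin n)) R, ∀ s ∈ Icc 0 S,
      a y s ≤ μ * Real.exp (K * s) * gauss k y)
    (hb : b x t ≤ μ * Real.exp (K * t) * gauss k x)
    (heq : a x t = μ * Real.exp (K * t) * gauss k x) : False := by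
  have hg : 0 < gauss k x := Real.exp_pos _
  have hE := Real.exp_pos (K * t)
  have ht' : t ∈ Icc 0 S := ⟨ht.1.le, ht.2⟩
  have hb' : C * max 0 (b x t) ≤ C * (μ * Real.exp (K * t) * gauss k x) := by
    gcongr
    exact max_le (by positivity) hb
  rcases lt_or_eq_of_le (mem_closedBall_zero_iff.1 hx) with hlt | hR'
  · have hxb : x ∈ ball (0 : EuclideanSpace ℝ (Fin n)) R := mem_ball_zero_iff.2 hlt
    obtain ⟨a', ha1, ha2⟩ := h.pde x hxb t ht
    have hl : lap (fun y => a y t) x ≤ lap (fun y => μ * Real.exp (K * t) * gauss k y) x := by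
      refine lap_le_of_touch (h.reg x hxb t ht) (contDiff_const.mul (contDiff_gauss k)).contDiffAt
        ?_ heq
      filter_upwards [isOpen_ball.mem_nhds hxb] with y hy
      exact hle y (ball_subset_closedBall hy) t ht'
    rw [lap_const_mul, lap_gauss] at hl
    have hd : HasDerivAt (fun s => μ * Real.exp (K * s) * gauss k x)
        (μ * (Real.exp (K * t) * (K * 1)) * gauss k x) t :=
      ((((hasDerivAt_id t).const_mul K).exp).const_mul μ).mul_const _
    have h0 := deriv_nonneg_of_left_max ht.1 (ha1.sub hd) (by
      intro s hs
      have := hle x hx s ⟨hs.1, hs.2.trans ht.2⟩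
      simp only [Pi.sub_apply, heq, sub_self]
      linarith)
    have hxR : ‖x‖ ^ 2 ≤ R ^ 2 := by gcongr
    have h1 : (2 * k * n + 4 * k ^ 2 * ‖x‖ ^ 2) + C < K := by
      have : 4 * k ^ 2 * ‖x‖ ^ 2 ≤ 4 * k ^ 2 * R ^ 2 := by gcongr
      linarith
    have hpos : 0 < μ * Real.exp (K * t) * gauss k x := by positivity
    have h2 := mul_lt_mul_of_pos_left h1 hpos
    nlinarith
  · obtain ⟨a', ha1, ha2⟩ := h.bc x hR' t ht
    have hd := (hasDerivAt_gauss_line k x (R⁻¹ • x) 0).const_mul (μ * Real.exp (K * t))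
    have h1 := normal_le_of_touch hR (f := fun y => a y t)
      (g := fun y => μ * Real.exp (K * t) * gauss k y) hR' ha1 hd
      (fun y hy => hle y hy t ht') heq
    simp only [zero_smul, add_zero, mul_zero, inner_smul_right, real_inner_self_eq_norm_sq,
      hR'] at h1
    have e : k * (2 * (R⁻¹ * R ^ 2)) = C + 1 := by rw [← hk]; field_simp
    rw [e] at h1
    have hpos : 0 < μ * Real.exp (K * t) * gauss k x := by positivity
    nlinarith

/-- Comparison principle: letting `μ → 0` in the barrier, both components stay nonpositive. -/
theorem SubCond.nonpos {R S C : ℝ} (hR : 0 < R) {a b : EuclideanSpace ℝ (Fin n) → ℝ → ℝ}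
    (hC : 0 ≤ C) (ha : SubCond R S C a b) (hb : SubCond R S C b a) :
    ∀ x ∈ closedBall (0 : EuclideanSpace ℝ (Fin n)) R, ∀ t ∈ Icc 0 S, a x t ≤ 0 ∧ b x t ≤ 0 := by
  intro x₁ hx₁ t₁ ht₁
  set k : ℝ := (C + 1) / (2 * R) with hk
  have hk' : 2 * k * R = C + 1 := by rw [hk]; field_simp
  set K : ℝ := 2 * k * n + 4 * k ^ 2 * R ^ 2 + C + 1 with hK
  set H : EuclideanSpace ℝ (Fin n) × ℝ → ℝ := fun p =>
    max (a p.1 p.2) (b p.1 p.2) * (Real.exp (K * p.2) * gauss k p.1)⁻¹ with hH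
  have hpos : ∀ p : EuclideanSpace ℝ (Fin n) × ℝ, 0 < Real.exp (K * p.2) * gauss k p.1 :=
    fun p => mul_pos (Real.exp_pos _) (Real.exp_pos _)
  have hcont : ContinuousOn H ((closedBall (0 : EuclideanSpace ℝ (Fin n)) R) ×ˢ Icc (0 : ℝ) S) := by
    refine (ContinuousOn.sup ha.cont hb.cont).mul (ContinuousOn.inv₀ ?_ fun p _ => (hpos p).ne')
    have := (contDiff_gauss (n := n) k).continuous
    fun_prop
  obtain ⟨⟨x, t⟩, hxt, hmax⟩ := ((isCompact_closedBall (0 : EuclideanSpace ℝ (Fin n)) R).prod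
    (isCompact_Icc (a := (0 : ℝ)) (b := S))).exists_isMaxOn ⟨(x₁, t₁), hx₁, ht₁⟩ hcont
  set μ := H (x, t) with hμ
  have hle : ∀ y ∈ closedBall (0 : EuclideanSpace ℝ (Fin n)) R, ∀ s ∈ Icc 0 S,
      max (a y s) (b y s) ≤ μ * Real.exp (K * s) * gauss k y := by
    intro y hy s hs
    have h1 : H (y, s) ≤ μ := hmax ⟨hy, hs⟩
    change max (a y s) (b y s) * (Real.exp (K * s) * gauss k y)⁻¹ ≤ μ at h1
    have h2 := hpos (y, s)
    rw [← div_eq_mul_inv, div_le_iff₀ h2, ← mul_assoc] at h1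
    exact h1
  have heq : max (a x t) (b x t) = μ * Real.exp (K * t) * gauss k x := by
    rw [hμ, hH, mul_assoc]
    exact (inv_mul_cancel_right₀ (hpos (x, t)).ne' _).symm
  have hμ0 : μ ≤ 0 := by
    by_contra! hμ0
    have ht0 : t ∈ Ioc 0 S := by
      refine ⟨lt_of_le_of_ne hxt.2.1 fun h0 => ?_, hxt.2.2⟩
      have h1 : max (a x t) (b x t) ≤ 0 := by
        rw [← h0]
        exact max_le (ha.init x hxt.1) (hb.init x hxt.1)
      rw [heq, mul_assoc] at h1
      have := mul_pos hμ0 (hpos (x, t))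
      linarith
    have hx := hxt.1
    rcases max_choice (a x t) (b x t) with h | h
    · exact ha.not_touch hR hC hk' (by linarith) hμ0 ht0 hx
        (fun y hy s hs => (le_max_left _ _).trans (hle y hy s hs))
        ((le_max_right _ _).trans heq.le) (h ▸ heq)
    · exact hb.not_touch hR hC hk' (by linarith) hμ0 ht0 hx
        (fun y hy s hs => (le_max_right _ _).trans (hle y hy s hs))
        ((le_max_left _ _).trans heq.le) (h ▸ heq)
  have h1 := hle x₁ hx₁ t₁ ht₁
  rw [mul_assoc] at h1
  have h2 : μ * (Real.exp (K * t₁) * gauss k x₁) ≤ 0 :=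
    mul_nonpos_of_nonpos_of_nonneg hμ0 (hpos (x₁, t₁)).le
  exact ⟨(le_max_left _ _).trans (h1.trans h2), (le_max_right _ _).trans (h1.trans h2)⟩
end

/-! ### Comparison, uniqueness and the lower bound -/

section
variable {n : ℕ}

lemma lap_sub {f g : EuclideanSpace ℝ (Fin n) → ℝ} {x : EuclideanSpace ℝ (Fin n)}
    (hf : ContDiffAt ℝ 2 f x) (hg : ContDiffAt ℝ 2 g x) :
    lap (fun y => f y - g y) x = lap f x - lap g x := by
  unfold lap
  rw [← Finset.sum_sub_distrib]
  refine Finset.sum_congr rfl fun i _ => ?_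
  exact iteratedDeriv_sub (contDiffAt_line hf (EuclideanSpace.single i (1 : ℝ)))
    (contDiffAt_line hg (EuclideanSpace.single i (1 : ℝ)))

lemma lap_const (c : ℝ) (x : EuclideanSpace ℝ (Fin n)) : lap (fun _ => c) x = 0 := by
  simp [lap, iteratedDeriv_succ]

namespace IsClassicalSolution
variable {R T lam1 lam2 : ℝ} {u v : EuclideanSpace ℝ (Fin n) → ℝ → ℝ}
  {u₀ v₀ : EuclideanSpace ℝ (Fin n) → ℝ}

lemma swap (h : IsClassicalSolution n R T lam1 lam2 u v u₀ v₀) :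
    IsClassicalSolution n R T lam2 lam1 v u v₀ u₀ :=
  ⟨h.cont_v, h.cont_u, h.reg_space_v, h.reg_space_u, h.reg_time_v, h.reg_time_u, h.pde_v, h.pde_u,
    h.bc_v, h.bc_u, h.init_v, h.init_u⟩

lemma contDiffAt (h : IsClassicalSolution n R T lam1 lam2 u v u₀ v₀)
    {x : EuclideanSpace ℝ (Fin n)} (hx : x ∈ ball (0 : EuclideanSpace ℝ (Fin n)) R) {t : ℝ}
    (ht : t ∈ Ioo 0 T) : ContDiffAt ℝ 2 (fun y => u y t) x :=
  (h.reg_space_u t ht).contDiffAt (mem_of_superset (isOpen_ball.mem_nhds hx) ball_subset_closedBall)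

lemma hasDerivAt_time (h : IsClassicalSolution n R T lam1 lam2 u v u₀ v₀)
    {x : EuclideanSpace ℝ (Fin n)} (hx : x ∈ ball (0 : EuclideanSpace ℝ (Fin n)) R) {t : ℝ}
    (ht : t ∈ Ioo 0 T) :
    HasDerivAt (u x) (lap (fun y => u y t) x + lam1 * Real.exp (v x t)) t := by
  rw [← h.pde_u x hx t ht]
  exact (h.reg_time_u x (ball_subset_closedBall hx) t ht).hasDerivAt

/-- The normal derivative is a genuine derivative, because the flux `e^v` does not vanish. -/
lemma hasDerivAt_normal (h : IsClassicalSolution n R T lam1 lam2 u v u₀ v₀)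
    {x : EuclideanSpace ℝ (Fin n)} (hx : ‖x‖ = R) {t : ℝ} (ht : t ∈ Ioo 0 T) :
    HasDerivAt (fun s : ℝ => u (x + s • (R⁻¹ • x)) t) (Real.exp (v x t)) 0 := by
  have h1 := h.bc_u x hx t ht
  unfold normalDeriv at h1
  rw [← h1]
  apply DifferentiableAt.hasDerivAt
  apply differentiableAt_of_deriv_ne_zero
  rw [h1]
  exact (Real.exp_pos _).ne'

lemma cont_Icc (h : IsClassicalSolution n R T lam1 lam2 u v u₀ v₀) {S : ℝ} (hS : S < T) :
    ContinuousOn (fun p : EuclideanSpace ℝ (Fin n) × ℝ => u p.1 p.2)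
      ((closedBall (0 : EuclideanSpace ℝ (Fin n)) R) ×ˢ Icc (0 : ℝ) S) :=
  h.cont_u.mono (prod_mono le_rfl fun _ ht => ⟨ht.1, ht.2.trans_lt hS⟩)

lemma exists_bound (h : IsClassicalSolution n R T lam1 lam2 u v u₀ v₀) {S : ℝ} (hS : S < T) :
    ∃ M, ∀ x ∈ closedBall (0 : EuclideanSpace ℝ (Fin n)) R, ∀ t ∈ Icc 0 S, u x t ≤ M := by
  obtain ⟨M, hM⟩ := ((isCompact_closedBall (0 : EuclideanSpace ℝ (Fin n)) R).prod
    (isCompact_Icc (a := (0 : ℝ)) (b := S))).bddAbove_image (h.cont_Icc hS)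
  exact ⟨M, fun x hx t ht => hM ⟨(x, t), ⟨hx, ht⟩, rfl⟩⟩

lemma continuous_slice (h : IsClassicalSolution n R T lam1 lam2 u v u₀ v₀) {t : ℝ}
    (ht : t ∈ Ico 0 T) :
    ContinuousOn (fun x => u x t) (closedBall (0 : EuclideanSpace ℝ (Fin n)) R) :=
  h.cont_u.comp (f := fun x => (x, t)) (by fun_prop) fun _ hx => ⟨hx, ht⟩

lemma continuous_time (h : IsClassicalSolution n R T lam1 lam2 u v u₀ v₀)
    {x : EuclideanSpace ℝ (Fin n)} (hx : x ∈ closedBall (0 : EuclideanSpace ℝ (Fin n)) R) :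
    ContinuousOn (u x) (Ico 0 T) :=
  h.cont_u.comp (f := fun t => (x, t)) (by fun_prop) fun _ ht => ⟨hx, ht⟩
end IsClassicalSolution

lemma exp_sub_le_max {a b M : ℝ} (ha : a ≤ M) : Real.exp a - Real.exp b ≤
    Real.exp M * max 0 (a - b) := by
  rcases le_total a b with hab | hab
  · rw [max_eq_left (by linarith), mul_zero]
    linarith [Real.exp_le_exp.2 hab]
  · rw [max_eq_right (by linarith)]
    have := abs_exp_sub_le ha (hab.trans ha)
    rw [abs_of_nonneg (a := a - b) (by linarith)] at this
    exact (le_abs_self _).trans this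

/-- The difference of two solutions satisfies the hypotheses of the comparison principle. -/
lemma subCond_sub {R T T' S lam1 lam2 M : ℝ} (hl1 : 0 < lam1) (hl2 : 0 < lam2)
    {u v u' v' : EuclideanSpace ℝ (Fin n) → ℝ → ℝ}
    {u₀ v₀ u₀' v₀' : EuclideanSpace ℝ (Fin n) → ℝ}
    (h : IsClassicalSolution n R T lam1 lam2 u v u₀ v₀)
    (h' : IsClassicalSolution n R T' lam1 lam2 u' v' u₀' v₀') (hS : S < T) (hS' : S < T')
    (hu : ∀ x ∈ closedBall (0 : EuclideanSpace ℝ (Fin n)) R, u₀ x ≤ u₀' x)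
    (hM : ∀ x ∈ closedBall (0 : EuclideanSpace ℝ (Fin n)) R, ∀ t ∈ Icc 0 S, v x t ≤ M) :
    SubCond R S ((lam1 + lam2 + 1) * Real.exp M) (fun x t => u x t - u' x t)
      (fun x t => v x t - v' x t) where
  cont := (h.cont_Icc hS).sub (h'.cont_Icc hS')
  reg x hx t ht := (h.contDiffAt hx ⟨ht.1, ht.2.trans_lt hS⟩).sub
    (h'.contDiffAt hx ⟨ht.1, ht.2.trans_lt hS'⟩)
  pde x hx t ht := by
    have ht1 : t ∈ Ioo 0 T := ⟨ht.1, ht.2.trans_lt hS⟩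
    have ht2 : t ∈ Ioo 0 T' := ⟨ht.1, ht.2.trans_lt hS'⟩
    refine ⟨_, (h.hasDerivAt_time hx ht1).sub (h'.hasDerivAt_time hx ht2), ?_⟩
    rw [lap_sub (h.contDiffAt hx ht1) (h'.contDiffAt hx ht2)]
    have h1 := exp_sub_le_max (b := v' x t)
      (hM x (ball_subset_closedBall hx) t ⟨ht.1.le, ht.2⟩)
    have h2 := mul_le_mul_of_nonneg_left h1 hl1.le
    have h3 : 0 ≤ Real.exp M * max 0 (v x t - v' x t) :=
      mul_nonneg (Real.exp_pos _).le (le_max_left _ _)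
    nlinarith
  bc x hx t ht := by
    have ht1 : t ∈ Ioo 0 T := ⟨ht.1, ht.2.trans_lt hS⟩
    have ht2 : t ∈ Ioo 0 T' := ⟨ht.1, ht.2.trans_lt hS'⟩
    refine ⟨_, (h.hasDerivAt_normal hx ht1).sub (h'.hasDerivAt_normal hx ht2), ?_⟩
    have h1 := exp_sub_le_max (b := v' x t)
      (hM x (mem_closedBall_zero_iff.2 hx.le) t ⟨ht.1.le, ht.2⟩)
    have h3 : 0 ≤ Real.exp M * max 0 (v x t - v' x t) :=
      mul_nonneg (Real.exp_pos _).le (le_max_left _ _)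
    nlinarith
  init x hx := by
    have := hu x hx
    simp only [h.init_u x hx, h'.init_u x hx]
    linarith

theorem comparison {R T T' lam1 lam2 : ℝ} (hR : 0 < R) (hl1 : 0 < lam1) (hl2 : 0 < lam2)
    {u v u' v' : EuclideanSpace ℝ (Fin n) → ℝ → ℝ}
    {u₀ v₀ u₀' v₀' : EuclideanSpace ℝ (Fin n) → ℝ}
    (h : IsClassicalSolution n R T lam1 lam2 u v u₀ v₀)
    (h' : IsClassicalSolution n R T' lam1 lam2 u' v' u₀' v₀')
    (hu : ∀ x ∈ closedBall (0 : EuclideanSpace ℝ (Fin n)) R, u₀ x ≤ u₀' x)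
    (hv : ∀ x ∈ closedBall (0 : EuclideanSpace ℝ (Fin n)) R, v₀ x ≤ v₀' x)
    {x : EuclideanSpace ℝ (Fin n)} (hx : x ∈ closedBall (0 : EuclideanSpace ℝ (Fin n)) R)
    {t : ℝ} (ht0 : 0 ≤ t) (ht : t < T) (ht' : t < T') : u x t ≤ u' x t ∧ v x t ≤ v' x t := by
  obtain ⟨M1, hM1⟩ := h.exists_bound ht
  obtain ⟨M2, hM2⟩ := h.swap.exists_bound ht
  set M := max M1 M2
  have hM1' : ∀ x ∈ closedBall (0 : EuclideanSpace ℝ (Fin n)) R, ∀ s ∈ Icc 0 t, u x s ≤ M :=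
    fun x hx s hs => (hM1 x hx s hs).trans (le_max_left _ _)
  have hM2' : ∀ x ∈ closedBall (0 : EuclideanSpace ℝ (Fin n)) R, ∀ s ∈ Icc 0 t, v x s ≤ M :=
    fun x hx s hs => (hM2 x hx s hs).trans (le_max_right _ _)
  have c1 := subCond_sub hl1 hl2 h h' ht ht' hu hM2'
  have c2 := subCond_sub hl2 hl1 h.swap h'.swap ht ht' hv hM1'
  rw [add_comm lam2] at c2
  have := c1.nonpos hR (by positivity) c2 x hx t ⟨ht0, le_rfl⟩
  exact ⟨by linarith [this.1], by linarith [this.2]⟩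

theorem uniqueness {R T T' lam1 lam2 : ℝ} (hR : 0 < R) (hl1 : 0 < lam1) (hl2 : 0 < lam2)
    {u v u' v' : EuclideanSpace ℝ (Fin n) → ℝ → ℝ}
    {u₀ v₀ : EuclideanSpace ℝ (Fin n) → ℝ}
    (h : IsClassicalSolution n R T lam1 lam2 u v u₀ v₀)
    (h' : IsClassicalSolution n R T' lam1 lam2 u' v' u₀ v₀)
    {x : EuclideanSpace ℝ (Fin n)} (hx : x ∈ closedBall (0 : EuclideanSpace ℝ (Fin n)) R)
    {t : ℝ} (ht0 : 0 ≤ t) (ht : t < T) (ht' : t < T') : u x t = u' x t ∧ v x t = v' x t := by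
  have h1 := comparison hR hl1 hl2 h h' (fun _ _ => le_rfl) (fun _ _ => le_rfl) hx ht0 ht ht'
  have h2 := comparison hR hl1 hl2 h' h (fun _ _ => le_rfl) (fun _ _ => le_rfl) hx ht0 ht' ht
  exact ⟨le_antisymm h1.1 h2.1, le_antisymm h1.2 h2.2⟩

lemma hasDerivAt_riccati {lam t : ℝ} (ht : lam * t < 1) :
    HasDerivAt (fun t => -Real.log (1 - lam * t)) (lam * Real.exp (-Real.log (1 - lam * t))) t := by
  have h1 : HasDerivAt (fun t => 1 - lam * t) (-(lam * 1)) t :=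
    ((hasDerivAt_id t).const_mul lam).const_sub 1
  have h2 := (h1.log (by linarith)).neg
  refine h2.congr_deriv ?_
  rw [Real.exp_neg, Real.exp_log (by linarith)]
  ring

lemma subCond_lower {R T S lam lam1 lam2 M : ℝ} (hl : 0 < lam) (hl1 : lam ≤ lam1)
    (hl2 : 0 < lam2) {u v : EuclideanSpace ℝ (Fin n) → ℝ → ℝ}
    {u₀ v₀ : EuclideanSpace ℝ (Fin n) → ℝ}
    (h : IsClassicalSolution n R T lam1 lam2 u v u₀ v₀) (hS : S < T) (hS' : lam * S < 1)
    (hu : ∀ x ∈ closedBall (0 : EuclideanSpace ℝ (Fin n)) R, 0 ≤ u₀ x)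
    (hM : ∀ t ∈ Icc 0 S, -Real.log (1 - lam * t) ≤ M) :
    SubCond R S ((lam1 + lam2 + 1) * Real.exp M) (fun x t => -Real.log (1 - lam * t) - u x t)
      (fun x t => -Real.log (1 - lam * t) - v x t) := by
  have hlt : ∀ t ∈ Icc 0 S, lam * t < 1 := fun t ht =>
    (mul_le_mul_of_nonneg_left ht.2 hl.le).trans_lt hS'
  refine ⟨?_, ?_, ?_, ?_, ?_⟩
  · refine ContinuousOn.sub (ContinuousOn.neg (ContinuousOn.log (by fun_prop) ?_)) (h.cont_Icc hS)
    intro p hp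
    have := hlt p.2 hp.2
    linarith
  · intro x hx t ht
    exact contDiffAt_const.sub (h.contDiffAt hx ⟨ht.1, ht.2.trans_lt hS⟩)
  · intro x hx t ht
    have ht1 : t ∈ Ioo 0 T := ⟨ht.1, ht.2.trans_lt hS⟩
    have ht2 : t ∈ Icc 0 S := ⟨ht.1.le, ht.2⟩
    refine ⟨_, (hasDerivAt_riccati (hlt t ht2)).sub (h.hasDerivAt_time hx ht1), ?_⟩
    rw [lap_sub contDiffAt_const (h.contDiffAt hx ht1), lap_const]
    have h1 := exp_sub_le_max (b := v x t) (hM t ht2)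
    have h2 := mul_le_mul_of_nonneg_left h1 (hl.le.trans hl1)
    have h3 : 0 ≤ Real.exp M * max 0 (-Real.log (1 - lam * t) - v x t) :=
      mul_nonneg (Real.exp_pos _).le (le_max_left _ _)
    have h4 := mul_le_mul_of_nonneg_right hl1 (Real.exp_pos (-Real.log (1 - lam * t))).le
    nlinarith
  · intro x hx t ht
    have ht1 : t ∈ Ioo 0 T := ⟨ht.1, ht.2.trans_lt hS⟩
    refine ⟨_, (h.hasDerivAt_normal hx ht1).const_sub _, ?_⟩
    have h3 : 0 ≤ Real.exp M * max 0 (-Real.log (1 - lam * t) - v x t) :=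
      mul_nonneg (Real.exp_pos _).le (le_max_left _ _)
    have := Real.exp_pos (v x t)
    nlinarith
  · intro x hx
    have := hu x hx
    simp only [h.init_u x hx]
    simpa using this

/-- Solutions lie above `-log (1 - λ t)`, `λ = min λ₁ λ₂`, the spatially constant solution of `y' =
λ e^y`, `y(0) = 0`. -/
theorem lower_bound {R T lam1 lam2 : ℝ} (hR : 0 < R) (hl1 : 0 < lam1) (hl2 : 0 < lam2)
    {u v : EuclideanSpace ℝ (Fin n) → ℝ → ℝ} {u₀ v₀ : EuclideanSpace ℝ (Fin n) → ℝ}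
    (h : IsClassicalSolution n R T lam1 lam2 u v u₀ v₀)
    (hu : ∀ x ∈ closedBall (0 : EuclideanSpace ℝ (Fin n)) R, 0 ≤ u₀ x)
    (hv : ∀ x ∈ closedBall (0 : EuclideanSpace ℝ (Fin n)) R, 0 ≤ v₀ x)
    {x : EuclideanSpace ℝ (Fin n)} (hx : x ∈ closedBall (0 : EuclideanSpace ℝ (Fin n)) R)
    {t : ℝ} (ht0 : 0 ≤ t) (ht : t < T) (ht' : min lam1 lam2 * t < 1) :
    -Real.log (1 - min lam1 lam2 * t) ≤ u x t ∧ -Real.log (1 - min lam1 lam2 * t) ≤ v x t := by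
  set lam := min lam1 lam2
  have hl : 0 < lam := lt_min hl1 hl2
  have hM : ∀ s ∈ Icc 0 t, -Real.log (1 - lam * s) ≤ -Real.log (1 - lam * t) := by
    intro s hs
    have : lam * s ≤ lam * t := mul_le_mul_of_nonneg_left hs.2 hl.le
    exact neg_le_neg (Real.log_le_log (by linarith) (by linarith))
  have c1 := subCond_lower hl (min_le_left _ _) hl2 h ht ht' hu hM
  have c2 := subCond_lower hl (min_le_right _ _) hl1 h.swap ht ht' hv hM
  rw [add_comm lam2] at c2
  have := c1.nonpos hR (by positivity) c2 x hx t ⟨ht0, le_rfl⟩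
  exact ⟨by linarith [this.1], by linarith [this.2]⟩

/-- The lower bound `-log (1 - λ t)` blows up at `t = 1/λ`, which bounds the existence time. -/
theorem time_le {R T lam1 lam2 : ℝ} (hR : 0 < R) (hl1 : 0 < lam1) (hl2 : 0 < lam2)
    {u v : EuclideanSpace ℝ (Fin n) → ℝ → ℝ} {u₀ v₀ : EuclideanSpace ℝ (Fin n) → ℝ}
    (h : IsClassicalSolution n R T lam1 lam2 u v u₀ v₀)
    (hu : ∀ x ∈ closedBall (0 : EuclideanSpace ℝ (Fin n)) R, 0 ≤ u₀ x)
    (hv : ∀ x ∈ closedBall (0 : EuclideanSpace ℝ (Fin n)) R, 0 ≤ v₀ x) :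
    min lam1 lam2 * T ≤ 1 := by
  by_contra! hT
  set lam := min lam1 lam2 with hlam
  have hl : 0 < lam := lt_min hl1 hl2
  have hTl : 1 / lam < T := by rw [div_lt_iff₀ hl]; linarith
  have h0 : (0 : EuclideanSpace ℝ (Fin n)) ∈ closedBall (0 : EuclideanSpace ℝ (Fin n)) R := by
    simpa using hR.le
  obtain ⟨M, hM⟩ := h.exists_bound hTl
  set ε := Real.exp (-(|M| + 1)) with hε
  have hε0 : 0 < ε := Real.exp_pos _
  have hε1 : ε < 1 := by rw [hε, Real.exp_lt_one_iff]; linarith [abs_nonneg M]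
  have e1 : lam * ((1 - ε) / lam) = 1 - ε := by field_simp
  have ht : (1 - ε) / lam ∈ Icc 0 (1 / lam) := by
    refine ⟨div_nonneg (by linarith) hl.le, ?_⟩
    gcongr; linarith
  have h1 := (lower_bound hR hl1 hl2 h hu hv h0 ht.1 (ht.2.trans_lt hTl)
    (by rw [← hlam, e1]; linarith)).1
  have h2 := hM 0 h0 _ ht
  rw [← hlam, e1, sub_sub_cancel, hε, Real.log_exp] at h1
  linarith [le_abs_self M]

theorem solution_nonneg {R T lam1 lam2 : ℝ} (hR : 0 < R) (hl1 : 0 < lam1) (hl2 : 0 < lam2)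
    {u v : EuclideanSpace ℝ (Fin n) → ℝ → ℝ} {u₀ v₀ : EuclideanSpace ℝ (Fin n) → ℝ}
    (h : IsClassicalSolution n R T lam1 lam2 u v u₀ v₀)
    (hu : ∀ x ∈ closedBall (0 : EuclideanSpace ℝ (Fin n)) R, 0 ≤ u₀ x)
    (hv : ∀ x ∈ closedBall (0 : EuclideanSpace ℝ (Fin n)) R, 0 ≤ v₀ x)
    {x : EuclideanSpace ℝ (Fin n)} (hx : x ∈ closedBall (0 : EuclideanSpace ℝ (Fin n)) R)
    {t : ℝ} (ht0 : 0 ≤ t) (ht : t < T) : 0 ≤ u x t ∧ 0 ≤ v x t := by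
  have hl : 0 < min lam1 lam2 := lt_min hl1 hl2
  have h1 := time_le hR hl1 hl2 h hu hv
  have h2 : min lam1 lam2 * t < 1 := (mul_lt_mul_of_pos_left ht hl).trans_le h1
  have h3 := lower_bound hR hl1 hl2 h hu hv hx ht0 ht h2
  have h4 : 0 ≤ -Real.log (1 - min lam1 lam2 * t) :=
    neg_nonneg.2 (Real.log_nonpos (by linarith) (by linarith [mul_nonneg hl.le ht0]))
  exact ⟨h4.trans h3.1, h4.trans h3.2⟩
end

/-! ### Radial symmetry and monotonicity -/

section
variable {n : ℕ}

lemma iteratedDeriv_line {f : EuclideanSpace ℝ (Fin n) → ℝ} {x : EuclideanSpace ℝ (Fin n)}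
    (hf : ContDiffAt ℝ 2 f x) (v : EuclideanSpace ℝ (Fin n)) :
    iteratedDeriv 2 (fun s : ℝ => f (x + s • v)) 0 = fderiv ℝ (fderiv ℝ f) x v v := by
  have hl : ∀ s : ℝ, HasDerivAt (fun s : ℝ => x + s • v) v s := fun s => by
    simpa using ((hasDerivAt_id s).smul_const v).const_add x
  have hc : Tendsto (fun s : ℝ => x + s • v) (𝓝 0) (𝓝 x) := by
    simpa using (hl 0).continuousAt.tendsto
  have h1 : ∀ᶠ y in 𝓝 x, ContDiffAt ℝ 2 f y := hf.eventually (by simp)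
  have h2 : deriv (fun s : ℝ => f (x + s • v)) =ᶠ[𝓝 0] fun s => fderiv ℝ f (x + s • v) v := by
    filter_upwards [hc.eventually h1] with s hs
    exact ((hs.differentiableAt (by simp)).hasFDerivAt.comp_hasDerivAt s (hl s)).deriv
  rw [iteratedDeriv_succ, iteratedDeriv_one, h2.deriv_eq]
  have h3 : HasFDerivAt (fderiv ℝ f) (fderiv ℝ (fderiv ℝ f) x) (x + (0 : ℝ) • v) := by
    rw [zero_smul, add_zero]
    exact ((hf.fderiv_right (m := 1) (by norm_num)).differentiableAt (by simp)).hasFDerivAt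
  have h4 : HasDerivAt (fun s : ℝ => fderiv ℝ f (x + s • v)) (fderiv ℝ (fderiv ℝ f) x v) 0 :=
    h3.comp_hasDerivAt (0 : ℝ) (hl 0)
  have h5 := (ContinuousLinearMap.apply ℝ ℝ v).hasFDerivAt.comp_hasDerivAt (0 : ℝ) h4
  exact h5.deriv

/-- The Laplacian may be computed in any orthonormal basis. -/
lemma lap_eq_sum {ι : Type*} [Fintype ι] {f : EuclideanSpace ℝ (Fin n) → ℝ}
    {x : EuclideanSpace ℝ (Fin n)} (hf : ContDiffAt ℝ 2 f x)
    (b : OrthonormalBasis ι ℝ (EuclideanSpace ℝ (Fin n))) :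
    lap f x = ∑ i, fderiv ℝ (fderiv ℝ f) x (b i) (b i) := by
  have h1 := congrFun
    (InnerProductSpace.laplacian_eq_iteratedFDeriv_orthonormalBasis f b) x
  have h2 := congrFun (InnerProductSpace.laplacian_eq_iteratedFDeriv_orthonormalBasis f
    (EuclideanSpace.basisFun (Fin n) ℝ)) x
  rw [h2] at h1
  simp only [iteratedFDeriv_two_apply] at h1
  simp only [Matrix.cons_val_zero, Matrix.cons_val_one,
    EuclideanSpace.basisFun_apply] at h1
  rw [← h1]
  exact Finset.sum_congr rfl fun i _ => iteratedDeriv_line hf _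

lemma lap_comp_isometry (O : EuclideanSpace ℝ (Fin n) ≃ₗᵢ[ℝ] EuclideanSpace ℝ (Fin n))
    {f : EuclideanSpace ℝ (Fin n) → ℝ} {x : EuclideanSpace ℝ (Fin n)}
    (hf : ContDiffAt ℝ 2 f (O x)) : lap (fun y => f (O y)) x = lap f (O x) := by
  rw [lap_eq_sum hf ((EuclideanSpace.basisFun (Fin n) ℝ).map O)]
  refine Finset.sum_congr rfl fun i _ => ?_
  rw [← iteratedDeriv_line hf]
  congr 1
  ext s
  simp

namespace IsClassicalSolution
variable {R T lam1 lam2 : ℝ} {u v : EuclideanSpace ℝ (Fin n) → ℝ → ℝ}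
  {u₀ v₀ : EuclideanSpace ℝ (Fin n) → ℝ}

lemma rotate (h : IsClassicalSolution n R T lam1 lam2 u v u₀ v₀)
    (O : EuclideanSpace ℝ (Fin n) ≃ₗᵢ[ℝ] EuclideanSpace ℝ (Fin n))
    (hu : ∀ x ∈ closedBall (0 : EuclideanSpace ℝ (Fin n)) R, u₀ (O x) = u₀ x)
    (hv : ∀ x ∈ closedBall (0 : EuclideanSpace ℝ (Fin n)) R, v₀ (O x) = v₀ x) :
    IsClassicalSolution n R T lam1 lam2 (fun x t => u (O x) t) (fun x t => v (O x) t) u₀ v₀ := by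
  have hO : ∀ x ∈ closedBall (0 : EuclideanSpace ℝ (Fin n)) R,
      O x ∈ closedBall (0 : EuclideanSpace ℝ (Fin n)) R := by simp
  have hO' : ∀ x ∈ ball (0 : EuclideanSpace ℝ (Fin n)) R,
      O x ∈ ball (0 : EuclideanSpace ℝ (Fin n)) R := by simp
  have hline : ∀ (x : EuclideanSpace ℝ (Fin n)) (s : ℝ),
      O (x + s • (R⁻¹ • x)) = O x + s • (R⁻¹ • O x) := by intro x s; simp
  have hOc := O.continuous
  refine ⟨?_, ?_, ?_, ?_, fun x hx t ht => h.reg_time_u _ (hO x hx) t ht,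
    fun x hx t ht => h.reg_time_v _ (hO x hx) t ht, ?_, ?_, ?_, ?_, ?_, ?_⟩
  · exact h.cont_u.comp (f := fun p : EuclideanSpace ℝ (Fin n) × ℝ => (O p.1, p.2)) (by fun_prop)
      fun p hp => ⟨hO _ hp.1, hp.2⟩
  · exact h.cont_v.comp (f := fun p : EuclideanSpace ℝ (Fin n) × ℝ => (O p.1, p.2)) (by fun_prop)
      fun p hp => ⟨hO _ hp.1, hp.2⟩
  · intro t ht
    exact (h.reg_space_u t ht).comp O.contDiff.contDiffOn hO
  · intro t ht
    exact (h.reg_space_v t ht).comp O.contDiff.contDiffOn hO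
  · intro x hx t ht
    rw [lap_comp_isometry O (f := fun y => u y t) (h.contDiffAt (hO' x hx) ht)]
    exact h.pde_u _ (hO' x hx) t ht
  · intro x hx t ht
    rw [lap_comp_isometry O (f := fun y => v y t) (h.swap.contDiffAt (hO' x hx) ht)]
    exact h.pde_v _ (hO' x hx) t ht
  · intro x hx t ht
    rw [← h.bc_u (O x) (by simpa using hx) t ht]
    simp only [normalDeriv, hline]
  · intro x hx t ht
    rw [← h.bc_v (O x) (by simpa using hx) t ht]
    simp only [normalDeriv, hline]
  · intro x hx; rw [h.init_u _ (hO x hx), hu x hx]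
  · intro x hx; rw [h.init_v _ (hO x hx), hv x hx]

lemma shift (h : IsClassicalSolution n R T lam1 lam2 u v u₀ v₀) {t₀ : ℝ} (ht₀ : t₀ ∈ Ico 0 T) :
    IsClassicalSolution n R (T - t₀) lam1 lam2 (fun x t => u x (t₀ + t)) (fun x t => v x (t₀ + t))
      (fun x => u x t₀) (fun x => v x t₀) := by
  have h1 : ∀ t ∈ Ico 0 (T - t₀), t₀ + t ∈ Ico 0 T := fun t ht =>
    ⟨add_nonneg ht₀.1 ht.1, by linarith [ht.2]⟩
  have h2 : ∀ t ∈ Ioo 0 (T - t₀), t₀ + t ∈ Ioo 0 T := fun t ht =>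
    ⟨add_pos_of_nonneg_of_pos ht₀.1 ht.1, by linarith [ht.2]⟩
  have hd : ∀ (f : ℝ → ℝ) (t : ℝ), DifferentiableAt ℝ f (t₀ + t) →
      DifferentiableAt ℝ (fun s => f (t₀ + s)) t := fun f t hf =>
    DifferentiableAt.comp t hf (by fun_prop)
  refine ⟨?_, ?_, fun t ht => h.reg_space_u _ (h2 t ht), fun t ht => h.reg_space_v _ (h2 t ht),
    fun x hx t ht => hd _ _ (h.reg_time_u x hx _ (h2 t ht)),
    fun x hx t ht => hd _ _ (h.reg_time_v x hx _ (h2 t ht)), ?_, ?_,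
    fun x hx t ht => h.bc_u x hx _ (h2 t ht), fun x hx t ht => h.bc_v x hx _ (h2 t ht), ?_, ?_⟩
  · exact h.cont_u.comp (f := fun p : EuclideanSpace ℝ (Fin n) × ℝ => (p.1, t₀ + p.2))
      (by fun_prop) fun p hp => ⟨hp.1, h1 _ hp.2⟩
  · exact h.cont_v.comp (f := fun p : EuclideanSpace ℝ (Fin n) × ℝ => (p.1, t₀ + p.2))
      (by fun_prop) fun p hp => ⟨hp.1, h1 _ hp.2⟩
  · intro x hx t ht
    rw [deriv_comp_const_add]
    exact h.pde_u x hx _ (h2 t ht)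
  · intro x hx t ht
    rw [deriv_comp_const_add]
    exact h.pde_v x hx _ (h2 t ht)
  · intro x _; simp
  · intro x _; simp
end IsClassicalSolution

/-- A rotated solution has the same initial data, hence is the same solution. -/
theorem radial {R T lam1 lam2 : ℝ} (hR : 0 < R) (hl1 : 0 < lam1) (hl2 : 0 < lam2)
    {u v : EuclideanSpace ℝ (Fin n) → ℝ → ℝ} {u₀ v₀ : EuclideanSpace ℝ (Fin n) → ℝ}
    (h : IsClassicalSolution n R T lam1 lam2 u v u₀ v₀) (hd : AdmissibleData n R u₀ v₀)
    {x y : EuclideanSpace ℝ (Fin n)} (hx : x ∈ closedBall (0 : EuclideanSpace ℝ (Fin n)) R)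
    (hxy : ‖x‖ = ‖y‖) {t : ℝ} (ht : t ∈ Ico 0 T) : u x t = u y t ∧ v x t = v y t := by
  set O := Submodule.reflection (Submodule.span ℝ {x - y})ᗮ with hO
  have hOx : O x = y := Submodule.reflection_sub hxy
  have hmem : ∀ x ∈ closedBall (0 : EuclideanSpace ℝ (Fin n)) R,
      O x ∈ closedBall (0 : EuclideanSpace ℝ (Fin n)) R := by simp
  have h' := h.rotate O
    (fun x hx => le_antisymm (hd.u0_radial_mono _ (hmem x hx) _ hx (by simp))
      (hd.u0_radial_mono _ hx _ (hmem x hx) (by simp)))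
    (fun x hx => le_antisymm (hd.v0_radial_mono _ (hmem x hx) _ hx (by simp))
      (hd.v0_radial_mono _ hx _ (hmem x hx) (by simp)))
  have := uniqueness hR hl1 hl2 h h' hx ht.1 ht.2 ht.2
  simpa only [hOx] using this

/-- The doubling argument. At a positive maximum of `e^{-Kt}(u(x) - u(y))` over `|x| ≤ |y|`, reached
with `|x| < |y|`, one has `Δu(x) ≤ 0 ≤ Δu(y)`, which contradicts the equation if `y` is
interior; if `|y| = R`, the positivity of the flux is contradicted. -/
lemma not_double {R T lam1 lam2 S M K μ s : ℝ} (hR : 0 < R) (hl1 : 0 < lam1)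
    {u v : EuclideanSpace ℝ (Fin n) → ℝ → ℝ} {u₀ v₀ : EuclideanSpace ℝ (Fin n) → ℝ}
    (h : IsClassicalSolution n R T lam1 lam2 u v u₀ v₀) (hS : S < T)
    (hM : ∀ x ∈ closedBall (0 : EuclideanSpace ℝ (Fin n)) R, ∀ t ∈ Icc 0 S, v x t ≤ M)
    (hK : lam1 * Real.exp M < K) (hμ : 0 < μ) (hs : s ∈ Ioc 0 S)
    {x y : EuclideanSpace ℝ (Fin n)} (hxy : ‖x‖ < ‖y‖) (hy : ‖y‖ ≤ R)
    (hle : ∀ x' y' : EuclideanSpace ℝ (Fin n), ‖x'‖ ≤ ‖y'‖ → ‖y'‖ ≤ R → ∀ t ∈ Icc 0 S,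
      u x' t - u y' t ≤ μ * Real.exp (K * t))
    (hv : v x s - v y s ≤ μ * Real.exp (K * s))
    (heq : u x s - u y s = μ * Real.exp (K * s)) : False := by
  have hs' : s ∈ Icc 0 S := ⟨hs.1.le, hs.2⟩
  have hsT : s ∈ Ioo 0 T := ⟨hs.1, hs.2.trans_lt hS⟩
  have hpos : 0 < μ * Real.exp (K * s) := by positivity
  have hxb : x ∈ ball (0 : EuclideanSpace ℝ (Fin n)) R := mem_ball_zero_iff.2 (hxy.trans_le hy)
  have hlx : lap (fun z => u z s) x ≤ 0 := by
    rw [← lap_const (u x s) x]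
    refine lap_le_of_touch (h.contDiffAt hxb hsT) contDiffAt_const ?_ rfl
    filter_upwards [continuous_norm.continuousAt.eventually_lt
      (continuousAt_const (y := ‖y‖)) hxy] with z hz
    have := hle z y hz.le hy s hs'
    linarith
  rcases lt_or_eq_of_le hy with hyR | hyR
  · have hyb : y ∈ ball (0 : EuclideanSpace ℝ (Fin n)) R := mem_ball_zero_iff.2 hyR
    have hly : 0 ≤ lap (fun z => u z s) y := by
      rw [← lap_const (u y s) y]
      refine lap_le_of_touch contDiffAt_const (h.contDiffAt hyb hsT) ?_ rfl
      filter_upwards [(continuousAt_const (y := ‖x‖)).eventually_lt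
        continuous_norm.continuousAt hxy, isOpen_ball.mem_nhds hyb] with z hz hz2
      have := hle x z hz.le (mem_ball_zero_iff.1 hz2).le s hs'
      linarith
    have hd : HasDerivAt (fun s => μ * Real.exp (K * s)) (μ * (Real.exp (K * s) * (K * 1))) s :=
      (((hasDerivAt_id s).const_mul K).exp).const_mul μ
    have h0 := deriv_nonneg_of_left_max hs.1
      (((h.hasDerivAt_time hxb hsT).sub (h.hasDerivAt_time hyb hsT)).sub hd) (by
        intro r hr
        have := hle x y hxy.le hy r ⟨hr.1, hr.2.trans hs.2⟩
        simp only [Pi.sub_apply, heq, sub_self]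
        linarith)
    have h1 := exp_sub_le_max (b := v y s) (hM x (ball_subset_closedBall hxb) s hs')
    have h2 : Real.exp M * max 0 (v x s - v y s) ≤ Real.exp M * (μ * Real.exp (K * s)) := by
      gcongr
      exact max_le hpos.le hv
    have h3 := mul_le_mul_of_nonneg_left (h1.trans h2) hl1.le
    have h4 := mul_lt_mul_of_pos_right hK hpos
    nlinarith
  · have h0 := deriv_nonneg_of_left_max (a := ‖x‖ - R) (by linarith)
      (h.hasDerivAt_normal hyR hsT).neg (by
        intro r hr
        have hr' : r ∈ Icc (-R) 0 := ⟨by linarith [hr.1, norm_nonneg x], hr.2⟩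
        have hn : ‖x‖ ≤ ‖y + r • (R⁻¹ • y)‖ := by
          have : y + r • (R⁻¹ • y) = (1 + r * R⁻¹) • y := by module
          rw [this, norm_smul, hyR, Real.norm_eq_abs]
          have h2 : (1 + r * R⁻¹) * R = R + r := by field_simp
          have h3 := mul_le_mul_of_nonneg_right (le_abs_self (1 + r * R⁻¹)) hR.le
          linarith [hr.1]
        have := hle x _ hn (mem_closedBall_zero_iff.1 (line_mem_closedBall hR hyR hr')) s hs'
        simp only [Pi.neg_apply, zero_smul, add_zero]
        linarith)
    linarith [Real.exp_pos (v y s)]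

theorem radial_mono {R T lam1 lam2 : ℝ} (hR : 0 < R) (hl1 : 0 < lam1) (hl2 : 0 < lam2)
    {u v : EuclideanSpace ℝ (Fin n) → ℝ → ℝ} {u₀ v₀ : EuclideanSpace ℝ (Fin n) → ℝ}
    (h : IsClassicalSolution n R T lam1 lam2 u v u₀ v₀) (hd : AdmissibleData n R u₀ v₀)
    {x₁ y₁ : EuclideanSpace ℝ (Fin n)} (hxy₁ : ‖x₁‖ ≤ ‖y₁‖) (hy₁ : ‖y₁‖ ≤ R) {t₁ : ℝ}
    (ht₁ : t₁ ∈ Ico 0 T) : u x₁ t₁ ≤ u y₁ t₁ ∧ v x₁ t₁ ≤ v y₁ t₁ := by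
  obtain ⟨M1, hM1⟩ := h.exists_bound ht₁.2
  obtain ⟨M2, hM2⟩ := h.swap.exists_bound ht₁.2
  set M := max M1 M2
  have hM1' : ∀ x ∈ closedBall (0 : EuclideanSpace ℝ (Fin n)) R, ∀ s ∈ Icc 0 t₁, u x s ≤ M :=
    fun x hx s hs => (hM1 x hx s hs).trans (le_max_left _ _)
  have hM2' : ∀ x ∈ closedBall (0 : EuclideanSpace ℝ (Fin n)) R, ∀ s ∈ Icc 0 t₁, v x s ≤ M :=
    fun x hx s hs => (hM2 x hx s hs).trans (le_max_right _ _)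
  set K : ℝ := (lam1 + lam2) * Real.exp M with hK
  have hK1 : lam1 * Real.exp M < K := by rw [hK]; nlinarith [Real.exp_pos M]
  have hK2 : lam2 * Real.exp M < K := by rw [hK]; nlinarith [Real.exp_pos M]
  set Z : Set ((EuclideanSpace ℝ (Fin n) × EuclideanSpace ℝ (Fin n)) × ℝ) :=
    ((closedBall (0 : EuclideanSpace ℝ (Fin n)) R ×ˢ closedBall (0 : EuclideanSpace ℝ (Fin n)) R) ×ˢ
      Icc 0 t₁) ∩ {p | ‖p.1.1‖ ≤ ‖p.1.2‖} with hZ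
  have hZc : IsCompact Z :=
    (((isCompact_closedBall _ _).prod (isCompact_closedBall _ _)).prod isCompact_Icc).inter_right
      (isClosed_le (by fun_prop) (by fun_prop))
  have hZm : ∀ x y : EuclideanSpace ℝ (Fin n), ‖x‖ ≤ ‖y‖ → ‖y‖ ≤ R → ∀ t ∈ Icc 0 t₁,
      ((x, y), t) ∈ Z := fun x y hxy hy t ht =>
    ⟨⟨⟨mem_closedBall_zero_iff.2 (hxy.trans hy), mem_closedBall_zero_iff.2 hy⟩, ht⟩, hxy⟩
  have hdiff : ∀ w : EuclideanSpace ℝ (Fin n) → ℝ → ℝ,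
      ContinuousOn (fun p : EuclideanSpace ℝ (Fin n) × ℝ => w p.1 p.2)
        ((closedBall (0 : EuclideanSpace ℝ (Fin n)) R) ×ˢ Icc (0 : ℝ) t₁) →
      ContinuousOn (fun p : (EuclideanSpace ℝ (Fin n) × EuclideanSpace ℝ (Fin n)) × ℝ =>
        w p.1.1 p.2 - w p.1.2 p.2) Z := by
    intro w hw
    refine (hw.comp (f := fun p : (EuclideanSpace ℝ (Fin n) × EuclideanSpace ℝ (Fin n)) × ℝ =>
      (p.1.1, p.2)) (by fun_prop) ?_).sub
      (hw.comp (f := fun p : (EuclideanSpace ℝ (Fin n) × EuclideanSpace ℝ (Fin n)) × ℝ =>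
      (p.1.2, p.2)) (by fun_prop) ?_)
    · exact fun p hp => ⟨hp.1.1.1, hp.1.2⟩
    · exact fun p hp => ⟨hp.1.1.2, hp.1.2⟩
  set H : (EuclideanSpace ℝ (Fin n) × EuclideanSpace ℝ (Fin n)) × ℝ → ℝ := fun p =>
    max (u p.1.1 p.2 - u p.1.2 p.2) (v p.1.1 p.2 - v p.1.2 p.2) * (Real.exp (K * p.2))⁻¹ with hH
  have hcont : ContinuousOn H Z := by
    refine (ContinuousOn.sup (hdiff u (h.cont_Icc ht₁.2)) (hdiff v (h.swap.cont_Icc ht₁.2))).mul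
      (ContinuousOn.inv₀ (by fun_prop) fun p _ => (Real.exp_pos _).ne')
  obtain ⟨⟨⟨x, y⟩, s⟩, hxs, hmax⟩ := hZc.exists_isMaxOn
    ⟨_, hZm x₁ y₁ hxy₁ hy₁ t₁ ⟨ht₁.1, le_rfl⟩⟩ hcont
  set μ := H ((x, y), s) with hμ
  have hle : ∀ x' y' : EuclideanSpace ℝ (Fin n), ‖x'‖ ≤ ‖y'‖ → ‖y'‖ ≤ R → ∀ t ∈ Icc 0 t₁,
      max (u x' t - u y' t) (v x' t - v y' t) ≤ μ * Real.exp (K * t) := by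
    intro x' y' hxy hy t ht
    have h1 : H ((x', y'), t) ≤ μ := hmax (hZm x' y' hxy hy t ht)
    change max (u x' t - u y' t) (v x' t - v y' t) * (Real.exp (K * t))⁻¹ ≤ μ at h1
    rwa [← div_eq_mul_inv, div_le_iff₀ (Real.exp_pos _)] at h1
  have heq : max (u x s - u y s) (v x s - v y s) = μ * Real.exp (K * s) := by
    rw [hμ, hH]
    exact (inv_mul_cancel_right₀ (Real.exp_pos _).ne' _).symm
  obtain ⟨⟨⟨hx, hy⟩, hs⟩, hxy⟩ := hxs
  have hyR : ‖y‖ ≤ R := mem_closedBall_zero_iff.1 hy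
  have hsT : s ∈ Ico 0 T := ⟨hs.1, hs.2.trans_lt ht₁.2⟩
  have hμ0 : μ ≤ 0 := by
    by_contra! hμ0
    have hpos : 0 < μ * Real.exp (K * s) := mul_pos hμ0 (Real.exp_pos _)
    have hs0 : s ∈ Ioc 0 t₁ := by
      refine ⟨lt_of_le_of_ne hs.1 fun h0 => ?_, hs.2⟩
      have h1 : max (u x s - u y s) (v x s - v y s) ≤ 0 := by
        rw [← h0]
        change x ∈ closedBall _ _ at hx
        change y ∈ closedBall _ _ at hy
        rw [h.init_u x hx, h.init_v x hx, h.init_u y hy, h.init_v y hy]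
        exact max_le (sub_nonpos.2 (hd.u0_radial_mono x hx y hy hxy))
          (sub_nonpos.2 (hd.v0_radial_mono x hx y hy hxy))
      linarith
    have hlt : ‖x‖ < ‖y‖ := by
      refine lt_of_le_of_ne hxy fun h0 => ?_
      have h1 := radial hR hl1 hl2 h hd hx h0 hsT
      rw [h1.1, h1.2, sub_self, sub_self, max_self] at heq
      linarith
    rcases max_choice (u x s - u y s) (v x s - v y s) with hc | hc
    · exact not_double hR hl1 h ht₁.2 hM2' hK1 hμ0 hs0 hlt hyR
        (fun x' y' h1 h2 t ht => (le_max_left _ _).trans (hle x' y' h1 h2 t ht))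
        ((le_max_right _ _).trans heq.le) (hc ▸ heq)
    · exact not_double hR hl2 h.swap ht₁.2 hM1' hK2 hμ0 hs0 hlt hyR
        (fun x' y' h1 h2 t ht => (le_max_right _ _).trans (hle x' y' h1 h2 t ht))
        ((le_max_left _ _).trans heq.le) (hc ▸ heq)
  have h1 := hle x₁ y₁ hxy₁ hy₁ t₁ ⟨ht₁.1, le_rfl⟩
  have h2 : μ * Real.exp (K * t₁) ≤ 0 :=
    mul_nonpos_of_nonpos_of_nonneg hμ0 (Real.exp_pos _).le
  have h3 := max_le_iff.1 (h1.trans h2)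
  exact ⟨by linarith [h3.1], by linarith [h3.2]⟩
end

/-! ### Lifting radial profiles to `ℝⁿ` -/

/-- The mean `∫₀¹ s^m q(sρ) ds`. -/
noncomputable def rmean (m : ℕ) (q : ℝ → ℝ) (ρ : ℝ) : ℝ := ∫ s in (0 : ℝ)..1, s ^ m * q (s * ρ)

lemma continuous_rmean (m : ℕ) {q : ℝ → ℝ} (hq : Continuous q) : Continuous (rmean m q) := by
  unfold rmean
  apply intervalIntegral.continuous_parametric_intervalIntegral_of_continuous'
  unfold Function.uncurry
  fun_prop

lemma rmean_eq (m : ℕ) (q : ℝ → ℝ) (ρ : ℝ) :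
    ρ ^ (m + 1) * rmean m q ρ = ∫ s in (0 : ℝ)..ρ, s ^ m * q s := by
  have := intervalIntegral.smul_integral_comp_mul_right (a := 0) (b := 1)
    (fun s : ℝ => s ^ m * q s) ρ
  simp only [zero_mul, one_mul, smul_eq_mul] at this
  rw [← this, rmean, pow_succ', mul_assoc, ← intervalIntegral.integral_const_mul]
  congr 2; ext s; rw [mul_pow]; ring

lemma rmean_zero (m : ℕ) (q : ℝ → ℝ) : ((m : ℝ) + 1) * rmean m q 0 = q 0 := by
  have : (m : ℝ) + 1 ≠ 0 := by positivity
  simp only [rmean, mul_zero, intervalIntegral.integral_mul_const, integral_pow]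
  simp
  field_simp

lemma hasDerivAt_rmean (m : ℕ) {q : ℝ → ℝ} (hq : Continuous q) {ρ : ℝ} (hρ : ρ ≠ 0) :
    HasDerivAt (rmean m q) ((q ρ - (m + 1) * rmean m q ρ) / ρ) ρ := by
  have h1 : HasDerivAt (fun r => ∫ s in (0 : ℝ)..r, s ^ m * q s) (ρ ^ m * q ρ) ρ := by
    have hc : Continuous fun s : ℝ => s ^ m * q s := by fun_prop
    exact hc.integral_hasStrictDerivAt 0 ρ |>.hasDerivAt
  have h2 := h1.div (hasDerivAt_pow (m + 1) ρ) (pow_ne_zero _ hρ)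
  have h3 : (fun r => ∫ s in (0 : ℝ)..r, s ^ m * q s) / (fun r => r ^ (m + 1)) =ᶠ[𝓝 ρ] rmean m q := by
    filter_upwards [isOpen_ne.mem_nhds hρ] with r hr
    have : r ^ (m + 1) ≠ 0 := pow_ne_zero _ hr
    simp only [Pi.div_apply]
    rw [← rmean_eq]; field_simp
  refine (h2.congr_of_eventuallyEq h3.symm).congr_deriv ?_
  rw [← rmean_eq]
  rw [Nat.add_sub_cancel]
  push_cast
  field_simp
  ring

section lift
variable {n : ℕ}

/-- Radial function on `ℝ^(m+1)` with value `c` at the origin and Laplacian `q(|x|)`. -/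
noncomputable def rlift (m : ℕ) (c : ℝ) (q : ℝ → ℝ) (x : EuclideanSpace ℝ (Fin n)) : ℝ :=
  c + (1 / 2) * ∫ s in (0 : ℝ)..‖x‖ ^ 2, rmean m q (√s)

lemma rlift_eq (m : ℕ) (c : ℝ) {q : ℝ → ℝ} (hq : Continuous q) (x : EuclideanSpace ℝ (Fin n)) :
    rlift m c q x = c + ∫ s in (0 : ℝ)..‖x‖, s * rmean m q s := by
  have hc : Continuous fun s : ℝ => rmean m q (√s) :=
    (continuous_rmean m hq).comp Real.continuous_sqrt
  have := intervalIntegral.integral_comp_mul_deriv (a := 0) (b := ‖x‖) (f := fun s : ℝ => s ^ 2)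
    (f' := fun s => 2 * s) (g := fun s => rmean m q (√s))
    (fun s _ => by simpa using hasDerivAt_pow 2 s) (by fun_prop) hc
  simp only [Function.comp_def] at this
  rw [rlift]
  rw [zero_pow two_ne_zero] at this
  rw [← this, ← intervalIntegral.integral_const_mul]
  congr 1
  apply intervalIntegral.integral_congr
  intro s hs
  rw [uIcc_of_le (norm_nonneg x)] at hs
  simp only [Real.sqrt_sq hs.1]; ring

lemma hasFDerivAt_rlift (m : ℕ) (c : ℝ) {q : ℝ → ℝ} (hq : Continuous q) (x : EuclideanSpace ℝ (Fin n)) :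
    HasFDerivAt (rlift (n := n) m c q) (innerSL ℝ (rmean m q ‖x‖ • x)) x := by
  have hc : Continuous fun s : ℝ => rmean m q (√s) :=
    (continuous_rmean m hq).comp Real.continuous_sqrt
  have h1 := (hc.integral_hasStrictDerivAt 0 (‖x‖ ^ 2)).hasDerivAt
  have h2 := (h1.comp_hasFDerivAt x (hasStrictFDerivAt_norm_sq x).hasFDerivAt)
  have h3 := (h2.const_mul (1 / 2)).const_add c
  refine h3.congr_fderiv ?_
  ext y
  simp only [Real.sqrt_sq (norm_nonneg x), one_div, map_smul, smul_apply,
    smul_eq_mul, nsmul_eq_mul, Nat.cast_ofNat]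
  simp
  ring

/-- The derivative of the field `x ↦ a(|x|) x`, where `a = rmean m q`. -/
noncomputable def rlift' (m : ℕ) (q : ℝ → ℝ) (x : EuclideanSpace ℝ (Fin n)) : EuclideanSpace ℝ (Fin n) →L[ℝ] (EuclideanSpace ℝ (Fin n)) :=
  rmean m q ‖x‖ • ContinuousLinearMap.id ℝ (EuclideanSpace ℝ (Fin n)) +
    ((q ‖x‖ - (m + 1) * rmean m q ‖x‖) / ‖x‖ ^ 2) • (innerSL ℝ x).smulRight x

lemma hasFDerivAt_rfield (m : ℕ) {q : ℝ → ℝ} (hq : Continuous q) (x : EuclideanSpace ℝ (Fin n)) :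
    HasFDerivAt (fun x : EuclideanSpace ℝ (Fin n) => rmean m q ‖x‖ • x) (rlift' m q x) x := by
  by_cases hx : x = 0
  · subst hx
    have hc : Continuous fun x : EuclideanSpace ℝ (Fin n) => rmean m q ‖x‖ := (continuous_rmean m hq).comp continuous_norm
    have h0 : rlift' (n := n) m q 0 = rmean m q 0 • ContinuousLinearMap.id ℝ (EuclideanSpace ℝ (Fin n)) := by
      ext y; simp [rlift']
    rw [h0, hasFDerivAt_iff_isLittleO_nhds_zero]
    have : (fun h : EuclideanSpace ℝ (Fin n) => (rmean m q ‖h‖ - rmean m q 0) • h) =o[𝓝 0] fun h : EuclideanSpace ℝ (Fin n) => h := by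
      have h1 : (fun h : EuclideanSpace ℝ (Fin n) => rmean m q ‖h‖ - rmean m q 0) =o[𝓝 0] fun h : EuclideanSpace ℝ (Fin n) => (1 : ℝ) := by
        rw [Asymptotics.isLittleO_one_iff]
        have := hc.tendsto 0
        simp only [norm_zero] at this
        simpa using this.sub_const (rmean m q 0)
      simpa using h1.smul_isBigO (Asymptotics.isBigO_refl (fun h : EuclideanSpace ℝ (Fin n) => h) (𝓝 0))
    refine this.congr_left fun h => ?_
    simp [sub_smul]
  · have hn : ‖x‖ ≠ 0 := norm_ne_zero_iff.2 hx
    have hnorm : HasFDerivAt (fun x : EuclideanSpace ℝ (Fin n) => ‖x‖) (‖x‖⁻¹ • innerSL ℝ x) x := by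
      have h := (hasStrictFDerivAt_norm_sq x).hasFDerivAt.sqrt (by positivity)
      simp only [Real.sqrt_sq (norm_nonneg _)] at h
      refine h.congr_fderiv ?_
      ext y; simp; field_simp
    have h1 := (hasDerivAt_rmean m hq hn).comp_hasFDerivAt x hnorm
    have h2 := h1.smul (hasFDerivAt_id x)
    refine h2.congr_fderiv ?_
    ext y i
    simp [rlift']
    field_simp

lemma continuous_rlift' (m : ℕ) {q : ℝ → ℝ} (hq : Continuous q) :
    Continuous (rlift' (n := n) m q) := by
  have hc : Continuous fun x : EuclideanSpace ℝ (Fin n) => rmean m q ‖x‖ := (continuous_rmean m hq).comp continuous_norm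
  have hg : Continuous fun x : EuclideanSpace ℝ (Fin n) => q ‖x‖ - (m + 1) * rmean m q ‖x‖ := by fun_prop
  have hB : Continuous fun x : EuclideanSpace ℝ (Fin n) => (innerSL ℝ x).smulRight x := by
    have : Continuous fun p : (EuclideanSpace ℝ (Fin n)) × (EuclideanSpace ℝ (Fin n)) => (innerSL ℝ p.1).smulRight p.2 := by
      have := (ContinuousLinearMap.smulRightL ℝ (EuclideanSpace ℝ (Fin n)) (EuclideanSpace ℝ (Fin n))).continuous₂
      exact this.comp (((innerSL ℝ).continuous.comp continuous_fst).prodMk continuous_snd)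
    exact this.comp (continuous_id.prodMk continuous_id)
  refine (hc.smul continuous_const).add ?_
  rw [continuous_iff_continuousAt]
  intro x
  by_cases hx : x = 0
  · subst hx
    have h0 : Tendsto (fun x : EuclideanSpace ℝ (Fin n) => |q ‖x‖ - (m + 1) * rmean m q ‖x‖|) (𝓝 0) (𝓝 0) := by
      have := (hg.abs).tendsto 0
      simpa [rmean_zero] using this
    have : Tendsto (fun x : EuclideanSpace ℝ (Fin n) => ((q ‖x‖ - (m + 1) * rmean m q ‖x‖) / ‖x‖ ^ 2) •
        (innerSL ℝ x).smulRight x) (𝓝 0) (𝓝 0) := by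
      refine squeeze_zero_norm (fun x => ?_) h0
      rw [norm_smul, ContinuousLinearMap.norm_smulRight_apply, innerSL_apply_norm, norm_div,
        Real.norm_eq_abs]
      by_cases hx : ‖x‖ = 0
      · simp [hx]
      · have : ‖(‖x‖ ^ 2 : ℝ)‖ = ‖x‖ ^ 2 := by simp
        rw [this]; apply le_of_eq; field_simp
    simpa [ContinuousAt] using this
  · have hn : ‖x‖ ^ 2 ≠ 0 := pow_ne_zero _ (norm_ne_zero_iff.2 hx)
    exact (hg.continuousAt.div (by fun_prop) hn).smul hB.continuousAt

lemma contDiff_rlift (m : ℕ) (c : ℝ) {q : ℝ → ℝ} (hq : Continuous q) :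
    ContDiff ℝ 2 (rlift (n := n) m c q) := by
  have h2 : (2 : WithTop ℕ∞) = ((1 : ℕ) : WithTop ℕ∞) + 1 := by norm_num
  have hX : ContDiff ℝ 1 (fun x : EuclideanSpace ℝ (Fin n) => rmean m q ‖x‖ • x) :=
    contDiff_one_iff_hasFDerivAt.2 ⟨_, continuous_rlift' m hq, hasFDerivAt_rfield m hq⟩
  rw [h2, contDiff_succ_iff_hasFDerivAt]
  exact ⟨_, (innerSL ℝ).contDiff.comp hX, fun x => hasFDerivAt_rlift m c hq x⟩

lemma lap_rlift {m : ℕ} (hn : n = m + 1) (c : ℝ) {q : ℝ → ℝ} (hq : Continuous q) (x : EuclideanSpace ℝ (Fin n)) :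
    lap (rlift m c q) x = q ‖x‖ := by
  rw [lap_eq_sum (contDiff_rlift m c hq).contDiffAt (EuclideanSpace.basisFun (Fin n) ℝ)]
  have h1 : fderiv ℝ (rlift (n := n) m c q) = fun x => innerSL ℝ (rmean m q ‖x‖ • x) := by
    ext1 x; exact (hasFDerivAt_rlift m c hq x).fderiv
  have h2 : ∀ v, fderiv ℝ (fderiv ℝ (rlift (n := n) m c q)) x v = innerSL ℝ (rlift' m q x v) := by
    intro v
    rw [h1]
    have := HasFDerivAt.comp (g := fun y : EuclideanSpace ℝ (Fin n) => innerSL ℝ y) x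
      (innerSL ℝ : EuclideanSpace ℝ (Fin n) →L[ℝ] _).hasFDerivAt (hasFDerivAt_rfield m hq x)
    exact congrArg (fun L => L v) this.fderiv
  simp only [h2]
  have hsum : ∑ i, (x i) ^ 2 = ‖x‖ ^ 2 := by rw [EuclideanSpace.norm_sq_eq]; simp
  have h3 : ∀ i : Fin n, innerSL ℝ (rlift' m q x (EuclideanSpace.basisFun (Fin n) ℝ i))
      (EuclideanSpace.basisFun (Fin n) ℝ i)
      = rmean m q ‖x‖ + (q ‖x‖ - (m + 1) * rmean m q ‖x‖) / ‖x‖ ^ 2 * (x i) ^ 2 := by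
    intro i
    simp [rlift', EuclideanSpace.inner_single_right]
    exact Or.inl (sq _).symm
  simp only [h3, Finset.sum_add_distrib, ← Finset.mul_sum, hsum]
  simp [hn]
  by_cases hx : x = 0
  · subst hx; simp [rmean_zero]
  · have : ‖x‖ ≠ 0 := norm_ne_zero_iff.2 hx
    field_simp; ring

lemma normalDeriv_rlift (m : ℕ) (c : ℝ) {q : ℝ → ℝ} (hq : Continuous q) {R : ℝ} (hR : 0 < R)
    {x : EuclideanSpace ℝ (Fin n)} (hx : ‖x‖ = R) : normalDeriv R (rlift m c q) x = R * rmean m q R := by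
  have h := hasFDerivAt_rlift m c hq x
  have h1 : HasDerivAt (fun s : ℝ => x + s • (R⁻¹ • x)) (R⁻¹ • x) 0 := by
    simpa using ((hasDerivAt_id (0 : ℝ)).smul_const (R⁻¹ • x)).const_add x
  have h2 : HasFDerivAt (rlift (n := n) m c q) (innerSL ℝ (rmean m q ‖x‖ • x))
    (x + (0 : ℝ) • (R⁻¹ • x)) := by simpa using h
  have h3 := h2.comp_hasDerivAt 0 h1
  simp only [Function.comp_def] at h3
  rw [normalDeriv, h3.deriv]
  simp [hx]
  field_simp

/-- Inside the ball the lift is the operator `Kop` evaluated at the rescaled radius. -/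
lemma rlift_eq_Kop (m : ℕ) (c : ℝ) (q : CE) {R : ℝ} (hR : 0 < R) {x : EuclideanSpace ℝ (Fin n)} (hx : ‖x‖ / R ∈ Icc (0 : ℝ) 1) :
    rlift m c (fun ρ => cext q (ρ / R)) x = c + Kop m R q ⟨‖x‖ / R, hx⟩ := by
  have hq : Continuous fun ρ => cext q (ρ / R) := (continuous_cext q).comp (continuous_id.div_const R)
  rw [rlift_eq m c hq, Kop_apply]
  have h := intervalIntegral.smul_integral_comp_mul_right (a := 0) (b := ‖x‖ / R)
    (fun s : ℝ => s * rmean m (fun ρ => cext q (ρ / R)) s) R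
  rw [zero_mul, div_mul_cancel₀ _ hR.ne'] at h
  rw [← h, smul_eq_mul, ← intervalIntegral.integral_const_mul, ← intervalIntegral.integral_const_mul]
  congr 1
  apply intervalIntegral.integral_congr
  intro s hs
  rw [uIcc_of_le hx.1] at hs
  have hs1 : s ∈ Icc (0 : ℝ) 1 := ⟨hs.1, hs.2.trans hx.2⟩
  simp only
  rw [cext_of_mem _ hs1, avg_apply, rmean]
  simp only [smul_eq_mul]
  have : ∀ σ : ℝ, σ * (s * R) / R = σ * s := fun σ => by field_simp
  simp only [this]
  ring

lemma rmean_flux (m : ℕ) (q : CE) {R : ℝ} (hR : 0 < R) :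
    R * rmean m (fun ρ => cext q (ρ / R)) R = flux m R q := by
  rw [flux_apply, avg_apply, rmean]
  have : ∀ σ : ℝ, σ * R / R = σ := fun σ => by field_simp
  simp [this]

end lift

/-! ### Local existence on the ball -/

/-- The time `t` divided by `τ` and clamped to `[0,1]`. -/
noncomputable def ptime (τ t : ℝ) : unitInterval := projIcc 0 1 zero_le_one (t / τ)

lemma continuous_ptime (τ : ℝ) : Continuous (ptime τ) :=
  continuous_projIcc.comp (continuous_id.div_const τ)

lemma ptime_coe {τ t : ℝ} (hτ : 0 < τ) (ht : t ∈ Icc 0 τ) : (ptime τ t : ℝ) = t / τ := by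
  have : t / τ ∈ Icc (0 : ℝ) 1 := ⟨div_nonneg ht.1 hτ.le, (div_le_one hτ).2 ht.2⟩
  rw [ptime, projIcc_of_mem _ this]

/-- The radial function on `ℝⁿ` whose slice at time `t` has Laplacian profile `p(t)` and centre
value `u(t)(0)`. It is defined on all of `ℝⁿ`, so that the two-sided normal derivative on the
sphere makes sense. -/
noncomputable def flift {n : ℕ} (m : ℕ) (R τ : ℝ) (u p : YE) (x : EuclideanSpace ℝ (Fin n))
    (t : ℝ) : ℝ :=
  rlift m (u (ptime τ t) 0) (fun ρ => cext (p (ptime τ t)) (ρ / R)) x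

section
variable {n m : ℕ} {R τ lam : ℝ} {U0 : CE} {u v w : YE}

lemma div_mem_Icc (hR : 0 < R) {x : EuclideanSpace ℝ (Fin n)} (hx : x ∈ closedBall 0 R) :
    ‖x‖ / R ∈ Icc (0 : ℝ) 1 :=
  ⟨div_nonneg (norm_nonneg _) hR.le, (div_le_one hR).2 (mem_closedBall_zero_iff.1 hx)⟩

lemma flift_eq (hR : 0 < R) (h : Cl m R τ (U0, lam • expY v, bdY (expY v)) u w)
    {x : EuclideanSpace ℝ (Fin n)} (hx : x ∈ closedBall 0 R) (t : ℝ) :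
    flift m R τ u (w - lam • expY v) x t = cext (u (ptime τ t)) (‖x‖ / R) := by
  have hm := div_mem_Icc hR hx
  rw [flift, rlift_eq_Kop m _ _ hR hm, cext_of_mem _ hm]
  have := congrArg (fun q : CE => q ⟨‖x‖ / R, hm⟩) (h.ell (ptime τ t))
  simp only [recenter_apply, ContinuousMap.sub_apply, ContinuousMap.smul_apply,
    ContinuousMap.one_apply, smul_eq_mul, mul_one] at this
  simp only [ContinuousMap.sub_apply, ContinuousMap.smul_apply]
  rw [← this]; ring

lemma contDiff_flift (p : YE) (t : ℝ) :
    ContDiff ℝ 2 (fun x : EuclideanSpace ℝ (Fin n) => flift m R τ u p x t) :=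
  contDiff_rlift m _ ((continuous_cext _).comp (continuous_id.div_const R))

lemma lap_flift (hn : n = m + 1) (x : EuclideanSpace ℝ (Fin n)) (t : ℝ) :
    lap (fun y => flift m R τ u (w - lam • expY v) y t) x =
      cext (w (ptime τ t)) (‖x‖ / R) - lam * Real.exp (cext (v (ptime τ t)) (‖x‖ / R)) :=
  (lap_rlift hn _ ((continuous_cext _).comp (continuous_id.div_const R)) x).trans rfl

lemma normalDeriv_flift (hR : 0 < R) (h : Cl m R τ (U0, lam • expY v, bdY (expY v)) u w)
    {x : EuclideanSpace ℝ (Fin n)} (hx : ‖x‖ = R) (t : ℝ) :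
    normalDeriv R (fun y => flift m R τ u (w - lam • expY v) y t) x =
      Real.exp (cext (v (ptime τ t)) (‖x‖ / R)) := by
  refine (normalDeriv_rlift m _ ((continuous_cext _).comp (continuous_id.div_const R)) hR hx).trans ?_
  refine (rmean_flux m _ hR).trans ?_
  refine (h.bdry (ptime τ t)).trans ?_
  rw [hx, div_self hR.ne', cext_of_mem _ (right_mem_Icc.2 zero_le_one)]
  rfl

lemma hasDerivAt_flift (hR : 0 < R) (hτ : 0 < τ) (h : Cl m R τ (U0, lam • expY v, bdY (expY v)) u w)
    {x : EuclideanSpace ℝ (Fin n)} (hx : x ∈ closedBall 0 R) {t : ℝ} (ht : t ∈ Ioo 0 τ) :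
    HasDerivAt (flift m R τ u (w - lam • expY v) x) (cext (w (ptime τ t)) (‖x‖ / R)) t := by
  have hm := div_mem_Icc hR hx
  have hpt := ptime_coe hτ (Ioo_subset_Icc_self ht)
  have h1 := hasDerivAt_tint τ w ⟨‖x‖ / R, hm⟩ (ptime τ t)
  rw [hpt] at h1
  have h2 := (h1.comp t ((hasDerivAt_id t).div_const τ)).const_add (U0 ⟨‖x‖ / R, hm⟩)
  rw [cext_of_mem _ hm]
  refine (h2.congr_of_eventuallyEq ?_).congr_deriv ?_
  · filter_upwards [isOpen_Ioo.mem_nhds ht] with s hs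
    rw [flift_eq hR h hx, cext_of_mem _ hm, h.evol (ptime τ s), ContinuousMap.add_apply, tint_apply,
      ptime_coe hτ (Ioo_subset_Icc_self hs)]
    rfl
  · field_simp

lemma continuousOn_flift (hR : 0 < R) (h : Cl m R τ (U0, lam • expY v, bdY (expY v)) u w)
    (s : Set ℝ) :
    ContinuousOn (fun p : EuclideanSpace ℝ (Fin n) × ℝ => flift m R τ u (w - lam • expY v) p.1 p.2)
      (closedBall 0 R ×ˢ s) := by
  have hc : Continuous fun p : EuclideanSpace ℝ (Fin n) × ℝ =>
      (u (ptime τ p.2)) (projIcc 0 1 zero_le_one (‖p.1‖ / R)) := by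
    have h1 : Continuous fun p : EuclideanSpace ℝ (Fin n) × ℝ => u (ptime τ p.2) :=
      u.continuous.comp ((continuous_ptime τ).comp continuous_snd)
    have h2 : Continuous fun p : EuclideanSpace ℝ (Fin n) × ℝ =>
      projIcc (0 : ℝ) 1 zero_le_one (‖p.1‖ / R) := continuous_projIcc.comp (by fun_prop)
    exact continuous_eval.comp (h1.prodMk h2)
  refine hc.continuousOn.congr ?_
  rintro ⟨x, t⟩ ⟨hx, -⟩
  exact flift_eq hR h hx t

lemma flift_zero (hR : 0 < R) (h : Cl m R τ (U0, lam • expY v, bdY (expY v)) u w)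
    {x : EuclideanSpace ℝ (Fin n)} (hx : x ∈ closedBall 0 R) :
    flift m R τ u (w - lam • expY v) x 0 = cext U0 (‖x‖ / R) := by
  have h0 : ptime τ 0 = 0 := by simp [ptime]
  have hm := div_mem_Icc hR hx
  rw [flift_eq hR h hx, h0, h.evol 0, tint_apply]
  simp

end

/-- Local existence on the ball, on a time interval depending only on the bound `M` of the data. -/
lemma local_nd {n m : ℕ} (hn : n = m + 1) {R lam1 lam2 : ℝ} (hR : 0 < R) (hl1 : 0 < lam1)
    (hl2 : 0 < lam2) (M : ℝ) :
    ∃ τ : ℝ, 0 < τ ∧ ∀ U0 V0 q0 p0 : CE, ‖U0‖ ≤ M → ‖V0‖ ≤ M →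
      recenter U0 = Kop m R q0 → flux m R q0 = Real.exp (V0 1) →
      recenter V0 = Kop m R p0 → flux m R p0 = Real.exp (U0 1) →
      ∃ u v : EuclideanSpace ℝ (Fin n) → ℝ → ℝ,
        IsClassicalSolution n R τ lam1 lam2 u v
          (fun x => cext U0 (‖x‖ / R)) (fun x => cext V0 (‖x‖ / R)) := by
  obtain ⟨τ, hτ, H⟩ := local_1d m hR hl1 hl2 M
  refine ⟨τ, hτ, fun U0 V0 q0 p0 hU hV h1 h2 h3 h4 => ?_⟩
  obtain ⟨u, v, w, z, hu, hv⟩ := H U0 V0 q0 p0 hU hV h1 h2 h3 h4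
  refine ⟨flift m R τ u (w - lam1 • expY v), flift m R τ v (z - lam2 • expY u), ?_⟩
  constructor
  · exact continuousOn_flift hR hu _
  · exact continuousOn_flift hR hv _
  · exact fun t _ => (contDiff_flift _ t).contDiffOn
  · exact fun t _ => (contDiff_flift _ t).contDiffOn
  · exact fun x hx t ht => (hasDerivAt_flift hR hτ hu hx ht).differentiableAt
  · exact fun x hx t ht => (hasDerivAt_flift hR hτ hv hx ht).differentiableAt
  · intro x hx t ht
    have hx := ball_subset_closedBall hx
    rw [(hasDerivAt_flift hR hτ hu hx ht).deriv, lap_flift hn, flift_eq hR hv hx]; ring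
  · intro x hx t ht
    have hx := ball_subset_closedBall hx
    rw [(hasDerivAt_flift hR hτ hv hx ht).deriv, lap_flift hn, flift_eq hR hu hx]; ring
  · intro x hx t ht
    rw [normalDeriv_flift hR hu hx, flift_eq hR hv (mem_closedBall_zero_iff.2 hx.le)]
  · intro x hx t ht
    rw [normalDeriv_flift hR hv hx, flift_eq hR hu (mem_closedBall_zero_iff.2 hx.le)]
  · exact fun x hx => flift_zero hR hu hx
  · exact fun x hx => flift_zero hR hv hx

/-! ### Radial `C²` functions as one-dimensional data -/

/-- `U'' + (m/r) U'` has `s^m`-mean `U'/r`; checked on monomials and extended by density. -/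
lemma avg_avg (m : ℕ) (g : CE) : avg m (g + (m : ℝ) • avg 0 g) = avg 0 g := by
  let L : CE →L[ℝ] CE :=
    (avg m).comp (ContinuousLinearMap.id ℝ CE + (m : ℝ) • avg 0) - avg 0
  have hg : g ∈ L.ker := by
    refine poly_dense L.ker L.isClosed_ker (fun j b => ?_) g
    have hj : (⟨fun t => (t : ℝ) ^ j • b, by fun_prop⟩ : CE) = b • powCM j := by
      ext t; simp [powCM_apply, mul_comm]
    rw [hj]
    apply Submodule.smul_mem
    rw [LinearMap.mem_ker]
    have : L (powCM j) = avg m (powCM j + (m : ℝ) • avg 0 (powCM j)) - avg 0 (powCM j) := rfl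
    change L (powCM j) = 0
    rw [this, map_add, map_smul, avg_powCM 0 j, map_smul, avg_powCM]
    ext r
    have h1 : (m : ℝ) + 1 + j ≠ 0 := by positivity
    have h2 : (1 : ℝ) + j ≠ 0 := by positivity
    simp
    field_simp
    ring
  exact sub_eq_zero.1 (LinearMap.mem_ker.1 hg)

/-- An even `C²` profile `F` on `[-1,1]` with `F'(1) = R b` is, up to a constant, the potential of a
continuous density with boundary flux `b`. -/
lemma profile_data (m : ℕ) {R : ℝ} (hR : 0 < R) {F : ℝ → ℝ}
    (hF : ContDiffOn ℝ 2 F (Icc (-1) 1)) (heven : ∀ r ∈ Icc (-1 : ℝ) 1, F (-r) = F r) {b : ℝ}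
    (hb : HasDerivAt F (R * b) 1) {U0 : CE} (hU : ∀ r : unitInterval, U0 r = F r) :
    ∃ q0 : CE, recenter U0 = Kop m R q0 ∧ flux m R q0 = b := by
  set s : Set ℝ := Icc (-1) 1
  have hs : UniqueDiffOn ℝ s := uniqueDiffOn_Icc (by norm_num)
  have h21 : (2 : WithTop ℕ∞) = 1 + 1 := by norm_num
  have hF1 : ContDiffOn ℝ 1 (derivWithin F s) s := hF.derivWithin hs (by rw [h21])
  have hF1c : ContinuousOn (derivWithin F s) s := hF1.continuousOn
  have hF2c : ContinuousOn (derivWithin (derivWithin F s) s) s :=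
    hF1.continuousOn_derivWithin hs le_rfl
  have hsub : Icc (0 : ℝ) 1 ⊆ s := Icc_subset_Icc (by norm_num) le_rfl
  have hd1 : ∀ r ∈ Ioo (-1 : ℝ) 1, HasDerivAt F (derivWithin F s r) r := fun r hr =>
    ((hF.differentiableOn (by norm_num) r (Ioo_subset_Icc_self hr)).hasDerivWithinAt).hasDerivAt
      (Icc_mem_nhds hr.1 hr.2)
  have hd2 : ∀ r ∈ Ioo (-1 : ℝ) 1,
      HasDerivAt (derivWithin F s) (derivWithin (derivWithin F s) s r) r := fun r hr =>
    ((hF1.differentiableOn (by norm_num) r (Ioo_subset_Icc_self hr)).hasDerivWithinAt).hasDerivAt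
      (Icc_mem_nhds hr.1 hr.2)
  have h0 : derivWithin F s 0 = 0 := by
    have h1 := hd1 0 (by norm_num)
    have h2 : HasDerivAt (fun r => F (-r)) (-(derivWithin F s 0)) 0 := by
      have h1' : HasDerivAt F (derivWithin F s 0) (-0) := by simpa using h1
      simpa [Function.comp_def] using h1'.scomp 0 (hasDerivAt_neg 0)
    have h3 : (fun r => F (-r)) =ᶠ[𝓝 0] F := by
      filter_upwards [Icc_mem_nhds (show (-1 : ℝ) < 0 by norm_num) (show (0 : ℝ) < 1 by norm_num)]
        with r hr using heven r hr
    have := h1.unique (h2.congr_of_eventuallyEq h3.symm)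
    linarith
  have h1 : derivWithin F s 1 = R * b := hb.hasDerivWithinAt.derivWithin (hs 1 (by simp [s]))
  let g : CE := ⟨fun r => derivWithin (derivWithin F s) s r,
    hF2c.comp_continuous continuous_subtype_val fun r => hsub r.2⟩
  -- `avg 0 g` is the continuous version of `F'(r) / r`
  have ha : ∀ r : unitInterval, (r : ℝ) * avg 0 g r = derivWithin F s r := by
    intro r
    have h := avg_eq_integral 0 g r
    simp only [zero_add, pow_one, pow_zero, smul_eq_mul, one_mul] at h
    rw [h, intervalIntegral.integral_eq_sub_of_hasDerivAt_of_le r.2.1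
      (hF1c.mono ((Icc_subset_Icc le_rfl r.2.2).trans hsub)) ?_
      ((continuous_cext g).intervalIntegrable _ _), h0, sub_zero]
    intro x hx
    have hx' : x ∈ Icc (0 : ℝ) 1 := ⟨hx.1.le, hx.2.le.trans r.2.2⟩
    rw [cext_of_mem _ hx']
    exact hd2 x ⟨by linarith [hx.1], hx.2.trans_le r.2.2⟩
  have hq : avg m ((R ^ 2)⁻¹ • (g + (m : ℝ) • avg 0 g)) = (R ^ 2)⁻¹ • avg 0 g := by
    rw [map_smul, avg_avg]
  refine ⟨(R ^ 2)⁻¹ • (g + (m : ℝ) • avg 0 g), ?_, ?_⟩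
  · ext r
    rw [Kop_apply, hq, recenter_apply, ← intervalIntegral.integral_const_mul]
    have : ∫ x in (0 : ℝ)..r, R ^ 2 * (x * cext ((R ^ 2)⁻¹ • avg 0 g) x)
        = ∫ x in (0 : ℝ)..r, derivWithin F s x := by
      apply intervalIntegral.integral_congr
      intro x hx
      rw [uIcc_of_le r.2.1] at hx
      have hx' : x ∈ Icc (0 : ℝ) 1 := ⟨hx.1, hx.2.trans r.2.2⟩
      simp only
      rw [cext_of_mem _ hx', ← ha ⟨x, hx'⟩]
      simp
      field_simp
    rw [this, intervalIntegral.integral_eq_sub_of_hasDerivAt_of_le r.2.1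
      (hF.continuousOn.mono ((Icc_subset_Icc le_rfl r.2.2).trans hsub))
      (fun x hx => hd1 x ⟨by linarith [hx.1], hx.2.trans_le r.2.2⟩)]
    · simp [hU]
    · apply ContinuousOn.intervalIntegrable
      rw [uIcc_of_le r.2.1]
      exact hF1c.mono ((Icc_subset_Icc le_rfl r.2.2).trans hsub)
  · rw [flux_apply, hq]
    have := ha 1
    simp only [Set.Icc.coe_one, one_mul, h1] at this
    simp [this]
    field_simp

/-- A radial function of class `C²` on the closed ball with normal derivative `b` has a profile `U0`
which is, up to a constant, the potential of a density `q0` with flux `b`. -/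
lemma radial_data {n : ℕ} (m : ℕ) (hn : n = m + 1) {R : ℝ} (hR : 0 < R)
    {f : EuclideanSpace ℝ (Fin n) → ℝ} (hf : ContDiffOn ℝ 2 f (closedBall 0 R))
    (hrad : ∀ x ∈ closedBall (0 : EuclideanSpace ℝ (Fin n)) R, ∀ y, ‖x‖ = ‖y‖ → f x = f y) {b : ℝ}
    (hb : ∀ x : EuclideanSpace ℝ (Fin n), ‖x‖ = R →
      HasDerivAt (fun s : ℝ => f (x + s • (R⁻¹ • x))) b 0) :
    ∃ U0 q0 : CE, (∀ x ∈ closedBall (0 : EuclideanSpace ℝ (Fin n)) R, f x = cext U0 (‖x‖ / R)) ∧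
      recenter U0 = Kop m R q0 ∧ flux m R q0 = b := by
  subst hn
  set e : EuclideanSpace ℝ (Fin (m + 1)) := EuclideanSpace.single 0 1 with he_def
  have he : ‖e‖ = 1 := by simp [e]
  have hmem : ∀ r ∈ Icc (-1 : ℝ) 1, (r * R) • e ∈ closedBall (0 : EuclideanSpace ℝ (Fin (m+1))) R := by
    intro r hr
    rw [mem_closedBall_zero_iff, norm_smul, he, mul_one, Real.norm_eq_abs, abs_mul, abs_of_pos hR]
    exact mul_le_of_le_one_left hR.le (abs_le.2 hr)
  have hF : ContDiffOn ℝ 2 (fun r : ℝ => f ((r * R) • e)) (Icc (-1) 1) :=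
    hf.comp (ContDiff.contDiffOn (by fun_prop)) hmem
  have hsub : Icc (0 : ℝ) 1 ⊆ Icc (-1) 1 := Icc_subset_Icc (by norm_num) le_rfl
  let U0 : CE := ⟨fun r => f (((r : ℝ) * R) • e),
    hF.continuousOn.comp_continuous continuous_subtype_val fun r => hsub r.2⟩
  have hb1 : HasDerivAt (fun r : ℝ => f ((r * R) • e)) (R * b) 1 := by
    have h := hb (R • e) (by rw [norm_smul, he, mul_one, Real.norm_eq_abs, abs_of_pos hR])
    have h2 : HasDerivAt (fun r : ℝ => (r - 1) * R) R 1 := by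
      simpa using ((hasDerivAt_id (1 : ℝ)).sub_const 1).mul_const R
    have h3 : HasDerivAt (fun s : ℝ => f (R • e + s • (R⁻¹ • R • e))) b ((1 - 1) * R) := by
      simpa using h
    have h4 := h3.scomp (1 : ℝ) h2
    refine h4.congr_of_eventuallyEq (Eventually.of_forall fun r => ?_)
    simp only [Function.comp_def]
    rw [inv_smul_smul₀ hR.ne', ← add_smul]
    congr 2; ring
  obtain ⟨q0, h1, h2⟩ := profile_data m hR hF
    (fun r hr => by
      refine (hrad _ (hmem r hr) _ ?_).symm
      simp [norm_smul]) hb1 (U0 := U0) (fun r => rfl)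
  refine ⟨U0, q0, fun x hx => ?_, h1, h2⟩
  rw [cext_of_mem _ (div_mem_Icc hR hx)]
  refine hrad x hx _ ?_
  simp [norm_smul, he, hR.ne']

/-! ### Continuation and blow-up -/

/-- Follow `u` up to time `T₁` and the time-shifted `w` afterwards. -/
noncomputable def glue {X : Type*} (T₁ t₀ : ℝ) (u w : X → ℝ → ℝ) (x : X) (t : ℝ) : ℝ :=
  if t < T₁ then u x t else w x (t - t₀)

section
variable {n : ℕ} {T T₁ t₀ τ R : ℝ} {u w : EuclideanSpace ℝ (Fin n) → ℝ → ℝ}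

lemma glue_slice_lt {t : ℝ} (ht : t < T₁) (x : EuclideanSpace ℝ (Fin n)) :
    glue T₁ t₀ u w x t = u x t := if_pos ht

lemma glue_slice_ge {t : ℝ} (ht : T₁ ≤ t) (x : EuclideanSpace ℝ (Fin n)) :
    glue T₁ t₀ u w x t = w x (t - t₀) := if_neg ht.not_gt

lemma glue_left (h01 : t₀ < T₁) {x : EuclideanSpace ℝ (Fin n)}
    (hw : ∀ t ∈ Ico t₀ T, w x (t - t₀) = u x t) {t : ℝ} (ht : t < T) :
    glue T₁ t₀ u w x t = u x t := by
  rcases lt_or_ge t T₁ with h | h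
  · exact glue_slice_lt h x
  · rw [glue_slice_ge h, hw t ⟨h01.le.trans h, ht⟩]

lemma glue_right (h1T : T₁ < T) {x : EuclideanSpace ℝ (Fin n)}
    (hw : ∀ t ∈ Ico t₀ T, w x (t - t₀) = u x t) {t : ℝ} (ht : t₀ ≤ t) :
    glue T₁ t₀ u w x t = w x (t - t₀) := by
  rcases lt_or_ge t T₁ with h | h
  · rw [glue_slice_lt h x, hw t ⟨ht, h.trans h1T⟩]
  · exact glue_slice_ge h x

lemma glue_continuousOn (h01 : t₀ < T₁) (h1T : T₁ < T)
    (hu : ContinuousOn (fun p : EuclideanSpace ℝ (Fin n) × ℝ => u p.1 p.2)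
      (closedBall 0 R ×ˢ Ico 0 T))
    (hwc : ContinuousOn (fun p : EuclideanSpace ℝ (Fin n) × ℝ => w p.1 p.2)
      (closedBall 0 R ×ˢ Ico 0 τ))
    (hw : ∀ x ∈ closedBall (0 : EuclideanSpace ℝ (Fin n)) R, ∀ t ∈ Ico t₀ T, w x (t - t₀) = u x t) :
    ContinuousOn (fun p : EuclideanSpace ℝ (Fin n) × ℝ => glue T₁ t₀ u w p.1 p.2)
      (closedBall 0 R ×ˢ Ico 0 (t₀ + τ)) := by
  rintro ⟨x, t⟩ ⟨hx, ht⟩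
  rcases lt_or_ge t T₁ with h | h
  · have h1 : closedBall 0 R ×ˢ Ico 0 T ∈ 𝓝[closedBall 0 R ×ˢ Ico 0 (t₀ + τ)] (x, t) := by
      filter_upwards [self_mem_nhdsWithin, mem_nhdsWithin_of_mem_nhds
        (continuous_snd.continuousAt.preimage_mem_nhds (Iio_mem_nhds (h.trans h1T)))] with p hp hp2
      exact ⟨hp.1, hp.2.1, hp2⟩
    have h2 := (hu (x, t) ⟨hx, ht.1, h.trans h1T⟩).mono_of_mem_nhdsWithin h1
    refine h2.congr_of_eventuallyEq ?_ (glue_left h01 (hw x hx) (h.trans h1T))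
    filter_upwards [h1] with p hp using glue_left h01 (hw _ hp.1) hp.2.2
  · have h1 : {p : EuclideanSpace ℝ (Fin n) × ℝ | p.1 ∈ closedBall 0 R ∧ p.2 ∈ Ico t₀ (t₀ + τ)} ∈
        𝓝[closedBall 0 R ×ˢ Ico 0 (t₀ + τ)] (x, t) := by
      filter_upwards [self_mem_nhdsWithin, mem_nhdsWithin_of_mem_nhds
        (continuous_snd.continuousAt.preimage_mem_nhds (Ioi_mem_nhds (h01.trans_le h)))] with p hp hp2
      exact ⟨hp.1, le_of_lt hp2, hp.2.2⟩
    have h2 : ContinuousOn (fun p : EuclideanSpace ℝ (Fin n) × ℝ => w p.1 (p.2 - t₀))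
        {p | p.1 ∈ closedBall 0 R ∧ p.2 ∈ Ico t₀ (t₀ + τ)} :=
      hwc.comp (f := fun p : EuclideanSpace ℝ (Fin n) × ℝ => (p.1, p.2 - t₀)) (by fun_prop)
        fun p hp => ⟨hp.1, by linarith [hp.2.1], by linarith [hp.2.2]⟩
    have h3 := (h2 (x, t) ⟨hx, h01.le.trans h, ht.2⟩).mono_of_mem_nhdsWithin h1
    refine h3.congr_of_eventuallyEq ?_ (glue_right h1T (hw x hx) (h01.le.trans h))
    filter_upwards [h1] with p hp using glue_right h1T (hw _ hp.1) hp.2.1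

lemma glue_eventually_left {t : ℝ} (h : t < T₁) (x : EuclideanSpace ℝ (Fin n)) :
    glue T₁ t₀ u w x =ᶠ[𝓝 t] u x := by
  filter_upwards [Iio_mem_nhds h] with s hs using glue_slice_lt hs x

lemma glue_eventually_right (h01 : t₀ < T₁) (h1T : T₁ < T) {x : EuclideanSpace ℝ (Fin n)}
    (hw : ∀ t ∈ Ico t₀ T, w x (t - t₀) = u x t) {t : ℝ} (h : T₁ ≤ t) :
    glue T₁ t₀ u w x =ᶠ[𝓝 t] fun s => w x (s - t₀) := by
  filter_upwards [Ioi_mem_nhds (h01.trans_le h)] with s hs using glue_right h1T hw (le_of_lt hs)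
end

/-- A solution starting from the slice at time `t₀` extends the given one: by uniqueness both agree
on the overlap. The switch takes place at a time strictly inside the overlap, so that near every
time the glued function coincides with a single solution. -/
lemma IsClassicalSolution.extend {n : ℕ} {R T lam1 lam2 : ℝ} (hR : 0 < R) (hl1 : 0 < lam1)
    (hl2 : 0 < lam2) {u v w z : EuclideanSpace ℝ (Fin n) → ℝ → ℝ}
    {u₀ v₀ w₀ z₀ : EuclideanSpace ℝ (Fin n) → ℝ} {t₀ τ : ℝ} (ht₀ : t₀ ∈ Ioo 0 T) (hτ : T < t₀ + τ)
    (h : IsClassicalSolution n R T lam1 lam2 u v u₀ v₀)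
    (h' : IsClassicalSolution n R τ lam1 lam2 w z w₀ z₀)
    (hw₀ : ∀ x ∈ closedBall (0 : EuclideanSpace ℝ (Fin n)) R, u x t₀ = w₀ x)
    (hz₀ : ∀ x ∈ closedBall (0 : EuclideanSpace ℝ (Fin n)) R, v x t₀ = z₀ x) :
    ∃ u' v', IsClassicalSolution n R (t₀ + τ) lam1 lam2 u' v' u₀ v₀ := by
  obtain ⟨T₁, h01, h1T⟩ := exists_between ht₀.2
  have hs := h.shift (Ioo_subset_Ico_self ht₀)
  have h'' : IsClassicalSolution n R τ lam1 lam2 w z (fun x => u x t₀) (fun x => v x t₀) :=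
    { h' with
      init_u := fun x hx => (h'.init_u x hx).trans (hw₀ x hx).symm
      init_v := fun x hx => (h'.init_v x hx).trans (hz₀ x hx).symm }
  have hag : ∀ x ∈ closedBall (0 : EuclideanSpace ℝ (Fin n)) R, ∀ t ∈ Ico t₀ T,
      w x (t - t₀) = u x t ∧ z x (t - t₀) = v x t := by
    intro x hx t ht
    have := uniqueness hR hl1 hl2 h'' hs hx (t := t - t₀) (by linarith [ht.1]) (by linarith [ht.2])
      (by linarith [ht.2])
    simpa using this
  have hw := fun x hx t ht => (hag x hx t ht).1
  have hz := fun x hx t ht => (hag x hx t ht).2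
  have hL : ∀ {t}, t ∈ Ioo 0 (t₀ + τ) → t < T₁ → t ∈ Ioo 0 T := fun ht h => ⟨ht.1, h.trans h1T⟩
  have hG : ∀ {t}, t ∈ Ioo 0 (t₀ + τ) → T₁ ≤ t → t - t₀ ∈ Ioo 0 τ := fun ht h =>
    ⟨by linarith, by linarith [ht.2]⟩
  have h0 : (0 : ℝ) < T₁ := ht₀.1.trans h01
  refine ⟨glue T₁ t₀ u w, glue T₁ t₀ v z, ?_⟩
  constructor
  · exact glue_continuousOn h01 h1T h.cont_u h'.cont_u hw
  · exact glue_continuousOn h01 h1T h.cont_v h'.cont_v hz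
  · intro t ht
    rcases lt_or_ge t T₁ with hc | hc
    · simp only [glue_slice_lt hc]; exact h.reg_space_u t (hL ht hc)
    · simp only [glue_slice_ge hc]; exact h'.reg_space_u _ (hG ht hc)
  · intro t ht
    rcases lt_or_ge t T₁ with hc | hc
    · simp only [glue_slice_lt hc]; exact h.reg_space_v t (hL ht hc)
    · simp only [glue_slice_ge hc]; exact h'.reg_space_v _ (hG ht hc)
  · intro x hx t ht
    rcases lt_or_ge t T₁ with hc | hc
    · exact (h.reg_time_u x hx t (hL ht hc)).congr_of_eventuallyEq (glue_eventually_left hc x)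
    · exact (differentiableAt_comp_sub_const.2
        (h'.reg_time_u x hx _ (hG ht hc))).congr_of_eventuallyEq
        (glue_eventually_right h01 h1T (hw x hx) hc)
  · intro x hx t ht
    rcases lt_or_ge t T₁ with hc | hc
    · exact (h.reg_time_v x hx t (hL ht hc)).congr_of_eventuallyEq (glue_eventually_left hc x)
    · exact (differentiableAt_comp_sub_const.2
        (h'.reg_time_v x hx _ (hG ht hc))).congr_of_eventuallyEq
        (glue_eventually_right h01 h1T (hz x hx) hc)
  · intro x hx t ht
    rcases lt_or_ge t T₁ with hc | hc
    · simp only [(glue_eventually_left hc x).deriv_eq, glue_slice_lt hc]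
      exact h.pde_u x hx t (hL ht hc)
    · have := (glue_eventually_right h01 h1T (hw x (ball_subset_closedBall hx)) hc).deriv_eq
      simp only [this, glue_slice_ge hc, deriv_comp_sub_const]
      exact h'.pde_u x hx _ (hG ht hc)
  · intro x hx t ht
    rcases lt_or_ge t T₁ with hc | hc
    · simp only [(glue_eventually_left hc x).deriv_eq, glue_slice_lt hc]
      exact h.pde_v x hx t (hL ht hc)
    · have := (glue_eventually_right h01 h1T (hz x (ball_subset_closedBall hx)) hc).deriv_eq
      simp only [this, glue_slice_ge hc, deriv_comp_sub_const]
      exact h'.pde_v x hx _ (hG ht hc)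
  · intro x hx t ht
    rcases lt_or_ge t T₁ with hc | hc
    · simp only [glue_slice_lt hc]; exact h.bc_u x hx t (hL ht hc)
    · simp only [glue_slice_ge hc]; exact h'.bc_u x hx _ (hG ht hc)
  · intro x hx t ht
    rcases lt_or_ge t T₁ with hc | hc
    · simp only [glue_slice_lt hc]; exact h.bc_v x hx t (hL ht hc)
    · simp only [glue_slice_ge hc]; exact h'.bc_v x hx _ (hG ht hc)
  · intro x hx; rw [glue_slice_lt h0]; exact h.init_u x hx
  · intro x hx; rw [glue_slice_lt h0]; exact h.init_v x hx

/-- Solutions bounded by `M` at a time `t₀` can be continued by an amount depending only on `M`. -/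
lemma continuation {n : ℕ} (hn : 1 ≤ n) {R lam1 lam2 : ℝ} (hR : 0 < R) (hl1 : 0 < lam1)
    (hl2 : 0 < lam2) {u₀ v₀ : EuclideanSpace ℝ (Fin n) → ℝ} (hd : AdmissibleData n R u₀ v₀)
    {T : ℝ} {u v : EuclideanSpace ℝ (Fin n) → ℝ → ℝ}
    (h : IsClassicalSolution n R T lam1 lam2 u v u₀ v₀) {M : ℝ} (hM : 0 ≤ M) :
    ∃ τ : ℝ, 0 < τ ∧ ∀ t₀ ∈ Ioo 0 T, T < t₀ + τ →
      (∀ x ∈ closedBall (0 : EuclideanSpace ℝ (Fin n)) R, |u x t₀| ≤ M ∧ |v x t₀| ≤ M) →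
      ∃ u' v', IsClassicalSolution n R (t₀ + τ) lam1 lam2 u' v' u₀ v₀ := by
  obtain ⟨m, rfl⟩ : ∃ m, n = m + 1 := ⟨n - 1, by omega⟩
  obtain ⟨τ, hτ, H⟩ := local_nd (n := m + 1) rfl hR hl1 hl2 M
  refine ⟨τ, hτ, fun t₀ ht₀ hT hb => ?_⟩
  have ht' := Ioo_subset_Ico_self ht₀
  set e : EuclideanSpace ℝ (Fin (m + 1)) := EuclideanSpace.single 0 1 with he_def
  have he : ‖R • e‖ = R := by simp [e, norm_smul, abs_of_pos hR]
  have heR : R • e ∈ closedBall (0 : EuclideanSpace ℝ (Fin (m + 1))) R :=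
    mem_closedBall_zero_iff.2 he.le
  have hbd : ∀ x : EuclideanSpace ℝ (Fin (m + 1)), ‖x‖ = R →
      u x t₀ = u (R • e) t₀ ∧ v x t₀ = v (R • e) t₀ := fun x hx =>
    radial hR hl1 hl2 h hd (mem_closedBall_zero_iff.2 hx.le) (hx.trans he.symm) ht'
  obtain ⟨U0, q0, hU, h1, h2⟩ := radial_data m rfl hR (h.reg_space_u t₀ ht₀)
    (fun x hx y hxy => (radial hR hl1 hl2 h hd hx hxy ht').1) (b := Real.exp (v (R • e) t₀))
    (fun x hx => by rw [← (hbd x hx).2]; exact h.hasDerivAt_normal hx ht₀)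
  obtain ⟨V0, p0, hV, h3, h4⟩ := radial_data m rfl hR (h.reg_space_v t₀ ht₀)
    (fun x hx y hxy => (radial hR hl1 hl2 h hd hx hxy ht').2) (b := Real.exp (u (R • e) t₀))
    (fun x hx => by rw [← (hbd x hx).1]; exact h.swap.hasDerivAt_normal hx ht₀)
  have hmem : ∀ r : unitInterval, ((r : ℝ) * R) • e ∈ closedBall (0 : EuclideanSpace ℝ (Fin (m + 1))) R
      ∧ ‖((r : ℝ) * R) • e‖ / R = r := by
    intro r
    have : ‖((r : ℝ) * R) • e‖ = r * R := by
      simp [e, norm_smul, abs_of_pos hR, abs_of_nonneg r.2.1]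
    rw [mem_closedBall_zero_iff, this]
    exact ⟨mul_le_of_le_one_left hR.le r.2.2, by field_simp⟩
  have key : ∀ (W : CE) (f : EuclideanSpace ℝ (Fin (m + 1)) → ℝ),
      (∀ x ∈ closedBall (0 : EuclideanSpace ℝ (Fin (m + 1))) R, f x = cext W (‖x‖ / R)) →
      (∀ x ∈ closedBall (0 : EuclideanSpace ℝ (Fin (m + 1))) R, |f x| ≤ M) →
      ‖W‖ ≤ M ∧ W 1 = f (R • e) := by
    intro W f hf hfM
    constructor
    · rw [ContinuousMap.norm_le _ hM]
      intro r
      obtain ⟨hm1, hm2⟩ := hmem r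
      have := hfM _ hm1
      rwa [hf _ hm1, hm2, cext_coe] at this
    · rw [hf _ heR, he, div_self hR.ne', cext_of_mem _ (right_mem_Icc.2 zero_le_one)]; rfl
  obtain ⟨hU1, hU2⟩ := key U0 (fun x => u x t₀) hU fun x hx => (hb x hx).1
  obtain ⟨hV1, hV2⟩ := key V0 (fun x => v x t₀) hV fun x hx => (hb x hx).2
  obtain ⟨w, z, hwz⟩ := H U0 V0 q0 p0 hU1 hV1 h1 (by rw [h2, hV2]) h3 (by rw [h4, hU2])
  exact IsClassicalSolution.extend hR hl1 hl2 ht₀ hT h hwz hU hV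

/-- Finite-time blow-up (Section 2): for every choice of admissible initial data, the
classical solution of problem (1.1) is not global.  First, there is no solution defined
on `[0,T)` for every `T > 0`; second, if `(u,v)` is a classical solution on `[0,T)` whose
existence time `T` is maximal among classical solutions with the same data, then
`sup_{cl(B_R)} (u(·,t) + v(·,t)) → ∞` as `t → T⁻` and every point of `∂B_R` is a
blow-up point. -/
theorem finite_time_blowup {n : ℕ} (hn : 1 ≤ n) {R lam1 lam2 : ℝ}
    (hR : 0 < R) (hlam1 : 0 < lam1) (hlam2 : 0 < lam2)
    {u₀ v₀ : EuclideanSpace ℝ (Fin n) → ℝ} (hdata : AdmissibleData n R u₀ v₀) :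
    (¬ ∃ u v : EuclideanSpace ℝ (Fin n) → ℝ → ℝ, ∀ T : ℝ, 0 < T →
        IsClassicalSolution n R T lam1 lam2 u v u₀ v₀) ∧
    (∀ (T : ℝ) (u v : EuclideanSpace ℝ (Fin n) → ℝ → ℝ), 0 < T →
        IsClassicalSolution n R T lam1 lam2 u v u₀ v₀ →
        (∀ (T' : ℝ) (u' v' : EuclideanSpace ℝ (Fin n) → ℝ → ℝ),
          IsClassicalSolution n R T' lam1 lam2 u' v' u₀ v₀ → T' ≤ T) →
        Tendsto (fun t : ℝ => ⨆ x : closedBall (0 : EuclideanSpace ℝ (Fin n)) R,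
            (u x t + v x t)) (𝓝[<] T) atTop ∧
        ∀ x : EuclideanSpace ℝ (Fin n), ‖x‖ = R → IsBlowUpPoint n R T u v x) := by
  constructor
  · rintro ⟨u, v, H⟩
    have hl : 0 < min lam1 lam2 := lt_min hlam1 hlam2
    have h := time_le hR hlam1 hlam2 (H (2 / min lam1 lam2) (by positivity)) hdata.u0_nonneg
      hdata.v0_nonneg
    rw [mul_div_cancel₀ _ hl.ne'] at h
    norm_num at h
  intro T u v hT h hmax
  have hnn : ∀ x ∈ closedBall (0 : EuclideanSpace ℝ (Fin n)) R, ∀ t ∈ Ico 0 T,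
      0 ≤ u x t ∧ 0 ≤ v x t := fun x hx t ht =>
    solution_nonneg hR hlam1 hlam2 h hdata.u0_nonneg hdata.v0_nonneg hx ht.1 ht.2
  -- by radial monotonicity the supremum is attained at every boundary point
  have hsup : ∀ x : EuclideanSpace ℝ (Fin n), ‖x‖ = R → ∀ t ∈ Ico 0 T,
      ⨆ y : closedBall (0 : EuclideanSpace ℝ (Fin n)) R, (u y t + v y t) = u x t + v x t := by
    intro x hx t ht
    have hle : ∀ y : closedBall (0 : EuclideanSpace ℝ (Fin n)) R,
        u y t + v y t ≤ u x t + v x t := fun y => by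
      have := radial_mono hR hlam1 hlam2 h hdata (x₁ := y) (y₁ := x)
        ((mem_closedBall_zero_iff.1 y.2).trans hx.ge) hx.le ht
      linarith [this.1, this.2]
    have : Nonempty (closedBall (0 : EuclideanSpace ℝ (Fin n)) R) :=
      ⟨⟨x, mem_closedBall_zero_iff.2 hx.le⟩⟩
    exact le_antisymm (ciSup_le hle)
      (le_ciSup (f := fun y : closedBall (0 : EuclideanSpace ℝ (Fin n)) R => u y t + v y t)
        ⟨_, forall_mem_range.2 hle⟩ ⟨x, mem_closedBall_zero_iff.2 hx.le⟩)
  have hIoo : ∀ᶠ t in 𝓝[<] T, t ∈ Ioo 0 T := Ioo_mem_nhdsLT hT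
  have hbdry : ∀ x : EuclideanSpace ℝ (Fin n), ‖x‖ = R →
      Tendsto (fun t => u x t + v x t) (𝓝[<] T) atTop := by
    intro x hx
    rw [Filter.tendsto_atTop]
    intro M
    by_contra hcon
    have hfr : ∃ᶠ t in 𝓝[<] T, u x t + v x t < M := by
      simpa [Filter.not_eventually] using hcon
    obtain ⟨τ, hτ, H⟩ := continuation hn hR hlam1 hlam2 hdata h (abs_nonneg M)
    have hnear : ∀ᶠ t in 𝓝[<] T, T - τ < t :=
      mem_nhdsWithin_of_mem_nhds (Ioi_mem_nhds (by linarith))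
    obtain ⟨t₀, ht1, ht0, ht2⟩ := (hfr.and_eventually (hIoo.and hnear)).exists
    have hIco := Ioo_subset_Ico_self ht0
    obtain ⟨u', v', h'⟩ := H t₀ ht0 (by linarith) (by
      intro y hy
      have h1 := hnn y hy t₀ hIco
      have h2 := radial_mono hR hlam1 hlam2 h hdata (x₁ := y) (y₁ := x)
        ((mem_closedBall_zero_iff.1 hy).trans hx.ge) hx.le hIco
      have h3 := hnn x (mem_closedBall_zero_iff.2 hx.le) t₀ hIco
      have h4 := le_abs_self M
      rw [abs_of_nonneg h1.1, abs_of_nonneg h1.2]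
      constructor <;> linarith [h2.1, h2.2, h3.1, h3.2])
    linarith [hmax _ _ _ h']
  refine ⟨?_, fun x hx => ?_⟩
  · obtain ⟨m, rfl⟩ : ∃ m, n = m + 1 := ⟨n - 1, by omega⟩
    have he : ‖R • (EuclideanSpace.single 0 1 : EuclideanSpace ℝ (Fin (m + 1)))‖ = R := by
      simp [norm_smul, abs_of_pos hR]
    refine (hbdry _ he).congr' ?_
    filter_upwards [hIoo] with t ht using (hsup _ he t (Ioo_subset_Ico_self ht)).symm
  · -- `max u v ≥ (u + v) / 2`, so one of the two components is unbounded along a sequence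
    have hmem : x ∈ closedBall (0 : EuclideanSpace ℝ (Fin n)) R := mem_closedBall_zero_iff.2 hx.le
    have hex : ∀ k : ℕ, ∃ t ∈ Ioo 0 T, T - 1 / (k + 1) < t ∧ 2 * (k : ℝ) ≤ u x t + v x t := by
      intro k
      have h1 : ∀ᶠ t in 𝓝[<] T, T - 1 / ((k : ℝ) + 1) < t :=
        mem_nhdsWithin_of_mem_nhds (Ioi_mem_nhds (by
          have : 0 < 1 / ((k : ℝ) + 1) := by positivity
          linarith))
      obtain ⟨t, ht1, ht2, ht3⟩ :=
        (hIoo.and (h1.and ((hbdry x hx).eventually_ge_atTop (2 * (k : ℝ))))).exists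
      exact ⟨t, ht1, ht2, ht3⟩
    choose ts h1 h2 h3 using hex
    have hts : Tendsto ts atTop (𝓝 T) := by
      have hl : Tendsto (fun k : ℕ => T - 1 / ((k : ℝ) + 1)) atTop (𝓝 T) := by
        simpa using tendsto_one_div_add_atTop_nhds_zero_nat.const_sub T
      exact tendsto_of_tendsto_of_tendsto_of_le_of_le hl tendsto_const_nhds (fun k => (h2 k).le)
        fun k => (h1 k).2.le
    have hor : (∃ᶠ k in atTop, v x (ts k) ≤ u x (ts k)) ∨ ∃ᶠ k in atTop, u x (ts k) ≤ v x (ts k) := by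
      rw [← frequently_or_distrib]
      exact Frequently.of_forall fun k => le_total _ _
    rcases hor with hf | hf
    · obtain ⟨φ, hφ, hle⟩ := extraction_of_frequently_atTop hf
      refine ⟨fun _ => x, ts ∘ φ, fun _ => hmem, fun k => h1 _, tendsto_const_nhds,
        hts.comp hφ.tendsto_atTop, Or.inl ?_⟩
      refine tendsto_atTop_mono (fun k => ?_) (tendsto_natCast_atTop_atTop.comp hφ.tendsto_atTop)
      have := hle k
      have := h3 (φ k)
      simp only [Function.comp_apply]
      linarith
    · obtain ⟨φ, hφ, hle⟩ := extraction_of_frequently_atTop hf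
      refine ⟨fun _ => x, ts ∘ φ, fun _ => hmem, fun k => h1 _, tendsto_const_nhds,
        hts.comp hφ.tendsto_atTop, Or.inr ?_⟩
      refine tendsto_atTop_mono (fun k => ?_) (tendsto_natCast_atTop_atTop.comp hφ.tendsto_atTop)
      have := hle k
      have := h3 (φ k)
      simp only [Function.comp_apply]
      linarith
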